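/- In the pure p-spin spherical model with p ≥ 3, the ground-state energy satisfies lim_{N→∞} (1/N) E[ max_{σ ∈ S_N} H_N(σ) ] = E_0. -/

import Mathlib

open MeasureTheory ProbabilityTheory Filter
open scoped ENNReal NNReal

noncomputable section

/-- Euclidean dot product on `ℝ^N`. -/
def dotp {N : ℕ} (σ τ : Fin N → ℝ) : ℝ := ∑ i, σ i * τ i

/-- The sphere `S_N = {σ : ‖σ‖₂² = N}`. -/
def sphereSet (N : ℕ) : Set (Fin N → ℝ) := {σ | ∑ i, (σ i) ^ 2 = (N : ℝ)}

/-- The mixture `ξ(x) = Σ_{k=2}^P c_k² x^k`. -/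
def xiFun (P : ℕ) (c : ℕ → ℝ) (x : ℝ) : ℝ := ∑ k ∈ Finset.Icc 2 P, (c k) ^ 2 * x ^ k

/-- `ξ'`. -/
def xiD1 (P : ℕ) (c : ℕ → ℝ) (x : ℝ) : ℝ :=
  ∑ k ∈ Finset.Icc 2 P, (k : ℝ) * (c k) ^ 2 * x ^ (k - 1)

/-- `ξ''`. -/
def xiD2 (P : ℕ) (c : ℕ → ℝ) (x : ℝ) : ℝ :=
  ∑ k ∈ Finset.Icc 2 P, (k : ℝ) * ((k : ℝ) - 1) * (c k) ^ 2 * x ^ (k - 2)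

/-- The mixed p-spin Hamiltonian built from couplings `g`. -/
def hamiltonian (N P : ℕ) (c : ℕ → ℝ) (g : (k : ℕ) → (Fin k → Fin N) → ℝ)
    (σ : Fin N → ℝ) : ℝ :=
  ∑ k ∈ Finset.Icc 2 P, c k * (N : ℝ) ^ (-(((k : ℝ) - 1) / 2)) *
    ∑ j : Fin k → Fin N, g k j * ∏ i, σ (j i)

/-- Index set for the entries of all the coupling tensors. -/
abbrev GIdx (N P : ℕ) : Type := Σ k : {k : ℕ // k ∈ Finset.Icc 2 P}, (Fin (k : ℕ) → Fin N)

/-- Flatten the couplings into a single Gaussian vector. -/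
def flatten (N P : ℕ) (g : (k : ℕ) → (Fin k → Fin N) → ℝ) : GIdx N P → ℝ :=
  fun i => g i.1 i.2

/-- The couplings `(G^{(k)})_{2 ≤ k ≤ P}` are i.i.d. standard Gaussians. -/
def StdGaussianCouplings {Ω : Type*} [MeasureSpace Ω] (N P : ℕ)
    (G : Ω → (k : ℕ) → (Fin k → Fin N) → ℝ) : Prop :=
  Measure.map (fun ω => flatten N P (G ω)) ℙ = Measure.pi fun _ : GIdx N P => gaussianReal 0 1

/-- The maximum of the Hamiltonian over the sphere. -/
def maxH (N P : ℕ) (c : ℕ → ℝ) (g : (k : ℕ) → (Fin k → Fin N) → ℝ) : ℝ :=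
  ⨆ σ : sphereSet N, hamiltonian N P c g σ.1


/-- Euclidean gradient of the Hamiltonian. -/
def gradH (N P : ℕ) (c : ℕ → ℝ) (g : (k : ℕ) → (Fin k → Fin N) → ℝ)
    (σ : Fin N → ℝ) : Fin N → ℝ :=
  fun i => fderiv ℝ (hamiltonian N P c g) σ (Pi.single i 1)

/-- Euclidean Hessian of the Hamiltonian, as a bilinear form. -/
def hessH (N P : ℕ) (c : ℕ → ℝ) (g : (k : ℕ) → (Fin k → Fin N) → ℝ)
    (σ v w : Fin N → ℝ) : ℝ :=
  fderiv ℝ (fun τ => fderiv ℝ (hamiltonian N P c g) τ w) σ v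

/-- `σ` is a spherical critical point: `∇H(σ) = (⟨∇H(σ),σ⟩/N) σ`. -/
def IsCritPt (N P : ℕ) (c : ℕ → ℝ) (g : (k : ℕ) → (Fin k → Fin N) → ℝ)
    (σ : Fin N → ℝ) : Prop :=
  σ ∈ sphereSet N ∧ gradH N P c g σ = (dotp (gradH N P c g σ) σ / N) • σ

/-- Cardinality of a set, valued in `ℝ≥0∞`. -/
def ecount {α : Type*} (s : Set α) : ℝ≥0∞ := ∑' _ : s, 1

/-- Spherical critical points with energy at least `Nη`. -/
def crtSet (N P : ℕ) (c : ℕ → ℝ) (g : (k : ℕ) → (Fin k → Fin N) → ℝ)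
    (η : ℝ) : Set (Fin N → ℝ) :=
  {σ | IsCritPt N P c g σ ∧ (N : ℝ) * η ≤ hamiltonian N P c g σ}

/-- Index (number of negative eigenvalues) of the spherical Hessian quadratic form at `σ`:
maximal dimension of a subspace of the tangent space on which the form is negative definite. -/
def critIndex (N P : ℕ) (c : ℕ → ℝ) (g : (k : ℕ) → (Fin k → Fin N) → ℝ)
    (σ : Fin N → ℝ) : ℕ :=
  sSup {d : ℕ | ∃ W : Submodule ℝ (Fin N → ℝ), Module.finrank ℝ W = d ∧
    (∀ v ∈ W, dotp v σ = 0) ∧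
    ∀ v ∈ W, v ≠ 0 →
      hessH N P c g σ v v - (dotp (gradH N P c g σ) σ / N) * ∑ i, (v i) ^ 2 < 0}

/-- Critical points of index `N-1-k` in the superlevel set. -/
def crtSetIdx (N P : ℕ) (c : ℕ → ℝ) (g : (k : ℕ) → (Fin k → Fin N) → ℝ)
    (η : ℝ) (k : ℕ) : Set (Fin N → ℝ) :=
  {σ | σ ∈ crtSet N P c g η ∧ critIndex N P c g σ = N - 1 - k}

/-- Coefficients of the pure p-spin model. -/
def pureC (p : ℕ) : ℕ → ℝ := fun k => if k = p then 1 else 0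

/-- The uniform probability measure on the sphere `S_N`. -/
def sphereUniform (N : ℕ) : Measure (Fin N → ℝ) :=
  Measure.map (fun g i => Real.sqrt N * g i / Real.sqrt (∑ j, (g j) ^ 2))
    (Measure.pi fun _ : Fin N => gaussianReal 0 1)

/-- The band around `m`. -/
def band (N : ℕ) (m : Fin N → ℝ) (δ : ℝ) : Set (Fin N → ℝ) :=
  {σ | σ ∈ sphereSet N ∧ |dotp (σ - m) m| < N * δ}

/-- `k`-tuples from the band with pairwise overlaps close to `⟨m,m⟩`. -/
def bandK (N k : ℕ) (m : Fin N → ℝ) (δ ε : ℝ) : Set (Fin k → Fin N → ℝ) :=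
  {σs | (∀ i, σs i ∈ band N m δ) ∧
    ∀ i j, i ≠ j → |dotp (σs i) (σs j) - dotp m m| < N * ε}

/-- `∫₀ᵗ γ(s) ds`, valued in `ℝ≥0∞`. -/
def gammaLInt (γ : ℝ → ℝ) (t : ℝ) : ℝ≥0∞ := ∫⁻ s in Set.Ioo 0 t, ENNReal.ofReal (γ s)

/-- The zero-temperature spherical Parisi functional (Crisanti–Sommers form), with the
convention `1/0 = +∞`. -/
def PFunE (P : ℕ) (c : ℕ → ℝ) (γ : ℝ → ℝ) : ℝ≥0∞ :=
  ⨅ L ∈ {L : ℝ | gammaLInt γ 1 ≤ ENNReal.ofReal L},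
    (∫⁻ t in Set.Ioo (0 : ℝ) 1,
      (ENNReal.ofReal (xiD2 P c t * (L - (gammaLInt γ t).toReal))
        + (ENNReal.ofReal (L - (gammaLInt γ t).toReal))⁻¹)) / 2

/-- The space `𝒰` of order parameters: non-decreasing, non-negative, integrable on `[0,1)`. -/
def calU : Set (ℝ → ℝ) :=
  {γ | (∀ t ∈ Set.Ico (0 : ℝ) 1, 0 ≤ γ t) ∧ MonotoneOn γ (Set.Ico 0 1) ∧
    IntegrableOn γ (Set.Ioo 0 1)}

/-- The support of `γ`: points of `[0,1]` near which `γ` is not constant. -/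
def suppGamma (γ : ℝ → ℝ) : Set ℝ :=
  {q | q ∈ Set.Icc (0 : ℝ) 1 ∧ ∀ ε > 0, ∃ s ∈ Set.Ico (0 : ℝ) 1, ∃ t ∈ Set.Ico (0 : ℝ) 1,
    |s - q| < ε ∧ |t - q| < ε ∧ γ s ≠ γ t}

/-- The superlevel set `L_N(η)`. -/
def levelSet (N P : ℕ) (c : ℕ → ℝ) (g : (k : ℕ) → (Fin k → Fin N) → ℝ)
    (η : ℝ) : Set (Fin N → ℝ) :=
  {σ | σ ∈ sphereSet N ∧ (N : ℝ) * η ≤ hamiltonian N P c g σ}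

/-- Threshold energy of the pure p-spin model. -/
def THRp (p : ℕ) : ℝ := 2 * Real.sqrt (((p : ℝ) - 1) / p)

/-- The function `J` of the pure p-spin complexity. -/
def Jp (p : ℕ) (η : ℝ) : ℝ :=
  η / (THRp p) ^ 2 * Real.sqrt (η ^ 2 - (THRp p) ^ 2)
    - Real.log (η + Real.sqrt (η ^ 2 - (THRp p) ^ 2)) + Real.log (THRp p)

/-- The annealed complexity of the pure p-spin spherical model. -/
def SigmaPure (p : ℕ) (η : ℝ) : ℝ :=
  if η ≤ 0 then Real.log ((p : ℝ) - 1) / 2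
  else if η ≤ THRp p then
    Real.log ((p : ℝ) - 1) / 2 - ((p : ℝ) - 2) / (4 * ((p : ℝ) - 1)) * η ^ 2
  else Real.log ((p : ℝ) - 1) / 2 - ((p : ℝ) - 2) / (4 * ((p : ℝ) - 1)) * η ^ 2 - Jp p η

/-- Couplings, unflattened from a vector indexed by `GIdx N P`. -/
def unflatten (N P : ℕ) (g : GIdx N P → ℝ) : (k : ℕ) → (Fin k → Fin N) → ℝ :=
  fun k j => if h : k ∈ Finset.Icc 2 P then g ⟨⟨k, h⟩, j⟩ else 0

/-- `ξ'''`. -/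
def xiD3 (P : ℕ) (c : ℕ → ℝ) (x : ℝ) : ℝ :=
  ∑ k ∈ Finset.Icc 2 P, (k : ℝ) * ((k : ℝ) - 1) * ((k : ℝ) - 2) * (c k) ^ 2 * x ^ (k - 3)

/-!
Let `T(g)` be the maximum of `⟪e^{⊗p}, g⟫` over unit vectors `e ∈ ℝ^N`, with `g` a standard Gaussian
tensor. The maximum of `H_N` over `S_N` is `√N T`, so that `E T / √N → E₀` has to be shown. Both
bounds match because `E₀` has a one-step replica symmetry breaking parametrization: `E₀ = p z + θ`
with `p z (z + θ) = 1` and `log (1 / (p z²)) = θ E₀`.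

*Upper bound.* On the unit sphere, Bernoulli's inequality `p q ≤ q ^ p + (p - 1)` compares the
covariance `q ^ p` of the form `⟪e^{⊗p}, g⟫` with that of the linear field `√p ⟪e, y⟫`, with
equality on the diagonal. Gaussian interpolation for the smooth maxima `(∑ₜ exp (k yₜ)) ^ (1 / k)`
and Jensen's inequality turn this into `exp (c² (p - 1) / 2 + c E T) ≤ E exp (c √p ‖y‖)`. For
`c = θ √N`, a quadratic exponential moment of `‖y‖` gives `E T ≤ E₀ √N`, without error term.

*Lower bound.* For `E < E₀` and small `s > 0`, average the weight
`exp (-‖∇⟪e^{⊗p}, g⟫ - c e‖² / (2 s))`, with `c = p E √N`, over a uniform direction `e`. Two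
directions of overlap `q` contribute to the second moment, relative to the square of the first
moment, a factor of exponential rate `pairRate q`, while the overlap has density of order
`(1 - q²) ^ (N / 2)`. The inequality `E₀² (Y - 1) / (Y + p - 1) ≤ log Y` for `Y ≥ 1` makes
`pairRate q < -½ log (1 - q²)` for `q ≠ 0`, so that only overlaps near `0` matter and the average
concentrates. It is then at least half its mean with high probability, and since its mean decays at
a rate which vanishes relative to `1 / s` as `s → 0`, some direction has radial derivative close to
`c`, i.e. energy close to `E √N`.
-/

open scoped RealInnerProductSpace

/-! ### Parametrization of the ground-state energy -/

/-- `(z, θ)` are the parameters of a one-step replica symmetry breaking solution of energy `E` for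
the pure model of (real) degree `P`: the order parameter is constant equal to `θ`, and the
Crisanti-Sommers functional is stationary with value `E`. -/
structure IsOneRSB (P E z θ : ℝ) : Prop where
  z_pos : 0 < z
  theta_pos : 0 < θ
  mul_add_eq_one : P * z * (z + θ) = 1
  energy_eq : E = P * z + θ
  log_eq : Real.log (1 / (P * z ^ 2)) = θ * E
  lt_one : P * (P - 1) * z ^ 2 < 1

lemma THRp_pos {p : ℕ} (hp : 2 ≤ p) : 0 < THRp p := by
  have hP : (2 : ℝ) ≤ p := by exact_mod_cast hp
  have : 0 < ((p : ℝ) - 1) / p := div_pos (by linarith) (by linarith)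
  unfold THRp
  positivity

lemma THRp_sq {p : ℕ} (hp : 2 ≤ p) : THRp p ^ 2 = 4 * ((p : ℝ) - 1) / p := by
  have hP : (2 : ℝ) ≤ p := by exact_mod_cast hp
  rw [THRp, mul_pow, Real.sq_sqrt (div_nonneg (by linarith) (by linarith))]
  ring

lemma log_THRp {p : ℕ} (hp : 2 ≤ p) :
    Real.log (THRp p) = Real.log 2 + (Real.log ((p : ℝ) - 1) - Real.log p) / 2 := by
  have hP : (2 : ℝ) ≤ p := by exact_mod_cast hp
  have hP1 : (0 : ℝ) < p - 1 := by linarith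
  rw [THRp, Real.log_mul (by norm_num) (by positivity), Real.log_sqrt (by positivity),
    Real.log_div (by positivity) (by positivity)]

lemma exists_eq_add_one_div_of_THRp_lt {p : ℕ} (hp : 2 ≤ p) {E : ℝ} (hE : THRp p < E) :
    ∃ z : ℝ, 0 < z ∧ p * (p - 1) * z ^ 2 < 1 ∧ E = (p - 1) * z + 1 / (p * z) := by
  have hP : (2 : ℝ) ≤ p := by exact_mod_cast hp
  have hP1 : (0 : ℝ) < p - 1 := by linarith
  have hT := THRp_pos hp
  have hdisc : 0 < E ^ 2 - THRp p ^ 2 := by nlinarith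
  set S := √(E ^ 2 - THRp p ^ 2)
  have hS_sq : S ^ 2 = E ^ 2 - THRp p ^ 2 := Real.sq_sqrt hdisc.le
  have hS_pos : 0 < S := Real.sqrt_pos.mpr hdisc
  have hSE : S < E := by nlinarith [pow_pos hT 2]
  set z := (E - S) / (2 * ((p : ℝ) - 1)) with hz
  have hz_pos : 0 < z := div_pos (by linarith) (by linarith)
  have hsub : E - S = 2 * (p - 1) * z := by rw [hz]; field_simp
  have hadd : (E + S) * (p * z) = 2 := by
    have hprod : (E + S) * (E - S) = 4 * ((p : ℝ) - 1) / p := by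
      rw [← THRp_sq hp]; linear_combination -hS_sq
    rw [hsub] at hprod
    field_simp at hprod
    nlinarith
  have hquad : E * (p * z) = p * (p - 1) * z ^ 2 + 1 := by
    linear_combination hadd / 2 + (p * z) * hsub / 2
  refine ⟨z, hz_pos, ?_, ?_⟩
  · have : 0 < S * (p * z) := by positivity
    nlinarith
  · field_simp
    linear_combination hquad

lemma SigmaPure_eq_of_THRp_lt {p : ℕ} (hp : 2 ≤ p) {E z : ℝ} (hE : THRp p < E) (hz : 0 < z)
    (hlt : p * (p - 1) * z ^ 2 < 1) (hEz : E = (p - 1) * z + 1 / (p * z)) :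
    SigmaPure p E = (Real.log (1 / (p * z ^ 2)) - (1 / (p * z) - z) * E) / 2 := by
  have hP : (2 : ℝ) ≤ p := by exact_mod_cast hp
  have hP1 : (0 : ℝ) < p - 1 := by linarith
  have hpos : 0 ≤ 1 / (p * z) - (p - 1) * z := by
    rw [sub_nonneg, le_div_iff₀ (by positivity)]
    nlinarith
  have hsqrt : √(E ^ 2 - THRp p ^ 2) = 1 / (p * z) - (p - 1) * z := by
    rw [← Real.sqrt_sq hpos, THRp_sq hp, hEz]
    congr 1
    field_simp
    ring
  have hsum : E + (1 / (p * z) - (p - 1) * z) = 2 / (p * z) := by rw [hEz]; ring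
  have hquad : (p - 2) / (4 * (p - 1)) * E ^ 2 + E / (4 * (p - 1) / p) *
      (1 / (p * z) - (p - 1) * z) = (1 / (p * z) - z) * E / 2 := by
    rw [hEz]
    field_simp
    ring
  rw [SigmaPure, if_neg (not_le.mpr ((THRp_pos hp).trans hE)), if_neg (not_le.mpr hE), Jp, hsqrt,
    hsum, THRp_sq hp, log_THRp hp, Real.log_div two_ne_zero (by positivity),
    Real.log_mul (by positivity) hz.ne', one_div (p * z ^ 2), Real.log_inv,
    Real.log_mul (by positivity) (by positivity), Real.log_pow]
  push_cast
  linear_combination -hquad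

lemma exists_isOneRSB {p : ℕ} (hp : 2 ≤ p) {E : ℝ} (hE : THRp p < E) (hzero : SigmaPure p E = 0) :
    ∃ z θ : ℝ, IsOneRSB p E z θ := by
  have hp0 : (0 : ℝ) < p := by exact_mod_cast (by omega : 0 < p)
  obtain ⟨z, hz, hlt, hEz⟩ := exists_eq_add_one_div_of_THRp_lt hp hE
  have hθ : 0 < 1 / (p * z) - z := by
    have hP : (2 : ℝ) ≤ p := by exact_mod_cast hp
    rw [sub_pos, lt_div_iff₀ (by positivity)]
    nlinarith [mul_pos hp0 (pow_pos hz 2)]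
  refine ⟨z, 1 / (p * z) - z, hz, hθ, by field_simp; ring, by rw [hEz]; ring, ?_, hlt⟩
  linarith [SigmaPure_eq_of_THRp_lt hp hE hz hlt hEz]

lemma le_of_forall_hasDerivAt_nonneg {f f' : ℝ → ℝ} {a b : ℝ} (hab : a ≤ b)
    (hf : ∀ y ∈ Set.Icc a b, HasDerivAt f (f' y) y) (hf' : ∀ y ∈ Set.Icc a b, 0 ≤ f' y) :
    f a ≤ f b :=
  monotoneOn_of_hasDerivWithinAt_nonneg (convex_Icc a b)
    (fun y hy => (hf y hy).continuousAt.continuousWithinAt)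
    (fun y hy => (hf y (interior_subset hy)).hasDerivWithinAt)
    (fun y hy => hf' y (interior_subset hy))
    (Set.left_mem_Icc.mpr hab) (Set.right_mem_Icc.mpr hab) hab

lemma nonneg_of_hasDerivAt_sub_mul_sub {f w : ℝ → ℝ} {a y₁ y₂ : ℝ} (h₁₂ : y₁ ≤ y₂)
    (hf : ∀ y, a ≤ y → HasDerivAt f ((y - y₁) * (y - y₂) * w y) y) (hw : ∀ y, a ≤ y → 0 ≤ w y)
    (ha : 0 ≤ f a) (hy₂ : 0 ≤ f y₂) {y : ℝ} (hy : a ≤ y) : 0 ≤ f y := by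
  rcases le_total y y₁ with hyy₁ | hyy₁
  · refine ha.trans (le_of_forall_hasDerivAt_nonneg hy (fun x hx => hf x hx.1) fun x hx => ?_)
    exact mul_nonneg (mul_nonneg_of_nonpos_of_nonpos (by linarith [hx.2]) (by linarith [hx.2]))
      (hw x hx.1)
  rcases le_total y y₂ with hyy₂ | hyy₂
  · have hanti : -f y ≤ -f y₂ := le_of_forall_hasDerivAt_nonneg (f := fun x => -f x) hyy₂
      (fun x hx => (hf x (hy.trans hx.1)).fun_neg) fun x hx => neg_nonneg.mpr <|
        mul_nonpos_of_nonpos_of_nonneg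
          (mul_nonpos_of_nonneg_of_nonpos (by linarith [hx.1]) (by linarith [hx.2]))
          (hw x (hy.trans hx.1))
    linarith
  · have hmax : 0 ≤ f (max a y₂) := by rcases max_choice a y₂ with h | h <;> rwa [h]
    refine hmax.trans (le_of_forall_hasDerivAt_nonneg (max_le hy hyy₂)
      (fun x hx => hf x ((le_max_left _ _).trans hx.1)) fun x hx => ?_)
    have hx₂ : y₂ ≤ x := (le_max_right _ _).trans hx.1
    exact mul_nonneg (mul_nonneg (by linarith) (by linarith)) (hw x ((le_max_left _ _).trans hx.1))

/-- The difference of the two sides vanishes at `1` and at `1 / (P z²)`, and its derivative has the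
sign of a quadratic polynomial whose larger root is `1 / (P z²)`. -/
lemma IsOneRSB.sq_mul_div_le_log {P E z θ : ℝ} (h : IsOneRSB P E z θ) (hP : 1 < P) {Y : ℝ}
    (hY : 1 ≤ Y) : E ^ 2 * ((Y - 1) / (Y + P - 1)) ≤ Real.log Y := by
  have hz := h.z_pos
  have : 0 < P := by linarith
  have hPz : 0 < P * (P - 1) * z ^ 2 := by have := sub_pos.mpr hP; positivity
  have hEPz : E * (P * z) = 1 + P * (P - 1) * z ^ 2 := by
    rw [h.energy_eq]; linear_combination h.mul_add_eq_one
  set Y₁ := (P - 1) ^ 2 * P * z ^ 2 with hY₁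
  set Y₂ := 1 / (P * z ^ 2) with hY₂
  have hY₂_mul : Y₂ * (P * z ^ 2) = 1 := by rw [hY₂]; field_simp
  have hY₂_pos : 0 < Y₂ := by positivity
  have hfactor : ∀ y, (y + P - 1) ^ 2 - E ^ 2 * P * y = (y - Y₁) * (y - Y₂) := fun y => by
    have : E = (1 + P * (P - 1) * z ^ 2) / (P * z) := by rwa [eq_div_iff (by positivity)]
    rw [hY₁, hY₂, this]
    field_simp
    ring
  have hY₁₂ : Y₁ ≤ Y₂ := by
    rw [hY₂, le_div_iff₀ (by positivity)]
    nlinarith [h.lt_one]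
  have hderiv : ∀ y, 1 ≤ y → HasDerivAt
      (fun y => Real.log y - E ^ 2 * ((y - 1) / (y + P - 1)))
      ((y - Y₁) * (y - Y₂) * (y * (y + P - 1) ^ 2)⁻¹) y := fun y hy => by
    have hden : y + P - 1 ≠ 0 := by linarith
    refine ((Real.hasDerivAt_log (by linarith)).sub ((((hasDerivAt_id y).sub_const 1).div
      (((hasDerivAt_id y).add_const P).sub_const 1) hden).const_mul (E ^ 2))).congr_deriv ?_
    rw [← hfactor]
    simp only [id]
    field_simp
    ring
  have hzero : Real.log Y₂ - E ^ 2 * ((Y₂ - 1) / (Y₂ + P - 1)) = 0 := by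
    have hnum : Y₂ - 1 = Y₂ * (P * z * θ) := by
      linear_combination hY₂_mul - Y₂ * h.mul_add_eq_one
    have hden : Y₂ + P - 1 = Y₂ * (E * (P * z)) := by
      rw [hEPz]; linear_combination (1 - P) * hY₂_mul
    have hEPz_pos : 0 < E * (P * z) := by rw [hEPz]; linarith
    rw [h.log_eq, hnum, hden, mul_div_mul_left _ _ hY₂_pos.ne', sub_eq_zero, ← mul_div_assoc,
      eq_div_iff hEPz_pos.ne']
    ring
  exact sub_nonneg.mp <| nonneg_of_hasDerivAt_sub_mul_sub hY₁₂ hderiv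
    (fun y hy => by positivity) (by simp) hzero.ge hY

/-! ### The two-point rate -/

/-- The constraints satisfied by `(a, x) = (q ^ (p - 2), q ^ 2)` for an overlap `|q| ≤ 1` in degree
`P = p`, except for the relation between `a` and `x`. -/
structure IsOverlapPair (P a x : ℝ) : Prop where
  nonneg : 0 ≤ x
  le_one : x ≤ 1
  abs_le_one : |a| ≤ 1
  mul_abs_le : (P - 1) * |a| * (1 - x) ≤ 1 - a ^ 2 * x

/-- Variance of the component, along the other point, of the sum of the gradients of the pure model
at two unit vectors of overlap `q`, where `(a, x) = (q ^ (p - 2), q ^ 2)`. -/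
def tangVar (P a x : ℝ) : ℝ := P * (1 - a * x + (P - 1) * a * (1 - x))

/-- Determinant of the covariance of the in-plane components of the sum of the gradients at two
unit vectors, with variance `s` added to each component. -/
def planeDet (P s a x : ℝ) : ℝ :=
  (P ^ 2 * (1 + a * x) + s) * (tangVar P a x + s) - P ^ 4 * a ^ 2 * x * (1 - x)

/-- Energy that two points with overlap parameters `(a, x)` share: the coefficient of `E ^ 2` in
the exponential rate of the two-point function. -/
def planeEnergy (P s a x : ℝ) : ℝ :=
  P ^ 2 / (P ^ 2 + s) - P ^ 2 * (tangVar P a x + s) / planeDet P s a x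

/-- Leading term of `planeDet P s a x / P ^ 3`. -/
def planeDenom (P s a x : ℝ) : ℝ :=
  1 + s / P + (P - 1) * a * (1 - x) + s / P * a * x - a ^ 2 * x

/-- Exponential rate of the two-point function in terms of `(a, x) = (q ^ (p - 2), q ^ 2)`. -/
def overlapRate (P s E a x : ℝ) : ℝ :=
  -(1 / 2) * Real.log (1 - (P / (P + s)) ^ 2 * (a ^ 2 * x)) + E ^ 2 * planeEnergy P s a x

/-- Exponential rate of the two-point function at overlap `q`. -/
def pairRate (p : ℕ) (s E q : ℝ) : ℝ := overlapRate p s E (q ^ (p - 2)) (q ^ 2)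

section OverlapPair

variable {P s a x : ℝ}

lemma IsOverlapPair.neg (h : IsOverlapPair P a x) : IsOverlapPair P (-a) x :=
  ⟨h.nonneg, h.le_one, by simpa using h.abs_le_one, by simpa using h.mul_abs_le⟩

lemma IsOverlapPair.sq_mul_le (h : IsOverlapPair P a x) : a ^ 2 * x ≤ x :=
  mul_le_of_le_one_left h.nonneg ((sq_le_one_iff_abs_le_one a).mpr h.abs_le_one)

lemma IsOverlapPair.neg_le_mul (h : IsOverlapPair P a x) (hP : 1 ≤ P) :
    -(1 - a ^ 2 * x) ≤ (P - 1) * a * (1 - x) := by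
  have hb : 0 ≤ (P - 1) * (1 - x) := mul_nonneg (by linarith) (by linarith [h.le_one])
  nlinarith [mul_le_mul_of_nonneg_left (neg_abs_le a) hb, h.mul_abs_le]

lemma IsOverlapPair.mul_abs_le_one (h : IsOverlapPair P a x) : |a * x| ≤ 1 := by
  rw [abs_mul, abs_of_nonneg h.nonneg]
  exact mul_le_one₀ h.abs_le_one h.nonneg h.le_one

lemma IsOverlapPair.tangVar_nonneg (h : IsOverlapPair P a x) (hP : 1 ≤ P) :
    0 ≤ tangVar P a x := by
  refine mul_nonneg (by linarith) ?_
  rcases le_total 0 a with ha | ha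
  · have := (abs_le.mp h.mul_abs_le_one).2
    have : 0 ≤ (P - 1) * a * (1 - x) :=
      mul_nonneg (mul_nonneg (by linarith) ha) (by linarith [h.le_one])
    linarith
  · nlinarith [h.neg_le_mul hP, (abs_le.mp h.abs_le_one).1, mul_nonneg (neg_nonneg.mpr ha) h.nonneg]

lemma IsOverlapPair.sq_le_planeDet (h : IsOverlapPair P a x) (hP : 1 ≤ P) (hs : 0 ≤ s) :
    s ^ 2 ≤ planeDet P s a x := by
  have hT := h.tangVar_nonneg hP
  have hA : 0 ≤ P ^ 2 * (1 + a * x) :=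
    mul_nonneg (sq_nonneg P) (by linarith [(abs_le.mp h.mul_abs_le_one).1])
  have hdet : planeDet P s a x = P ^ 3 * (1 - a ^ 2 * x + (P - 1) * a * (1 - x))
      + s * (P ^ 2 * (1 + a * x)) + s * tangVar P a x + s ^ 2 := by
    unfold planeDet tangVar; ring
  have hcross : 0 ≤ P ^ 3 * (1 - a ^ 2 * x + (P - 1) * a * (1 - x)) :=
    mul_nonneg (by positivity) (by linarith [h.neg_le_mul hP])
  linarith [mul_nonneg hs hA, mul_nonneg hs hT]

lemma IsOverlapPair.planeDet_pos (h : IsOverlapPair P a x) (hP : 1 ≤ P) (hs : 0 < s) :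
    0 < planeDet P s a x :=
  (pow_pos hs 2).trans_le (h.sq_le_planeDet hP hs.le)

lemma IsOverlapPair.planeEnergy_nonpos (h : IsOverlapPair P a x) (hP : 1 ≤ P) (hs : 0 < s)
    (ha : a ≤ 0) : planeEnergy P s a x ≤ 0 := by
  rw [planeEnergy, sub_nonpos, div_le_div_iff₀ (by positivity) (h.planeDet_pos hP hs), mul_assoc]
  refine mul_le_mul_of_nonneg_left ?_ (sq_nonneg P)
  have hax : P ^ 2 * (a * x) * (tangVar P a x + s) ≤ 0 :=
    mul_nonpos_of_nonpos_of_nonneg (mul_nonpos_of_nonneg_of_nonpos (sq_nonneg P)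
      (mul_nonpos_of_nonpos_of_nonneg ha h.nonneg)) (by linarith [h.tangVar_nonneg hP])
  have : 0 ≤ P ^ 4 * a ^ 2 * x * (1 - x) :=
    mul_nonneg (mul_nonneg (by positivity) h.nonneg) (sub_nonneg.mpr h.le_one)
  unfold planeDet
  linarith

lemma IsOverlapPair.div_le_planeDenom (h : IsOverlapPair P a x) (hP : 1 ≤ P) (hs : 0 ≤ s)
    (ha : 0 ≤ a) : s / P ≤ planeDenom P s a x := by
  have : 0 ≤ s / P * a * x := mul_nonneg (by positivity) h.nonneg
  have : 0 ≤ (P - 1) * a * (1 - x) :=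
    mul_nonneg (mul_nonneg (by linarith) ha) (sub_nonneg.mpr h.le_one)
  unfold planeDenom
  linarith [h.sq_mul_le, h.le_one]

lemma IsOverlapPair.planeEnergy_le (h : IsOverlapPair P a x) (hP : 1 ≤ P) (hs : 0 < s)
    (ha : 0 ≤ a) :
    planeEnergy P s a x ≤ a * x * (1 + s / P - a) / planeDenom P s a x := by
  have hP0 : 0 < P := by linarith
  set d := s / P with hd
  have hd_pos : 0 < d := by positivity
  have hsd : s = P * d := by rw [hd]; field_simp
  have hV_pos : 0 < planeDenom P s a x := hd_pos.trans_le (h.div_le_planeDenom hP hs.le ha)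
  have hgain : 0 ≤ a * x * (1 + d - a) :=
    mul_nonneg (mul_nonneg ha h.nonneg) (by linarith [(abs_le.mp h.abs_le_one).2])
  set D := (tangVar P a x + s) / P with hD
  have hD_pos : 0 < D := div_pos (by linarith [h.tangVar_nonneg hP]) hP0
  have hsum : planeDenom P s a x - D = a * x * (1 + d - a) := by
    rw [hD, planeDenom, tangVar, hd]; field_simp; ring
  have htang : tangVar P a x + s = P * D := by rw [hD]; field_simp
  have hdet : planeDet P s a x = P ^ 3 * (planeDenom P s a x + D * (d / P)) := by
    rw [hD, planeDet, planeDenom, tangVar, hd]; field_simp; ring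
  set V := planeDenom P s a x
  have hquot : planeEnergy P s a x = (V - D) / ((1 + d / P) * (V + D * (d / P))) := by
    have : 0 < V + D * (d / P) := by positivity
    rw [planeEnergy, htang, hdet, hsd]
    field_simp
    ring
  rw [hquot, hsum]
  refine div_le_div_of_nonneg_left hgain hV_pos ?_
  have hdP : 0 < d / P := by positivity
  nlinarith [mul_pos hdP hV_pos, mul_pos hdP hD_pos, mul_pos hdP (mul_pos hdP hD_pos)]

lemma IsOverlapPair.two_mul_mul_le_planeDenom (h : IsOverlapPair P a x) (hP : 1 ≤ P) (hs : 0 < s)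
    (hsP : 3 * s < P) (ha : 0 ≤ a) :
    (1 - 3 * (s / P)) *
        (2 * a * (x * ((1 + s / P) ^ 2 - a ^ 2) + P * (1 - x) * (1 + s / P) ^ 2)) ≤
      (1 + s / P + a) * planeDenom P s a x := by
  have hP0 : 0 < P := by linarith
  have hcon := h.mul_abs_le
  rw [abs_of_nonneg ha] at hcon
  have ha1 := (abs_le.mp h.abs_le_one).2
  have hx1 : 0 ≤ 1 - x := sub_nonneg.mpr h.le_one
  have hd3 : 3 * (s / P) < 1 := by rwa [← mul_div_assoc, div_lt_one hP0]
  unfold planeDenom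
  set d := s / P
  have hd : 0 < d := by positivity
  set W := x * ((1 + d) ^ 2 - a ^ 2) + P * (1 - x) * (1 + d) ^ 2 with hW
  have hdiff : (1 + d + a) * (1 + d + (P - 1) * a * (1 - x) + d * a * x - a ^ 2 * x) - 2 * a * W =
      (1 - a) * (1 - a ^ 2 * x - (P - 1) * a * (1 - x)) + (2 * d + d ^ 2) * (1 - a)
        + a * (1 - x) * (P * d - (2 * P - 1) * (2 * d + d ^ 2)) := by
    rw [hW]; ring
  have hcon' : 0 ≤ (1 - a) * (1 - a ^ 2 * x - (P - 1) * a * (1 - x)) :=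
    mul_nonneg (by linarith) (by linarith)
  have hd' : 0 ≤ (2 * d + d ^ 2) * (1 - a) := mul_nonneg (by positivity) (by linarith)
  have hcoef : -(6 * P * d) ≤ P * d - (2 * P - 1) * (2 * d + d ^ 2) := by
    nlinarith [mul_pos hP0 hd, mul_pos hd hd, mul_pos hP0 (mul_pos hd hd)]
  have hW_ge : P * (1 - x) ≤ W := by
    have : 0 ≤ x * ((1 + d) ^ 2 - a ^ 2) := mul_nonneg h.nonneg (by nlinarith)
    have : P * (1 - x) * 1 ≤ P * (1 - x) * (1 + d) ^ 2 :=
      mul_le_mul_of_nonneg_left (by nlinarith) (by positivity)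
    linarith
  have := mul_le_mul_of_nonneg_left hcoef (mul_nonneg ha hx1)
  have := mul_le_mul_of_nonneg_left hW_ge (by positivity : 0 ≤ 6 * d * a)
  linarith [hdiff]

lemma overlapRatio_eq (hP : 0 < P) (hs : 0 ≤ s) (hx : x < 1) {Y : ℝ}
    (hY : Y = (1 - (P / (P + s)) ^ 2 * (a ^ 2 * x)) / (1 - x)) :
    (Y - 1) / (Y + P - 1) = x * ((1 + s / P) ^ 2 - a ^ 2) /
      (x * ((1 + s / P) ^ 2 - a ^ 2) + P * (1 - x) * (1 + s / P) ^ 2) := by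
  have hx' : 0 < 1 - x := by linarith
  have hκ : P / (P + s) = 1 / (1 + s / P) := by field_simp
  have he : 0 < 1 + s / P := by positivity
  rw [hκ] at hY
  set e := 1 + s / P
  have hY₁ : Y - 1 = x * (e ^ 2 - a ^ 2) / (e ^ 2 * (1 - x)) := by
    rw [hY]; field_simp; ring
  have hY₂ : Y + P - 1 = (x * (e ^ 2 - a ^ 2) + P * (1 - x) * e ^ 2) / (e ^ 2 * (1 - x)) := by
    rw [show Y + P - 1 = (Y - 1) + P by ring, hY₁]; field_simp
  rw [hY₁, hY₂, div_div_div_cancel_right₀ (by positivity)]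

lemma IsOverlapPair.planeEnergy_le_ratio (h : IsOverlapPair P a x) (hP : 1 ≤ P) (hs : 0 < s)
    (hsP : 3 * s < P) (ha : 0 ≤ a) (hx : x < 1) {Y : ℝ}
    (hY : Y = (1 - (P / (P + s)) ^ 2 * (a ^ 2 * x)) / (1 - x)) :
    (1 - 3 * (s / P)) * planeEnergy P s a x ≤ 1 / 2 * ((Y - 1) / (Y + P - 1)) := by
  have hP0 : 0 < P := by linarith
  have ha1 := (abs_le.mp h.abs_le_one).2
  have hd : 0 < s / P := by positivity
  have hd3 : 3 * (s / P) < 1 := by rwa [← mul_div_assoc, div_lt_one hP0]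
  have hmain := h.two_mul_mul_le_planeDenom hP hs hsP ha
  rw [overlapRatio_eq hP0 hs.le hx hY]
  refine (mul_le_mul_of_nonneg_left (h.planeEnergy_le hP hs ha) (by linarith)).trans ?_
  have hV : 0 < planeDenom P s a x := hd.trans_le (h.div_le_planeDenom hP hs.le ha)
  set d := s / P
  have hW : 0 < x * ((1 + d) ^ 2 - a ^ 2) + P * (1 - x) * (1 + d) ^ 2 := by
    have : 0 ≤ x * ((1 + d) ^ 2 - a ^ 2) := mul_nonneg h.nonneg (by nlinarith)
    have : 0 < P * (1 - x) * (1 + d) ^ 2 := by have := sub_pos.mpr hx; positivity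
    linarith
  rw [← mul_div_assoc (1 - 3 * d), ← mul_div_assoc (1 / 2 : ℝ), div_le_div_iff₀ hV hW]
  have hfactor : 0 ≤ x * (1 + d - a) / 2 := by
    have := mul_nonneg h.nonneg (by linarith : 0 ≤ 1 + d - a)
    linarith
  linarith [mul_le_mul_of_nonneg_left hmain hfactor]

lemma sq_div_add_lt_one (hP : 0 ≤ P) (hs : 0 < s) : (P / (P + s)) ^ 2 < 1 := by
  have : P / (P + s) < 1 := by rw [div_lt_one (by positivity)]; linarith
  exact pow_lt_one₀ (by positivity) this two_ne_zero

lemma IsOverlapPair.one_sub_pos (h : IsOverlapPair P a x) (hP : 0 ≤ P) (hs : 0 < s) :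
    0 < 1 - (P / (P + s)) ^ 2 * (a ^ 2 * x) := by
  nlinarith [sq_div_add_lt_one hP hs, sq_nonneg (P / (P + s)), h.sq_mul_le, h.le_one,
    mul_nonneg (sq_nonneg a) h.nonneg]

lemma IsOverlapPair.sq_mul_lt (h : IsOverlapPair P a x) (hP : 0 ≤ P) (hs : 0 < s) (hx : 0 < x) :
    (P / (P + s)) ^ 2 * (a ^ 2 * x) < x :=
  (mul_le_mul_of_nonneg_left h.sq_mul_le (sq_nonneg _)).trans_lt
    (mul_lt_of_lt_one_left hx (sq_div_add_lt_one hP hs))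

lemma IsOverlapPair.overlapRate_lt {E E₀ z θ : ℝ} (h : IsOverlapPair P a x)
    (hrsb : IsOneRSB P E₀ z θ) (hP : 1 < P) (hs : 0 < s) (hsP : 3 * s < P)
    (hE : E ^ 2 < (1 - 3 * (s / P)) * E₀ ^ 2) (hx0 : 0 < x) (hx1 : x < 1) :
    overlapRate P s E a x < -(1 / 2) * Real.log (1 - x) := by
  have hP0 : 0 < P := by linarith
  have hx1' : 0 < 1 - x := by linarith
  have hτ := h.one_sub_pos hP0.le hs
  have hτx := h.sq_mul_lt hP0.le hs hx0
  rw [overlapRate]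
  set τ := (P / (P + s)) ^ 2 * (a ^ 2 * x)
  rcases le_or_gt a 0 with ha | ha
  · have := Real.log_lt_log hx1' (by linarith : 1 - x < 1 - τ)
    linarith [mul_nonpos_of_nonneg_of_nonpos (sq_nonneg E) (h.planeEnergy_nonpos hP.le hs ha)]
  set Y := (1 - τ) / (1 - x) with hY
  have hY1 : 1 < Y := by rw [hY, one_lt_div hx1']; linarith
  have hd : 0 < 1 - 3 * (s / P) := by rwa [sub_pos, ← mul_div_assoc, div_lt_one hP0]
  have hR : 0 < (Y - 1) / (Y + P - 1) := div_pos (by linarith) (by linarith)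
  have hlogY : Real.log Y = Real.log (1 - τ) - Real.log (1 - x) := Real.log_div hτ.ne' hx1'.ne'
  have hscaled : (1 - 3 * (s / P)) * (E ^ 2 * planeEnergy P s a x) <
      (1 - 3 * (s / P)) * (1 / 2 * Real.log Y) := calc
    _ = E ^ 2 * ((1 - 3 * (s / P)) * planeEnergy P s a x) := by ring
    _ ≤ E ^ 2 * (1 / 2 * ((Y - 1) / (Y + P - 1))) := mul_le_mul_of_nonneg_left
      (h.planeEnergy_le_ratio hP.le hs hsP ha.le hx1 hY) (sq_nonneg E)
    _ < (1 - 3 * (s / P)) * E₀ ^ 2 * (1 / 2 * ((Y - 1) / (Y + P - 1))) :=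
      mul_lt_mul_of_pos_right hE (mul_pos one_half_pos hR)
    _ = (1 - 3 * (s / P)) * (1 / 2 * (E₀ ^ 2 * ((Y - 1) / (Y + P - 1)))) := by ring
    _ ≤ _ := by gcongr; exact hrsb.sq_mul_div_le_log hP hY1.le
  linarith [lt_of_mul_lt_mul_left hscaled hd.le]

lemma neg_log_one_sub_le {κ τ : ℝ} (hτ : 0 ≤ τ) (hτκ : τ ≤ κ) (hκ : κ < 1) :
    -Real.log (1 - τ) ≤ τ / (1 - κ) := by
  have hlog := Real.one_sub_inv_le_log_of_pos (by linarith : 0 < 1 - τ)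
  have hinv : (1 - τ)⁻¹ - 1 = τ / (1 - τ) := by
    have : 1 - τ ≠ 0 := by linarith
    field_simp
    ring
  have : τ / (1 - τ) ≤ τ / (1 - κ) := div_le_div_of_nonneg_left hτ (by linarith) (by linarith)
  linarith

lemma exists_overlapRate_le (hP : 1 ≤ P) (hs : 0 < s) (E : ℝ) :
    ∃ C > 0, ∀ a x, IsOverlapPair P a x → overlapRate P s E a x ≤ C * (|a| * x) := by
  have hκ := sq_div_add_lt_one (by linarith : 0 ≤ P) hs
  refine ⟨1 / (1 - (P / (P + s)) ^ 2) + E ^ 2 * ((1 + s / P) / (s / P)), ?_, fun a x h => ?_⟩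
  · have := sub_pos.mpr hκ
    positivity
  have hax0 : 0 ≤ |a| * x := mul_nonneg (abs_nonneg a) h.nonneg
  have ha2 : a ^ 2 * x ≤ |a| * x := mul_le_mul_of_nonneg_right
    (by rw [← sq_abs]; nlinarith [h.abs_le_one, abs_nonneg a]) h.nonneg
  rw [overlapRate, add_mul, mul_assoc (E ^ 2)]
  refine add_le_add ?_ (mul_le_mul_of_nonneg_left ?_ (sq_nonneg E))
  · set κ := (P / (P + s)) ^ 2
    have hκ0 : 0 ≤ κ := sq_nonneg _
    have hτ0 : 0 ≤ κ * (a ^ 2 * x) := mul_nonneg hκ0 (mul_nonneg (sq_nonneg a) h.nonneg)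
    have hτκ : κ * (a ^ 2 * x) ≤ κ := mul_le_of_le_one_right hκ0 (h.sq_mul_le.trans h.le_one)
    have hτa : κ * (a ^ 2 * x) ≤ |a| * x := (mul_le_of_le_one_left
      (mul_nonneg (sq_nonneg a) h.nonneg) hκ.le).trans ha2
    have hlog := neg_log_one_sub_le hτ0 hτκ hκ
    have := div_le_div_of_nonneg_right hτa (sub_pos.mpr hκ).le
    rw [one_div_mul_eq_div]
    linarith [div_nonneg hτ0 (sub_pos.mpr hκ).le]
  · rcases le_total a 0 with ha | ha
    · exact (h.planeEnergy_nonpos hP hs ha).trans (mul_nonneg (by positivity) hax0)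
    · rw [abs_of_nonneg ha] at hax0 ⊢
      refine (h.planeEnergy_le hP hs ha).trans ?_
      rw [div_mul_eq_mul_div, mul_comm (1 + s / P)]
      exact div_le_div₀ (by positivity) (mul_le_mul_of_nonneg_left (by linarith) hax0)
        (by positivity) (h.div_le_planeDenom hP hs.le ha)

end OverlapPair

lemma two_mul_le_sq_pow_add_sq_pow_sub (q : ℝ) {j n : ℕ} (hj : j ≤ n) :
    2 * q ^ n ≤ (q ^ 2) ^ j + (q ^ 2) ^ (n - j) := by
  have hn : q ^ n = q ^ j * q ^ (n - j) := by rw [← pow_add]; congr 1; omega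
  rw [hn, ← pow_mul, ← pow_mul, mul_comm 2 j, mul_comm 2 (n - j), pow_mul, pow_mul]
  linarith [sq_nonneg (q ^ j - q ^ (n - j))]

/-- AM-GM for the geometric sum `(1 - q ^ (2 (n + 1))) / (1 - q ^ 2)`, pairing opposite terms. -/
lemma natCast_mul_pow_mul_one_sub_sq_le {q : ℝ} (hq : |q| ≤ 1) (n : ℕ) :
    (n + 1) * q ^ n * (1 - q ^ 2) ≤ 1 - (q ^ (n + 1)) ^ 2 := by
  have hgeom : 1 - (q ^ (n + 1)) ^ 2 =
      (∑ j ∈ Finset.range (n + 1), (q ^ 2) ^ j) * (1 - q ^ 2) := by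
    rw [mul_comm, mul_neg_geom_sum]; ring
  have hpair : ∑ _j ∈ Finset.range (n + 1), 2 * q ^ n ≤
      ∑ j ∈ Finset.range (n + 1), ((q ^ 2) ^ j + (q ^ 2) ^ (n - j)) :=
    Finset.sum_le_sum fun j hj =>
      two_mul_le_sq_pow_add_sq_pow_sub q (Nat.lt_succ_iff.mp (Finset.mem_range.mp hj))
  have hreflect := Finset.sum_range_reflect (fun j => (q ^ 2) ^ j) (n + 1)
  simp only [Nat.add_sub_cancel] at hreflect
  rw [Finset.sum_const, Finset.card_range, nsmul_eq_mul, Finset.sum_add_distrib, hreflect] at hpair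
  rw [hgeom]
  push_cast at hpair
  exact mul_le_mul_of_nonneg_right (by linarith)
    (sub_nonneg.mpr ((sq_le_one_iff_abs_le_one q).mpr hq))

lemma isOverlapPair_pow {p : ℕ} (hp : 2 ≤ p) {q : ℝ} (hq : |q| ≤ 1) :
    IsOverlapPair p (q ^ (p - 2)) (q ^ 2) where
  nonneg := sq_nonneg q
  le_one := (sq_le_one_iff_abs_le_one q).mpr hq
  abs_le_one := by rw [abs_pow]; exact pow_le_one₀ (abs_nonneg q) hq
  mul_abs_le := by
    obtain ⟨n, rfl⟩ : ∃ n, p = n + 2 := ⟨p - 2, by omega⟩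
    have hgeom := natCast_mul_pow_mul_one_sub_sq_le (q := |q|) (by rwa [abs_abs]) n
    have hsq : (|q| ^ (n + 1)) ^ 2 = (q ^ n) ^ 2 * q ^ 2 := by
      rw [← abs_pow, sq_abs]; ring
    rw [sq_abs, hsq] at hgeom
    simp only [Nat.add_sub_cancel, abs_pow]
    push_cast
    linarith

lemma continuousOn_pairRate {p : ℕ} (hp : 2 ≤ p) {s : ℝ} (E : ℝ) (hs : 0 < s) :
    ContinuousOn (pairRate p s E) {q | |q| ≤ 1} := by
  have hp1 : (1 : ℝ) ≤ p := by exact_mod_cast (by omega : 1 ≤ p)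
  unfold pairRate overlapRate planeEnergy
  refine (continuousOn_const.mul (ContinuousOn.log (by fun_prop) fun q hq =>
    ((isOverlapPair_pow hp hq).one_sub_pos (by linarith) hs).ne')).add
    (continuousOn_const.mul (continuousOn_const.sub (ContinuousOn.div ?_ ?_ fun q hq =>
      ((isOverlapPair_pow hp hq).planeDet_pos hp1 hs).ne')))
  · unfold tangVar; fun_prop
  · unfold planeDet tangVar; fun_prop

lemma exists_pairRate_le_cubic {p : ℕ} (hp : 3 ≤ p) {s : ℝ} (E : ℝ) (hs : 0 < s) :
    ∃ C > 0, ∀ q : ℝ, |q| ≤ 1 → pairRate p s E q ≤ C * |q| ^ 3 := by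
  obtain ⟨C, hC, hle⟩ := exists_overlapRate_le (P := p) (by exact_mod_cast (by omega : 1 ≤ p)) hs E
  refine ⟨C, hC, fun q hq => (hle _ _ (isOverlapPair_pow (by omega) hq)).trans ?_⟩
  have hpow : |q ^ (p - 2)| * q ^ 2 = |q| ^ p := by
    rw [abs_pow, ← sq_abs, ← pow_add]; congr 1; omega
  rw [hpow]
  exact mul_le_mul_of_nonneg_left (pow_le_pow_of_le_one (abs_nonneg q) hq hp) hC.le

lemma pairRate_lt {p : ℕ} (hp : 2 ≤ p) {s E E₀ z θ q : ℝ} (hrsb : IsOneRSB p E₀ z θ)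
    (hs : 0 < s) (hsp : 3 * s < p) (hE : E ^ 2 < (1 - 3 * (s / p)) * E₀ ^ 2) (hq : |q| < 1)
    (hq0 : q ≠ 0) : pairRate p s E q < -(1 / 2) * Real.log (1 - q ^ 2) :=
  (isOverlapPair_pow hp hq.le).overlapRate_lt hrsb (by exact_mod_cast (by omega : 1 < p)) hs hsp hE
    (by positivity) ((sq_lt_one_iff_abs_lt_one q).mpr hq)

lemma sq_le_neg_log_one_sub_sq {q : ℝ} (hq : |q| < 1) : q ^ 2 ≤ -Real.log (1 - q ^ 2) := by
  have : q ^ 2 < 1 := (sq_lt_one_iff_abs_lt_one q).mpr hq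
  linarith [Real.log_le_sub_one_of_pos (by linarith : 0 < 1 - q ^ 2)]

/-- The complement of the compact set splits into small overlaps, where the cubic bound beats
`q ^ 2`, and overlaps near `±1`, where the logarithm is large. -/
lemma exists_isCompact_le_neg_log {f : ℝ → ℝ} {C : ℝ} (hC : 0 < C)
    (hcub : ∀ q, |q| < 1 → f q ≤ C * |q| ^ 3) :
    ∃ S : Set ℝ, IsCompact S ∧ (∀ q ∈ S, |q| < 1 ∧ q ≠ 0) ∧
      ∀ q, |q| < 1 → q ∉ S → f q ≤ 1 / 4 * -Real.log (1 - q ^ 2) := by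
  have hlt : ∀ q : ℝ, q ^ 2 ≤ 1 - Real.exp (-(4 * C)) → |q| < 1 := fun q hq =>
    (sq_lt_one_iff_abs_lt_one q).mp (by linarith [Real.exp_pos (-(4 * C))])
  refine ⟨{q | 1 / (4 * C) ≤ |q|} ∩ {q | q ^ 2 ≤ 1 - Real.exp (-(4 * C))},
    Metric.isCompact_of_isClosed_isBounded
      ((isClosed_le (by fun_prop) (by fun_prop)).inter (isClosed_le (by fun_prop) (by fun_prop)))
      ((Metric.isBounded_closedBall (x := (0 : ℝ)) (r := 1)).subset fun q hq => by
        simpa using (hlt q hq.2).le),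
    fun q hq => ⟨hlt q hq.2, abs_pos.mp (lt_of_lt_of_le (by positivity) hq.1)⟩,
    fun q hq hqS => (hcub q hq).trans ?_⟩
  have hq2 : q ^ 2 < 1 := (sq_lt_one_iff_abs_lt_one q).mpr hq
  rcases le_or_gt (1 / (4 * C)) |q| with hlarge | hsmall
  · have hbig : 1 - Real.exp (-(4 * C)) < q ^ 2 := not_le.mp fun hcon => hqS ⟨hlarge, hcon⟩
    have hlog : Real.log (1 - q ^ 2) < -(4 * C) := by
      rw [Real.log_lt_iff_lt_exp (by linarith)]; linarith
    nlinarith [pow_le_one₀ (n := 3) (abs_nonneg q) hq.le]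
  · have hCq : C * |q| ≤ 1 / 4 := by
      rw [lt_div_iff₀ (by positivity)] at hsmall
      linarith
    calc C * |q| ^ 3 = C * |q| * q ^ 2 := by rw [← sq_abs q]; ring
      _ ≤ 1 / 4 * q ^ 2 := mul_le_mul_of_nonneg_right hCq (sq_nonneg q)
      _ ≤ _ := by linarith [sq_le_neg_log_one_sub_sq hq]

lemma exists_le_mul_neg_log {f : ℝ → ℝ} {C : ℝ} (hC : 0 < C)
    (hcont : ContinuousOn f {q | |q| < 1}) (hcub : ∀ q, |q| < 1 → f q ≤ C * |q| ^ 3)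
    (hlt : ∀ q, |q| < 1 → q ≠ 0 → f q < -(1 / 2) * Real.log (1 - q ^ 2)) :
    ∃ c > 0, c < 1 / 2 ∧ ∀ q : ℝ, |q| < 1 → f q ≤ (1 / 2 - c) * -Real.log (1 - q ^ 2) := by
  obtain ⟨S, hS, hS_mem, hout⟩ := exists_isCompact_le_neg_log hC hcub
  have hL_pos : ∀ q ∈ S, 0 < -Real.log (1 - q ^ 2) := fun q hq => by
    have := (hS_mem q hq).2
    exact lt_of_lt_of_le (by positivity) (sq_le_neg_log_one_sub_sq (hS_mem q hq).1)
  have hratio : ContinuousOn (fun q => f q / -Real.log (1 - q ^ 2)) S := by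
    refine (hcont.mono fun q hq => (hS_mem q hq).1).div (ContinuousOn.neg
      (ContinuousOn.log (by fun_prop) fun q hq => ?_)) fun q hq => (hL_pos q hq).ne'
    exact (sub_pos.mpr ((sq_lt_one_iff_abs_lt_one q).mpr (hS_mem q hq).1)).ne'
  rcases S.eq_empty_or_nonempty with hempty | hne
  · refine ⟨1 / 4, by norm_num, by norm_num, fun q hq => ?_⟩
    linarith [hout q hq (by simp [hempty])]
  obtain ⟨q₀, hq₀, hmax⟩ := hS.exists_isMaxOn hne hratio
  have hm : f q₀ / -Real.log (1 - q₀ ^ 2) < 1 / 2 := by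
    rw [div_lt_iff₀ (hL_pos q₀ hq₀)]
    linarith [hlt q₀ (hS_mem q₀ hq₀).1 (hS_mem q₀ hq₀).2]
  set m := f q₀ / -Real.log (1 - q₀ ^ 2)
  refine ⟨min (1 / 4) (1 / 2 - m), lt_min (by norm_num) (by linarith),
    lt_of_le_of_lt (min_le_left _ _) (by norm_num), fun q hq => ?_⟩
  have hL : 0 ≤ -Real.log (1 - q ^ 2) := (sq_nonneg q).trans (sq_le_neg_log_one_sub_sq hq)
  by_cases hqS : q ∈ S
  · have hqm : f q / -Real.log (1 - q ^ 2) ≤ m := hmax hqS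
    refine ((div_le_iff₀ (hL_pos q hqS)).mp hqm).trans (mul_le_mul_of_nonneg_right ?_ hL)
    linarith [min_le_right (1 / 4) (1 / 2 - m)]
  · refine (hout q hq hqS).trans (mul_le_mul_of_nonneg_right ?_ hL)
    linarith [min_le_left (1 / 4) (1 / 2 - m)]

lemma exists_pairRate_le_log {p : ℕ} (hp : 3 ≤ p) {s E E₀ z θ : ℝ} (hrsb : IsOneRSB p E₀ z θ)
    (hs : 0 < s) (hsp : 3 * s < p) (hE : E ^ 2 < (1 - 3 * (s / p)) * E₀ ^ 2) :
    ∃ c > 0, c < 1 / 2 ∧ ∀ q : ℝ, |q| < 1 →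
      pairRate p s E q ≤ (1 / 2 - c) * -Real.log (1 - q ^ 2) := by
  obtain ⟨C, hC, hcub⟩ := exists_pairRate_le_cubic hp E hs
  exact exists_le_mul_neg_log hC
    ((continuousOn_pairRate (by omega) E hs).mono fun q (hq : |q| < 1) => hq.le)
    (fun q hq => hcub q hq.le) fun q hq hq0 => pairRate_lt (by omega) hrsb hs hsp hE hq hq0
/-! ### Gaussian integrals of Gaussian weights -/

lemma integral_cexp_gaussianReal (c : ℂ) {D : ℝ} (hD : -1 < D) :
    ∫ x : ℝ, Complex.exp (c * x - D / 2 * x ^ 2) ∂(gaussianReal 0 1) =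
      ((√(1 + D))⁻¹ : ℝ) * Complex.exp (c ^ 2 / (2 * (1 + D))) := by
  have hD0 : 0 < 1 + D := by linarith
  have hD0' : (1 + D : ℂ) ≠ 0 := by exact_mod_cast hD0.ne'
  have := Real.pi_pos
  simp_rw [integral_gaussianReal_eq_integral_smul one_ne_zero, Complex.real_smul]
  have h1 : ∀ x : ℝ, (gaussianPDFReal 0 1 x : ℂ) * Complex.exp (c * x - D / 2 * x ^ 2) =
      ((√(2 * Real.pi))⁻¹ : ℝ) *
        Complex.exp ((-((1 + D) / 2 : ℝ) : ℂ) * x ^ 2 + c * x + 0) := fun x => by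
    rw [gaussianPDFReal_def]
    simp only [NNReal.coe_one, mul_one, sub_zero]
    rw [Complex.ofReal_mul, mul_assoc, Complex.ofReal_exp, ← Complex.exp_add]
    congr 2
    push_cast
    ring
  simp_rw [h1]
  rw [integral_const_mul, integral_cexp_quadratic (by simp; linarith), ← mul_assoc]
  congr 1
  · rw [neg_neg, ← Complex.ofReal_div, show (1 / 2 : ℂ) = ((1 / 2 : ℝ) : ℂ) by push_cast; rfl,
      ← Complex.ofReal_cpow (by positivity), ← Complex.ofReal_mul, ← Real.sqrt_eq_rpow]
    congr 1
    rw [show Real.pi / ((1 + D) / 2) = (2 * Real.pi) / (1 + D) by field_simp,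
      Real.sqrt_div (by positivity)]
    field_simp
  · congr 1
    push_cast
    field_simp
    ring

lemma integral_exp_gaussianReal (c : ℝ) {D : ℝ} (hD : -1 < D) :
    ∫ x : ℝ, Real.exp (c * x - D / 2 * x ^ 2) ∂(gaussianReal 0 1) =
      (√(1 + D))⁻¹ * Real.exp (c ^ 2 / (2 * (1 + D))) := by
  have := integral_cexp_gaussianReal c hD
  apply Complex.ofReal_injective
  rw [← integral_complex_ofReal]
  push_cast at this ⊢
  exact this

lemma integral_cexp_mul_I_gaussianReal (y : ℝ) :
    ∫ x : ℝ, Complex.exp ((x * y : ℝ) * Complex.I) ∂(gaussianReal 0 1) =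
      Complex.exp (-(1 / 2 * y ^ 2 : ℝ)) := by
  have h := charFun_gaussianReal (μ := 0) (v := 1) y
  rw [charFun_apply_real] at h
  simp only [NNReal.coe_one, Complex.ofReal_zero, mul_zero, zero_mul, zero_sub,
    Complex.ofReal_one, one_mul] at h
  convert h using 2
  · ext x
    congr 1
    push_cast
    ring
  · push_cast
    ring

/-- The Gaussian expectation `E exp(-((X - m)² + Y²)/2)` of a centred Gaussian pair `(X, Y)` with
`Var X = A`, `Var Y = D` and `Cov(X, Y) = B`. -/
def pairIntegral (A B D m : ℝ) : ℝ :=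
  (√((1 + A) * (1 + D) - B ^ 2))⁻¹ *
    Real.exp (-(1 / 2) * (m ^ 2 * (1 + D) / ((1 + A) * (1 + D) - B ^ 2)))

lemma integral_cexp_quadratic_right (m A B x : ℝ) {D : ℝ} (hD : 0 < 1 + D) :
    ∫ y : ℝ, Complex.exp (-(x * m : ℝ) * Complex.I -
        (1 / 2 * (A * x ^ 2 + 2 * B * (x * y) + D * y ^ 2) : ℝ)) ∂(gaussianReal 0 1) =
      ((√(1 + D))⁻¹ : ℝ) * Complex.exp ((-m * Complex.I) * x -
        (A - B ^ 2 / (1 + D) : ℝ) / 2 * x ^ 2) := by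
  have hD' : (1 + D : ℂ) ≠ 0 := by exact_mod_cast hD.ne'
  have hsplit : ∀ y : ℝ, Complex.exp (-(x * m : ℝ) * Complex.I -
      (1 / 2 * (A * x ^ 2 + 2 * B * (x * y) + D * y ^ 2) : ℝ)) =
        Complex.exp ((-m * Complex.I) * x - A / 2 * x ^ 2) *
        Complex.exp ((-(B * x : ℝ) : ℂ) * y - D / 2 * y ^ 2) := fun y => by
    rw [← Complex.exp_add]
    congr 1
    push_cast
    ring
  simp_rw [hsplit]
  rw [integral_const_mul, integral_cexp_gaussianReal _ (by linarith), mul_left_comm,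
    ← Complex.exp_add]
  congr 2
  push_cast
  field_simp
  ring

lemma integral_cexp_quadratic_eq_pairIntegral (m : ℝ) {A B D : ℝ}
    (hquad : ∀ x y : ℝ, 0 ≤ A * x ^ 2 + 2 * B * (x * y) + D * y ^ 2) :
    ∫ ζ : ℝ × ℝ, Complex.exp (-(ζ.1 * m : ℝ) * Complex.I -
        (1 / 2 * (A * ζ.1 ^ 2 + 2 * B * (ζ.1 * ζ.2) + D * ζ.2 ^ 2) : ℝ))
        ∂((gaussianReal 0 1).prod (gaussianReal 0 1)) = (pairIntegral A B D m : ℂ) := by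
  have hA : 0 ≤ A := by simpa using hquad 1 0
  have hD : 0 < 1 + D := by linarith [show 0 ≤ D by simpa using hquad 0 1]
  have hdisc : B ^ 2 ≤ A * D := by
    have h := discrim_le_zero (a := A) (b := 2 * B) (c := D) fun x => by
      linarith [hquad x 1]
    rw [discrim] at h
    linarith
  have hΔ : 0 < (1 + A) * (1 + D) - B ^ 2 := by nlinarith
  have hschur : 1 + (A - B ^ 2 / (1 + D)) = ((1 + A) * (1 + D) - B ^ 2) / (1 + D) := by
    field_simp
    ring
  have hint : Integrable (fun ζ : ℝ × ℝ => Complex.exp (-(ζ.1 * m : ℝ) * Complex.I -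
      (1 / 2 * (A * ζ.1 ^ 2 + 2 * B * (ζ.1 * ζ.2) + D * ζ.2 ^ 2) : ℝ)))
      ((gaussianReal 0 1).prod (gaussianReal 0 1)) := by
    refine Integrable.of_bound (C := 1) (by fun_prop) (ae_of_all _ fun ζ => ?_)
    rw [sub_eq_add_neg, Complex.exp_add, norm_mul, ← Complex.ofReal_neg,
      Complex.norm_exp_ofReal_mul_I, one_mul, ← Complex.ofReal_neg, Complex.norm_exp_ofReal,
      Real.exp_le_one_iff]
    linarith [hquad ζ.1 ζ.2]
  rw [integral_prod _ hint]
  simp only [integral_cexp_quadratic_right m A B _ hD]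
  have hschur_pos : 0 < 1 + (A - B ^ 2 / (1 + D)) := hschur ▸ div_pos hΔ hD
  rw [integral_const_mul, integral_cexp_gaussianReal _ (by linarith)]
  have hexp : (-(m : ℂ) * Complex.I) ^ 2 / (2 * (1 + ((A - B ^ 2 / (1 + D) : ℝ) : ℂ))) =
      ((-(1 / 2) * (m ^ 2 * (1 + D) / ((1 + A) * (1 + D) - B ^ 2)) : ℝ) : ℂ) := by
    rw [← Complex.ofReal_one, ← Complex.ofReal_add, hschur, mul_pow, Complex.I_sq]
    push_cast
    field_simp
  rw [hexp, ← Complex.ofReal_exp, ← Complex.ofReal_mul, ← Complex.ofReal_mul, ← mul_assoc,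
    ← mul_inv, ← Real.sqrt_mul hD.le, hschur, mul_div_cancel₀ _ hD.ne', pairIntegral]

section Blocks

variable {κ K : Type*} [Fintype κ] [NormedAddCommGroup K] [InnerProductSpace ℝ K]

lemma norm_sum_sq_of_pairwise_inner_eq_zero {v : κ → K} (hv : ∀ i j, i ≠ j → ⟪v i, v j⟫ = 0) :
    ‖∑ k, v k‖ ^ 2 = ∑ k, ‖v k‖ ^ 2 := by
  rw [← real_inner_self_eq_norm_sq, sum_inner]
  refine Finset.sum_congr rfl fun i _ => ?_
  rw [inner_sum, Finset.sum_eq_single i (fun j _ hj => hv i j hj.symm) (by simp),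
    real_inner_self_eq_norm_sq]

lemma norm_smul_add_smul_sq (a b : K) (x y : ℝ) :
    ‖x • a + y • b‖ ^ 2 = ‖a‖ ^ 2 * x ^ 2 + 2 * ⟪a, b⟫ * (x * y) + ‖b‖ ^ 2 * y ^ 2 := by
  rw [norm_add_sq_real, norm_smul, norm_smul, mul_pow, mul_pow, Real.norm_eq_abs,
    Real.norm_eq_abs, sq_abs, sq_abs, inner_smul_left, inner_smul_right, conj_trivial]
  ring

/-- The character whose average over independent standard Gaussian pairs `ζ` is the Gaussian
weight `exp(-½ ∑ k, ((⟪a k, g⟫ - m k)² + ⟪b k, g⟫²))`. -/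
def weightChar (a b : κ → K) (m : κ → ℝ) (g : K) (ζ : κ → ℝ × ℝ) : ℂ :=
  ∏ k, (Complex.exp (((ζ k).1 * (⟪a k, g⟫ - m k) : ℝ) * Complex.I) *
    Complex.exp (((ζ k).2 * ⟪b k, g⟫ : ℝ) * Complex.I))

lemma integral_weightChar (a b : κ → K) (m : κ → ℝ) (g : K) :
    ∫ ζ, weightChar a b m g ζ
        ∂(Measure.pi fun _ : κ => (gaussianReal 0 1).prod (gaussianReal 0 1)) =
      (Real.exp (-(1 / 2) * ∑ k, ((⟪a k, g⟫ - m k) ^ 2 + ⟪b k, g⟫ ^ 2)) : ℂ) := by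
  simp only [weightChar]
  rw [integral_fintype_prod_eq_prod (fun k (ζ : ℝ × ℝ) =>
    Complex.exp ((ζ.1 * (⟪a k, g⟫ - m k) : ℝ) * Complex.I) *
      Complex.exp ((ζ.2 * ⟪b k, g⟫ : ℝ) * Complex.I)), Finset.mul_sum, Real.exp_sum,
    Complex.ofReal_prod]
  refine Finset.prod_congr rfl fun k _ => ?_
  rw [integral_prod_mul (fun ζ : ℝ => Complex.exp ((ζ * (⟪a k, g⟫ - m k) : ℝ) * Complex.I))
    (fun ζ : ℝ => Complex.exp ((ζ * ⟪b k, g⟫ : ℝ) * Complex.I)),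
    integral_cexp_mul_I_gaussianReal, integral_cexp_mul_I_gaussianReal, ← Complex.exp_add,
    Complex.ofReal_exp]
  congr 1
  push_cast
  ring

variable [FiniteDimensional ℝ K] [MeasurableSpace K] [BorelSpace K]

lemma integrable_weightChar (a b : κ → K) (m : κ → ℝ) :
    Integrable (Function.uncurry (weightChar a b m)) ((stdGaussian K).prod
      (Measure.pi fun _ : κ => (gaussianReal 0 1).prod (gaussianReal 0 1))) := by
  refine Integrable.of_bound (C := 1) (Measurable.aestronglyMeasurable ?_)
    (ae_of_all _ fun x => ?_)
  · simp only [Function.uncurry_def, weightChar]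
    refine Finset.measurable_prod _ fun k _ => ?_
    fun_prop
  · simp only [Function.uncurry_def, weightChar, norm_prod, norm_mul,
      Complex.norm_exp_ofReal_mul_I, mul_one, Finset.prod_const_one, le_refl]

lemma integral_weightChar_stdGaussian (a b : κ → K) (m : κ → ℝ) (ζ : κ → ℝ × ℝ) :
    ∫ g, weightChar a b m g ζ ∂(stdGaussian K) =
      Complex.exp (-(∑ k, (ζ k).1 * m k : ℝ) * Complex.I -
        (1 / 2 * ‖∑ k, ((ζ k).1 • a k + (ζ k).2 • b k)‖ ^ 2 : ℝ)) := by
  have hchar : ∀ g, weightChar a b m g ζ = Complex.exp (-(∑ k, (ζ k).1 * m k : ℝ) * Complex.I) *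
      Complex.exp (⟪g, ∑ k, ((ζ k).1 • a k + (ζ k).2 • b k)⟫ * Complex.I) := fun g => by
    simp_rw [weightChar, ← Complex.exp_add]
    rw [← Complex.exp_sum, inner_sum, Complex.ofReal_sum, Complex.ofReal_sum, neg_mul,
      Finset.sum_mul, Finset.sum_mul, ← Finset.sum_neg_distrib, ← Finset.sum_add_distrib]
    congr 1
    refine Finset.sum_congr rfl fun k _ => ?_
    simp only [inner_add_right, inner_smul_right, real_inner_comm g]
    push_cast
    ring
  simp_rw [hchar]
  rw [integral_const_mul, ← charFun_apply, charFun_stdGaussian, ← Complex.exp_add]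
  congr 1
  push_cast
  ring

-- Linearise the squares by `weightChar`, integrate out `g` first, and use that the exponent then
-- splits over `k` because the planes spanned by `a k` and `b k` are orthogonal to each other.
lemma integral_exp_neg_sum_sq_eq_prod (a b : κ → K) (m : κ → ℝ)
    (haa : ∀ i j, i ≠ j → ⟪a i, a j⟫ = 0) (hab : ∀ i j, i ≠ j → ⟪a i, b j⟫ = 0)
    (hbb : ∀ i j, i ≠ j → ⟪b i, b j⟫ = 0) :
    ∫ g, Real.exp (-(1 / 2) * ∑ k, ((⟪a k, g⟫ - m k) ^ 2 + ⟪b k, g⟫ ^ 2)) ∂(stdGaussian K) =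
      ∏ k, pairIntegral (‖a k‖ ^ 2) ⟪a k, b k⟫ (‖b k‖ ^ 2) (m k) := by
  have hsplit : ∀ ζ : κ → ℝ × ℝ, ∫ g, weightChar a b m g ζ ∂(stdGaussian K) =
      ∏ k, Complex.exp (-((ζ k).1 * m k : ℝ) * Complex.I -
        (1 / 2 * (‖a k‖ ^ 2 * (ζ k).1 ^ 2 + 2 * ⟪a k, b k⟫ * ((ζ k).1 * (ζ k).2) +
          ‖b k‖ ^ 2 * (ζ k).2 ^ 2) : ℝ)) := fun ζ => by
    have horth : ∀ i j, i ≠ j →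
        ⟪(ζ i).1 • a i + (ζ i).2 • b i, (ζ j).1 • a j + (ζ j).2 • b j⟫ = 0 := fun i j hij => by
      simp [inner_add_left, inner_add_right, inner_smul_left, inner_smul_right,
        haa i j hij, hab i j hij, hbb i j hij, real_inner_comm (a j) (b i), hab j i hij.symm]
    rw [integral_weightChar_stdGaussian, norm_sum_sq_of_pairwise_inner_eq_zero horth,
      ← Complex.exp_sum]
    simp_rw [← norm_smul_add_smul_sq]
    congr 1
    push_cast
    rw [Finset.sum_sub_distrib, Finset.mul_sum, neg_mul, Finset.sum_mul, ← Finset.sum_neg_distrib]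
    simp only [neg_mul]
  apply Complex.ofReal_injective
  rw [← integral_complex_ofReal]
  simp_rw [← integral_weightChar a b m]
  rw [integral_integral_swap (integrable_weightChar a b m)]
  simp_rw [hsplit]
  rw [integral_fintype_prod_eq_prod (fun k (ζ : ℝ × ℝ) =>
    Complex.exp (-(ζ.1 * m k : ℝ) * Complex.I -
        (1 / 2 * (‖a k‖ ^ 2 * ζ.1 ^ 2 + 2 * ⟪a k, b k⟫ * (ζ.1 * ζ.2) +
          ‖b k‖ ^ 2 * ζ.2 ^ 2) : ℝ))), Complex.ofReal_prod]
  refine Finset.prod_congr rfl fun k _ => integral_cexp_quadratic_eq_pairIntegral _ fun x y => ?_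
  rw [← norm_smul_add_smul_sq]
  positivity

end Blocks

/-! ### Tensor powers -/

section Tensor

variable {p : ℕ} {ι : Type*}

/-- The elementary tensor `x₁ ⊗ ⋯ ⊗ x_p`, encoded by its coordinates in `EuclideanSpace` so that
the standard Gaussian measure on tensors is available. -/
def elemTensor (x : Fin p → EuclideanSpace ℝ ι) : EuclideanSpace ℝ (Fin p → ι) :=
  WithLp.toLp 2 fun j => ∏ l, x l (j l)

lemma elemTensor_apply (x : Fin p → EuclideanSpace ℝ ι) (j : Fin p → ι) :
    elemTensor x j = ∏ l, x l (j l) := rfl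

lemma elemTensor_update_apply (x : Fin p → EuclideanSpace ℝ ι) (i : Fin p)
    (u : EuclideanSpace ℝ ι) (j : Fin p → ι) :
    elemTensor (Function.update x i u) j = u (j i) * ∏ l ∈ Finset.univ \ {i}, x l (j l) := by
  have hupdate : (fun l => Function.update x i u l (j l)) =
      Function.update (fun l => x l (j l)) i (u (j i)) := by
    ext l
    by_cases h : l = i
    · subst h; simp
    · simp [h]
  rw [elemTensor_apply, hupdate, Finset.prod_update_of_mem (Finset.mem_univ i)]

lemma continuous_elemTensor :
    Continuous (elemTensor : (Fin p → EuclideanSpace ℝ ι) → EuclideanSpace ℝ (Fin p → ι)) := by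
  unfold elemTensor
  fun_prop

/-- The tensor power `e^{⊗p}`; the Hamiltonian is `⟪e^{⊗p}, g⟫` up to normalisation. -/
def tensorPow (p : ℕ) (e : EuclideanSpace ℝ ι) : EuclideanSpace ℝ (Fin p → ι) :=
  elemTensor fun _ => e

/-- The derivative at `e` of the tensor power. -/
def tensorDeriv (p : ℕ) (e : EuclideanSpace ℝ ι) :
    EuclideanSpace ℝ ι →ₗ[ℝ] EuclideanSpace ℝ (Fin p → ι) where
  toFun u := ∑ i, elemTensor (Function.update (fun _ => e) i u)
  map_add' u v := by
    rw [← Finset.sum_add_distrib]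
    refine Finset.sum_congr rfl fun i _ => ?_
    ext j
    simp only [PiLp.add_apply, elemTensor_update_apply, add_mul]
  map_smul' c u := by
    rw [Finset.smul_sum]
    refine Finset.sum_congr rfl fun i _ => ?_
    ext j
    simp only [PiLp.smul_apply, elemTensor_update_apply, smul_eq_mul, RingHom.id_apply, mul_assoc]

lemma tensorDeriv_apply (e u : EuclideanSpace ℝ ι) :
    tensorDeriv p e u = ∑ i, elemTensor (Function.update (fun _ => e) i u) := rfl

lemma continuous_tensorPow :
    Continuous (tensorPow p : EuclideanSpace ℝ ι → EuclideanSpace ℝ (Fin p → ι)) :=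
  continuous_elemTensor.comp (continuous_pi fun _ => continuous_id)

lemma tensorDeriv_self (e : EuclideanSpace ℝ ι) :
    tensorDeriv p e e = (p : ℝ) • tensorPow p e := by
  have hupdate : ∀ i : Fin p, Function.update (fun _ => e) i e = fun _ => e := fun i =>
    Function.update_eq_self i (fun _ => e)
  rw [tensorDeriv_apply, tensorPow]
  simp_rw [hupdate]
  rw [Finset.sum_const, Finset.card_univ, Fintype.card_fin, Nat.cast_smul_eq_nsmul]

lemma continuous_tensorDeriv [Finite ι] (u : EuclideanSpace ℝ ι) :
    Continuous fun e => tensorDeriv p e u := by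
  have := Fintype.ofFinite ι
  simp_rw [tensorDeriv_apply]
  refine continuous_finsetSum _ fun i _ => continuous_elemTensor.comp ?_
  exact (continuous_pi fun _ => continuous_id).update i continuous_const

variable [Fintype ι]

lemma inner_elemTensor (x y : Fin p → EuclideanSpace ℝ ι) :
    ⟪elemTensor x, elemTensor y⟫ = ∏ l, ⟪x l, y l⟫ := by
  classical
  simp only [PiLp.inner_apply, elemTensor_apply, RCLike.inner_apply, conj_trivial]
  rw [Finset.prod_univ_sum, Fintype.piFinset_univ]
  simp_rw [Finset.prod_mul_distrib]

lemma inner_tensorPow (e f : EuclideanSpace ℝ ι) :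
    ⟪tensorPow p e, tensorPow p f⟫ = ⟪e, f⟫ ^ p := by
  simp [tensorPow, inner_elemTensor]

lemma inner_elemTensor_update (e f u w : EuclideanSpace ℝ ι) (i k : Fin p) :
    ⟪elemTensor (Function.update (fun _ => e) i u), elemTensor (Function.update (fun _ => f) k w)⟫ =
      if k = i then ⟪e, f⟫ ^ (p - 1) * ⟪u, w⟫ else ⟪e, f⟫ ^ (p - 2) * (⟪u, f⟫ * ⟪e, w⟫) := by
  rw [inner_elemTensor, ← Finset.mul_prod_erase Finset.univ _ (Finset.mem_univ i)]
  split_ifs with h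
  · subst h
    rw [Finset.prod_congr rfl (g := fun _ => ⟪e, f⟫), Finset.prod_const,
      Finset.card_erase_of_mem (Finset.mem_univ k)]
    · simp [mul_comm]
    · intro l hl
      simp [Finset.ne_of_mem_erase hl]
  · have hk : k ∈ Finset.univ.erase i := by simp [h]
    rw [← Finset.mul_prod_erase _ _ hk, Finset.prod_congr rfl (g := fun _ => ⟪e, f⟫),
      Finset.prod_const, Finset.card_erase_of_mem hk, Finset.card_erase_of_mem (Finset.mem_univ i)]
    · simp only [Function.update_self, Function.update_of_ne h,
        Function.update_of_ne (Ne.symm h), Finset.card_univ, Fintype.card_fin, Nat.sub_sub]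
      ring
    · intro l hl
      simp [Finset.ne_of_mem_erase hl, Finset.ne_of_mem_erase (Finset.mem_of_mem_erase hl)]

lemma inner_tensorDeriv (e f u w : EuclideanSpace ℝ ι) :
    ⟪tensorDeriv p e u, tensorDeriv p f w⟫ =
      p * ⟪e, f⟫ ^ (p - 1) * ⟪u, w⟫ + p * (p - 1 : ℝ) * ⟪e, f⟫ ^ (p - 2) * (⟪u, f⟫ * ⟪e, w⟫) := by
  rw [tensorDeriv_apply, tensorDeriv_apply, sum_inner]
  simp_rw [inner_sum, inner_elemTensor_update]
  have hrow : ∀ i : Fin p, ∑ k : Fin p, (if k = i then ⟪e, f⟫ ^ (p - 1) * ⟪u, w⟫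
      else ⟪e, f⟫ ^ (p - 2) * (⟪u, f⟫ * ⟪e, w⟫)) =
      ⟪e, f⟫ ^ (p - 1) * ⟪u, w⟫ + (p - 1 : ℝ) * (⟪e, f⟫ ^ (p - 2) * (⟪u, f⟫ * ⟪e, w⟫)) := by
    intro i
    rw [← Finset.add_sum_erase _ _ (Finset.mem_univ i), if_pos rfl,
      Finset.sum_congr rfl (g := fun _ => ⟪e, f⟫ ^ (p - 2) * (⟪u, f⟫ * ⟪e, w⟫)),
      Finset.sum_const, Finset.card_erase_of_mem (Finset.mem_univ i), nsmul_eq_mul,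
      Finset.card_univ, Fintype.card_fin, Nat.cast_sub (by have := i.2; omega), Nat.cast_one]
    intro k hk
    rw [if_neg (Finset.ne_of_mem_erase hk)]
  simp_rw [hrow]
  rw [Finset.sum_const, Finset.card_univ, Fintype.card_fin, nsmul_eq_mul]
  ring

lemma inner_tensorDeriv_eq_zero (e f : EuclideanSpace ℝ ι) {u w : EuclideanSpace ℝ ι}
    (huw : ⟪u, w⟫ = 0) (hew : ⟪e, w⟫ = 0) : ⟪tensorDeriv p e u, tensorDeriv p f w⟫ = 0 := by
  rw [inner_tensorDeriv, huw, hew]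
  ring

/-- Gaussian weight favouring the points `e` at which the gradient of `⟪e^{⊗p}, g⟫` is
close to `c • e`. -/
def gradWeight (p : ℕ) (s c : ℝ) (e : EuclideanSpace ℝ ι) (g : EuclideanSpace ℝ (Fin p → ι)) : ℝ :=
  Real.exp (-(1 / 2) * (‖(tensorDeriv p e).adjoint g - c • e‖ ^ 2 / s))

lemma inner_adjoint_sub (c : ℝ) (e u : EuclideanSpace ℝ ι) (g : EuclideanSpace ℝ (Fin p → ι)) :
    ⟪u, (tensorDeriv p e).adjoint g - c • e⟫ = ⟪tensorDeriv p e u, g⟫ - c * ⟪u, e⟫ := by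
  rw [inner_sub_right, LinearMap.adjoint_inner_right, inner_smul_right]

lemma gradWeight_eq_exp_sum {κ : Type*} [Fintype κ] (b : OrthonormalBasis κ ℝ (EuclideanSpace ℝ ι))
    {s : ℝ} (hs : 0 ≤ s) (c : ℝ) (e : EuclideanSpace ℝ ι) (g : EuclideanSpace ℝ (Fin p → ι)) :
    gradWeight p s c e g = Real.exp (-(1 / 2) *
      ∑ k, (⟪(√s)⁻¹ • tensorDeriv p e (b k), g⟫ - (√s)⁻¹ * c * ⟪b k, e⟫) ^ 2) := by
  rw [gradWeight, ← b.sum_sq_inner_right, Finset.sum_div]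
  congr 2
  refine Finset.sum_congr rfl fun k _ => ?_
  rw [inner_adjoint_sub, inner_smul_left, conj_trivial, mul_assoc, ← mul_sub, mul_pow, inv_pow,
    Real.sq_sqrt hs, div_eq_inv_mul]

lemma continuous_gradWeight {s : ℝ} (hs : 0 ≤ s) (c : ℝ) :
    Continuous fun x : EuclideanSpace ℝ ι × EuclideanSpace ℝ (Fin p → ι) =>
      gradWeight p s c x.1 x.2 := by
  classical
  simp_rw [gradWeight_eq_exp_sum (EuclideanSpace.basisFun ι ℝ) hs]
  have h := fun i => (continuous_tensorDeriv (p := p) (EuclideanSpace.basisFun ι ℝ i)).comp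
    (continuous_fst (X := EuclideanSpace ℝ ι) (Y := EuclideanSpace ℝ (Fin p → ι)))
  simp only [Function.comp_def] at h
  fun_prop

lemma gradWeight_pos (s c : ℝ) (e : EuclideanSpace ℝ ι) (g : EuclideanSpace ℝ (Fin p → ι)) :
    0 < gradWeight p s c e g := Real.exp_pos _

lemma gradWeight_le_one {s : ℝ} (hs : 0 ≤ s) (c : ℝ) (e : EuclideanSpace ℝ ι)
    (g : EuclideanSpace ℝ (Fin p → ι)) : gradWeight p s c e g ≤ 1 := by
  rw [gradWeight, Real.exp_le_one_iff, neg_mul, neg_nonpos]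
  positivity

end Tensor

/-! ### One- and two-point functions of the weight -/

/-- Expectation of the weight at a unit vector of `ℝ^{m+1}`, in degree `P`. -/
def onePoint (P : ℝ) (m : ℕ) (s c : ℝ) : ℝ :=
  (√(1 + P ^ 2 / s))⁻¹ * Real.exp (-(1 / 2) * (c ^ 2 / (s + P ^ 2))) * (√(1 + P / s))⁻¹ ^ m

/-- Expectation of the product of the weights at two unit vectors of `ℝ^{n+2}`, in terms of the
parameters `(a, x) = (q ^ (p - 2), q ^ 2)` of their overlap `q`. -/
def twoPoint (P : ℝ) (n : ℕ) (s c a x : ℝ) : ℝ :=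
  (√(planeDet P s a x / s ^ 2))⁻¹ *
    Real.exp (-(c ^ 2 * (tangVar P a x + s) / planeDet P s a x)) *
    (√(planeDet P s (-a) x / s ^ 2))⁻¹ * (√((1 + P / s) ^ 2 - (P / s) ^ 2 * (a ^ 2 * x)))⁻¹ ^ n

/-- Subexponential prefactor of the normalised two-point function. -/
def overlapPref (P s a x : ℝ) : ℝ :=
  (1 - (P / (P + s)) ^ 2 * (a ^ 2 * x)) * ((P + s) * (P ^ 2 + s)) /
    √(planeDet P s a x * planeDet P s (-a) x)

section Points

variable {P s a x : ℝ}

lemma overlapPref_zero (hP : 0 ≤ P) (hs : 0 < s) : overlapPref P s 0 0 = 1 := by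
  have hdet : planeDet P s 0 0 = (P + s) * (P ^ 2 + s) := by
    unfold planeDet tangVar
    ring
  have hpos : 0 < (P + s) * (P ^ 2 + s) := by positivity
  rw [overlapPref, neg_zero, hdet, Real.sqrt_mul_self hpos.le, mul_zero, mul_zero, sub_zero,
    one_mul, div_self hpos.ne']

lemma IsOverlapPair.overlapPref_nonneg (h : IsOverlapPair P a x) (hP : 0 ≤ P) (hs : 0 < s) :
    0 ≤ overlapPref P s a x := by
  have := (h.one_sub_pos hP hs).le
  unfold overlapPref
  positivity

lemma IsOverlapPair.overlapPref_le (h : IsOverlapPair P a x) (hP : 1 ≤ P) (hs : 0 < s) :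
    overlapPref P s a x ≤ (P + s) * (P ^ 2 + s) / s ^ 2 := by
  have hsqrt : s ^ 2 ≤ √(planeDet P s a x * planeDet P s (-a) x) := by
    apply Real.le_sqrt_of_sq_le
    rw [pow_two (s ^ 2)]
    exact mul_le_mul (h.sq_le_planeDet hP hs.le) (h.neg.sq_le_planeDet hP hs.le) (by positivity)
      (h.planeDet_pos hP hs).le
  have hx := h.nonneg
  refine div_le_div₀ (by positivity) (mul_le_of_le_one_left (by positivity) ?_) (by positivity)
    hsqrt
  linarith [show 0 ≤ (P / (P + s)) ^ 2 * (a ^ 2 * x) by positivity]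

lemma onePoint_sq (hP : 0 ≤ P) (hs : 0 < s) (m : ℕ) (c : ℝ) :
    onePoint P m s c ^ 2 =
      s / (P ^ 2 + s) * Real.exp (-(c ^ 2 / (P ^ 2 + s))) * (s / (P + s)) ^ m := by
  have hsqrt : ∀ Q : ℝ, 0 ≤ Q → (√(1 + Q / s))⁻¹ ^ 2 = s / (Q + s) := fun Q hQ => by
    rw [inv_pow, Real.sq_sqrt (by positivity)]
    field_simp
    ring
  rw [onePoint, mul_pow, mul_pow, ← pow_mul, mul_comm m, pow_mul, hsqrt P hP, hsqrt _ (sq_nonneg P),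
    ← Real.exp_nat_mul, add_comm s]
  congr 3
  push_cast
  ring

lemma IsOverlapPair.exp_mul_overlapRate (h : IsOverlapPair P a x) (hP : 0 ≤ P) (hs : 0 < s) (E : ℝ)
    (N : ℕ) :
    Real.exp (N * overlapRate P s E a x) = (√(1 - (P / (P + s)) ^ 2 * (a ^ 2 * x)))⁻¹ ^ N *
      Real.exp (N * (P * E) ^ 2 / (P ^ 2 + s)) *
      Real.exp (-(N * (P * E) ^ 2 * (tangVar P a x + s) / planeDet P s a x)) := by
  have hy := h.one_sub_pos hP hs
  rw [← Real.exp_log (Real.sqrt_pos.mpr hy), ← Real.exp_neg, ← Real.exp_nat_mul, ← Real.exp_add,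
    ← Real.exp_add, Real.log_sqrt hy.le, overlapRate, planeEnergy]
  congr 1
  ring

lemma IsOverlapPair.twoPoint_eq (h : IsOverlapPair P a x) (hP : 1 ≤ P) (hs : 0 < s) (E : ℝ)
    (n : ℕ) :
    twoPoint P n s (P * E * √(n + 2)) a x = onePoint P (n + 1) s (P * E * √(n + 2)) ^ 2 *
      (overlapPref P s a x * Real.exp ((n + 2) * overlapRate P s E a x)) := by
  have hP0 : 0 < P := by linarith
  have hD := h.planeDet_pos hP hs
  have hD' := h.neg.planeDet_pos hP hs
  have hy := h.one_sub_pos hP0.le hs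
  have hc : (P * E * √(n + 2)) ^ 2 = (n + 2) * (P * E) ^ 2 := by
    rw [mul_pow, Real.sq_sqrt (by positivity)]
    ring
  have hrate := h.exp_mul_overlapRate hP0.le hs E (n + 2)
  push_cast at hrate
  have htransverse : (1 + P / s) ^ 2 - (P / s) ^ 2 * (a ^ 2 * x) =
      ((P + s) / s) ^ 2 * (1 - (P / (P + s)) ^ 2 * (a ^ 2 * x)) := by
    field_simp
    ring
  rw [onePoint_sq hP0.le hs, hrate, twoPoint, overlapPref, hc, htransverse,
    Real.sqrt_mul (by positivity), Real.sqrt_sq (by positivity), Real.sqrt_mul hD.le,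
    Real.sqrt_div hD.le, Real.sqrt_div hD'.le, Real.sqrt_sq hs.le, Real.exp_neg ((n + 2) * _ / _),
    pow_succ (s / (P + s)), pow_add _ n 2, inv_pow (√(1 - _)) 2, Real.sq_sqrt hy.le, mul_inv,
    mul_pow, inv_div]
  have := Real.sqrt_pos.mpr hD
  have := Real.sqrt_pos.mpr hD'
  generalize 1 - (P / (P + s)) ^ 2 * (a ^ 2 * x) = y at *
  have := Real.sqrt_pos.mpr hy
  field_simp
  rw [← mul_pow, div_mul_div_comm, mul_one]

end Points

section Frames

lemma exists_orthonormalBasis_option {m : ℕ} {e : EuclideanSpace ℝ (Fin (m + 1))}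
    (he : ‖e‖ = 1) :
    ∃ b : OrthonormalBasis (Option (Fin m)) ℝ (EuclideanSpace ℝ (Fin (m + 1))), b none = e := by
  have hv : Orthonormal ℝ (Set.domRestrict ({none} : Set (Option (Fin m))) fun _ => e) :=
    ⟨fun _ => he, fun i j hij => absurd (Subsingleton.elim i j) hij⟩
  obtain ⟨b, hb⟩ := hv.exists_orthonormalBasis_extension_of_card_eq (by simp)
  exact ⟨b, hb none rfl⟩

variable {n : ℕ} {e f : EuclideanSpace ℝ (Fin (n + 2))}

lemma exists_orthonormalBasis_bool_sum {u : EuclideanSpace ℝ (Fin (n + 2))}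
    (he : ‖e‖ = 1) (hu : ‖u‖ = 1) (heu : ⟪e, u⟫ = 0) :
    ∃ b : OrthonormalBasis (Bool ⊕ Fin n) ℝ (EuclideanSpace ℝ (Fin (n + 2))),
      b (Sum.inl false) = e ∧ b (Sum.inl true) = u := by
  set v : Bool ⊕ Fin n → EuclideanSpace ℝ (Fin (n + 2)) :=
    fun k => if k = Sum.inl false then e else u with hvdef
  have hv : Orthonormal ℝ (Set.domRestrict (Set.range (Sum.inl : Bool → Bool ⊕ Fin n)) v) := by
    refine ⟨?_, ?_⟩
    · rintro ⟨_, ⟨i, rfl⟩⟩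
      cases i <;> simp [hvdef, Set.domRestrict, he, hu]
    · rintro ⟨_, ⟨i, rfl⟩⟩ ⟨_, ⟨j, rfl⟩⟩ hij
      cases i <;> cases j <;>
        simp [hvdef, Set.domRestrict, heu, real_inner_comm e u] at hij ⊢
  obtain ⟨b, hb⟩ := hv.exists_orthonormalBasis_extension_of_card_eq (by simp [add_comm])
  exact ⟨b, by rw [hb _ ⟨false, rfl⟩]; simp [hvdef], by rw [hb _ ⟨true, rfl⟩]; simp [hvdef]⟩

lemma exists_orthonormal_add_smul (he : ‖e‖ = 1) (hf : ‖f‖ = 1) (hq : |⟪e, f⟫| < 1) :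
    ∃ u, ‖u‖ = 1 ∧ ⟪e, u⟫ = 0 ∧ f = ⟪e, f⟫ • e + √(1 - ⟪e, f⟫ ^ 2) • u := by
  have ht : 0 < √(1 - ⟪e, f⟫ ^ 2) :=
    Real.sqrt_pos.mpr (by linarith [(sq_lt_one_iff_abs_lt_one _).mpr hq])
  have hnorm : ‖f - ⟪e, f⟫ • e‖ ^ 2 = 1 - ⟪e, f⟫ ^ 2 := by
    rw [norm_sub_sq_real, norm_smul, mul_pow, inner_smul_right, real_inner_comm, he, hf,
      Real.norm_eq_abs, sq_abs]
    ring
  refine ⟨(√(1 - ⟪e, f⟫ ^ 2))⁻¹ • (f - ⟪e, f⟫ • e), ?_, ?_, ?_⟩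
  · rw [norm_smul, ← hnorm, Real.sqrt_sq (norm_nonneg _), norm_inv, norm_norm,
      inv_mul_cancel₀ (by rw [← Real.sqrt_sq (norm_nonneg _), hnorm]; exact ht.ne')]
  · rw [inner_smul_right, inner_sub_right, inner_smul_right, real_inner_self_eq_norm_sq, he]
    ring
  · rw [smul_smul, mul_inv_cancel₀ ht.ne', one_smul]
    abel

lemma exists_orthonormalBasis_reflected
    (b : OrthonormalBasis (Bool ⊕ Fin n) ℝ (EuclideanSpace ℝ (Fin (n + 2)))) {q t : ℝ}
    (hqt : q ^ 2 + t ^ 2 = 1) :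
    ∃ b' : OrthonormalBasis (Bool ⊕ Fin n) ℝ (EuclideanSpace ℝ (Fin (n + 2))),
      b' (Sum.inl false) = q • b (Sum.inl false) + t • b (Sum.inl true) ∧
      b' (Sum.inl true) = t • b (Sum.inl false) - q • b (Sum.inl true) ∧
      ∀ i, b' (Sum.inr i) = b (Sum.inr i) := by
  have hb := orthonormal_iff_ite.mp b.orthonormal
  have hv : Orthonormal ℝ (Set.domRestrict Set.univ fun k : Bool ⊕ Fin n =>
      Sum.elim (fun i : Bool => if i then t • b (Sum.inl false) - q • b (Sum.inl true)
        else q • b (Sum.inl false) + t • b (Sum.inl true)) (fun i => b (Sum.inr i)) k) := by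
    classical
    rw [orthonormal_iff_ite]
    rintro ⟨i | i, -⟩ ⟨j | j, -⟩
    · cases i <;> cases j <;>
        simp [Set.domRestrict, inner_add_left, inner_add_right, inner_sub_left, inner_sub_right,
          inner_smul_left, inner_smul_right, hb, -inner_self_eq_norm_sq_to_K] <;> linarith
    · cases i <;> simp [Set.domRestrict, inner_add_left, inner_sub_left, inner_smul_left, hb]
    · cases j <;> simp [Set.domRestrict, inner_add_right, inner_sub_right, inner_smul_right, hb]
    · simp [Set.domRestrict, hb]
  obtain ⟨b', hb'⟩ := hv.exists_orthonormalBasis_extension_of_card_eq (by simp [add_comm])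
  exact ⟨b', hb' _ trivial, hb' _ trivial, fun i => hb' _ trivial⟩

/-- Two orthonormal bases that differ by the reflection with matrix `!![q, t; t, -q]` in the plane
of their first two vectors. -/
structure IsReflectedBasis
    (b b' : OrthonormalBasis (Bool ⊕ Fin n) ℝ (EuclideanSpace ℝ (Fin (n + 2)))) (q t : ℝ) :
    Prop where
  inl_false : b' (Sum.inl false) = q • b (Sum.inl false) + t • b (Sum.inl true)
  inl_true : b' (Sum.inl true) = t • b (Sum.inl false) - q • b (Sum.inl true)
  inr : ∀ i, b' (Sum.inr i) = b (Sum.inr i)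

lemma exists_isReflectedBasis (he : ‖e‖ = 1) (hf : ‖f‖ = 1) (hq : |⟪e, f⟫| < 1) :
    ∃ b b' : OrthonormalBasis (Bool ⊕ Fin n) ℝ (EuclideanSpace ℝ (Fin (n + 2))),
      IsReflectedBasis b b' ⟪e, f⟫ (√(1 - ⟪e, f⟫ ^ 2)) ∧
      b (Sum.inl false) = e ∧ b' (Sum.inl false) = f := by
  have hq2 := (sq_lt_one_iff_abs_lt_one _).mpr hq
  obtain ⟨u, hu, heu, hfu⟩ := exists_orthonormal_add_smul he hf hq
  obtain ⟨b, hbe, hbu⟩ := exists_orthonormalBasis_bool_sum he hu heu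
  obtain ⟨b', hfalse, htrue, hinr⟩ := exists_orthonormalBasis_reflected b
    (q := ⟪e, f⟫) (t := √(1 - ⟪e, f⟫ ^ 2)) (by rw [Real.sq_sqrt (by linarith)]; ring)
  exact ⟨b, b', ⟨hfalse, htrue, hinr⟩, hbe, by rw [hfalse, hbe, hbu, ← hfu]⟩

section Reflected

variable {b b' : OrthonormalBasis (Bool ⊕ Fin n) ℝ (EuclideanSpace ℝ (Fin (n + 2)))} {q t : ℝ}

lemma IsReflectedBasis.inner_eq (h : IsReflectedBasis b b' q t) (k l : Bool ⊕ Fin n) :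
    ⟪b k, b' l⟫ = Sum.elim
      (fun i => Sum.elim (fun j => if i then if j then -q else t else if j then t else q)
        (fun _ => (0 : ℝ)) k)
      (fun i => if k = Sum.inr i then 1 else 0) l := by
  have hb := orthonormal_iff_ite.mp b.orthonormal
  rcases l with (_ | _) | j
  · rw [h.inl_false]
    rcases k with (_ | _) | i <;>
      simp [inner_add_right, inner_smul_right, hb, -inner_self_eq_norm_sq_to_K]
  · rw [h.inl_true]
    rcases k with (_ | _) | i <;>
      simp [inner_sub_right, inner_smul_right, hb, -inner_self_eq_norm_sq_to_K]
  · rw [h.inr, hb]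
    rfl

lemma IsReflectedBasis.inner_comm (h : IsReflectedBasis b b' q t) (k l : Bool ⊕ Fin n) :
    ⟪b k, b' l⟫ = ⟪b l, b' k⟫ := by
  rw [h.inner_eq, h.inner_eq]
  rcases k with (_ | _) | i <;> rcases l with (_ | _) | j <;> simp [eq_comm]

end Reflected

end Frames

section Exchangeable

variable {ι K : Type*} [NormedAddCommGroup K] [InnerProductSpace ℝ K] {X Y : Bool ⊕ ι → K}

/-- The covariances of two families of linear forms on `K` that are orthogonal, have equal norms
and interact symmetrically, the interaction being diagonal outside the plane `Sum.inl`. -/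
structure IsExchangeable (X Y : Bool ⊕ ι → K) : Prop where
  inner_eq : ∀ k l, ⟪Y k, Y l⟫ = ⟪X k, X l⟫
  orthogonal : ∀ k l, k ≠ l → ⟪X k, X l⟫ = 0
  symm : ∀ k l, ⟪Y k, X l⟫ = ⟪X k, Y l⟫
  diagonal : ∀ k i, k ≠ Sum.inr i → ⟪X k, Y (Sum.inr i)⟫ = 0

lemma IsExchangeable.smul (h : IsExchangeable X Y) (r : ℝ) :
    IsExchangeable (fun k => r • X k) (fun k => r • Y k) where
  inner_eq k l := by simp only [inner_smul_left, inner_smul_right, h.inner_eq]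
  orthogonal k l hkl := by
    rw [inner_smul_left, inner_smul_right, h.orthogonal k l hkl, mul_zero, mul_zero]
  symm k l := by simp only [inner_smul_left, inner_smul_right, h.symm]
  diagonal k i hki := by
    rw [inner_smul_left, inner_smul_right, h.diagonal k i hki, mul_zero, mul_zero]

lemma IsExchangeable.diagonal' (h : IsExchangeable X Y) {k : Bool ⊕ ι} {i : ι}
    (hki : k ≠ Sum.inr i) : ⟪X (Sum.inr i), Y k⟫ = 0 := by
  rw [← h.symm, real_inner_comm, h.diagonal k i hki]

/-- The forms obtained from `X` and `Y` by passing to normalised sums (index `Sum.inl false`) and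
differences (index `Sum.inl true`) in the plane. The value `j` selects one form in each of the
mutually orthogonal pairs of forms that result. -/
def symmBlock (X Y : Bool ⊕ ι → K) (j : Bool) : Bool ⊕ ι → K :=
  Sum.elim
    (fun i => (√2)⁻¹ • if i then X (Sum.inl j) - Y (Sum.inl j) else X (Sum.inl j) + Y (Sum.inl j))
    (fun i => if j then Y (Sum.inr i) else X (Sum.inr i))

lemma IsExchangeable.inner_symmBlock_eq_zero (h : IsExchangeable X Y) (j j' : Bool)
    {k l : Bool ⊕ ι} (hkl : k ≠ l) : ⟪symmBlock X Y j k, symmBlock X Y j' l⟫ = 0 := by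
  rcases k with k | k <;> rcases l with l | l
  · rcases k with _ | _ <;> rcases l with _ | _ <;> first | exact absurd rfl hkl | skip
    all_goals
      simp only [symmBlock, Sum.elim_inl, if_true, Bool.false_eq_true, if_false, inner_smul_left,
        inner_smul_right, inner_add_left, inner_add_right, inner_sub_left, inner_sub_right,
        h.inner_eq, h.symm, conj_trivial]
      ring
  · cases j' <;> cases k <;>
      simp [symmBlock, inner_smul_left, inner_add_left, inner_sub_left, h.inner_eq, h.symm,
        h.orthogonal, h.diagonal]
  · cases j <;> cases l <;>
      simp [symmBlock, inner_smul_right, inner_add_right, inner_sub_right, h.inner_eq, h.symm,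
        h.orthogonal, h.diagonal']
  · cases j <;> cases j' <;>
      simp [symmBlock, h.inner_eq, h.symm, h.orthogonal _ _ hkl, h.diagonal _ _ hkl]

lemma IsExchangeable.inner_symmBlock_inl (h : IsExchangeable X Y) (i j j' : Bool) :
    ⟪symmBlock X Y j (Sum.inl i), symmBlock X Y j' (Sum.inl i)⟫ =
      ⟪X (Sum.inl j), X (Sum.inl j')⟫ +
        (if i then -1 else 1) * ⟪X (Sum.inl j), Y (Sum.inl j')⟫ := by
  have hsqrt : (√2)⁻¹ * (√2)⁻¹ = (2 : ℝ)⁻¹ := by rw [← mul_inv, Real.mul_self_sqrt zero_le_two]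
  rw [symmBlock, symmBlock, Sum.elim_inl, Sum.elim_inl]
  cases i <;>
  · simp only [inner_smul_left, inner_smul_right, inner_add_left,
      inner_add_right, inner_sub_left, inner_sub_right, h.inner_eq, h.symm, conj_trivial, if_true,
      Bool.false_eq_true, if_false]
    first
    | linear_combination
        2 * (⟪X (Sum.inl j), X (Sum.inl j')⟫ + ⟪X (Sum.inl j), Y (Sum.inl j')⟫) * hsqrt
    | linear_combination
        2 * (⟪X (Sum.inl j), X (Sum.inl j')⟫ - ⟪X (Sum.inl j), Y (Sum.inl j')⟫) * hsqrt

variable [Fintype ι] [DecidableEq ι]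

lemma sum_symmBlock (X Y : Bool ⊕ ι → K) (m : ℝ) (g : K) :
    ∑ k, ((⟪symmBlock X Y false k, g⟫ - (Pi.single (Sum.inl false) (√2 * m) : Bool ⊕ ι → ℝ) k) ^ 2 +
        ⟪symmBlock X Y true k, g⟫ ^ 2) =
      ∑ k, (⟪X k, g⟫ - (Pi.single (Sum.inl false) m : Bool ⊕ ι → ℝ) k) ^ 2 +
        ∑ k, (⟪Y k, g⟫ - (Pi.single (Sum.inl false) m : Bool ⊕ ι → ℝ) k) ^ 2 := by
  have hsqrt : (√2)⁻¹ ^ 2 = (2 : ℝ)⁻¹ := by rw [inv_pow, Real.sq_sqrt zero_le_two]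
  have hmean : √2 * m = (√2)⁻¹ * (2 * m) := by
    rw [← mul_assoc, inv_mul_eq_div, Real.div_sqrt]
  simp only [Fintype.sum_sum_type, Fintype.sum_bool, symmBlock, Sum.elim_inl, Sum.elim_inr,
    if_true, Bool.false_eq_true, if_false, inner_smul_left, inner_add_left, inner_sub_left,
    conj_trivial, Finset.sum_add_distrib, Pi.single_apply, Sum.inl.injEq, reduceCtorEq, sub_zero,
    hmean, ← mul_sub, mul_pow, hsqrt]
  ring

variable [FiniteDimensional ℝ K] [MeasurableSpace K] [BorelSpace K]

lemma IsExchangeable.integral_exp (h : IsExchangeable X Y) (m : ℝ) :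
    ∫ g, Real.exp (-(1 / 2) * (
        ∑ k, (⟪X k, g⟫ - (Pi.single (Sum.inl false) m : Bool ⊕ ι → ℝ) k) ^ 2 +
        ∑ k, (⟪Y k, g⟫ - (Pi.single (Sum.inl false) m : Bool ⊕ ι → ℝ) k) ^ 2)) ∂(stdGaussian K) =
      pairIntegral (‖X (Sum.inl false)‖ ^ 2 + ⟪X (Sum.inl false), Y (Sum.inl false)⟫)
        ⟪X (Sum.inl false), Y (Sum.inl true)⟫
        (‖X (Sum.inl true)‖ ^ 2 + ⟪X (Sum.inl true), Y (Sum.inl true)⟫) (√2 * m) *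
      pairIntegral (‖X (Sum.inl false)‖ ^ 2 - ⟪X (Sum.inl false), Y (Sum.inl false)⟫)
        (-⟪X (Sum.inl false), Y (Sum.inl true)⟫)
        (‖X (Sum.inl true)‖ ^ 2 - ⟪X (Sum.inl true), Y (Sum.inl true)⟫) 0 *
      ∏ i, pairIntegral (‖X (Sum.inr i)‖ ^ 2) ⟪X (Sum.inr i), Y (Sum.inr i)⟫
        (‖X (Sum.inr i)‖ ^ 2) 0 := by
  simp_rw [← sum_symmBlock]
  rw [integral_exp_neg_sum_sq_eq_prod _ _ _ (fun _ _ => h.inner_symmBlock_eq_zero _ _)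
    (fun _ _ => h.inner_symmBlock_eq_zero _ _) (fun _ _ => h.inner_symmBlock_eq_zero _ _),
    Fintype.prod_sum_type, Fintype.prod_bool,
    mul_comm (pairIntegral _ _ _ _) (pairIntegral _ _ _ _)]
  simp only [← real_inner_self_eq_norm_sq, h.inner_symmBlock_inl]
  simp [symmBlock, h.inner_eq, h.orthogonal, sub_eq_add_neg, -inner_self_eq_norm_sq_to_K]

end Exchangeable

lemma norm_inv_sqrt_smul_sq {K : Type*} [SeminormedAddCommGroup K] [NormedSpace ℝ K] {s : ℝ}
    (hs : 0 ≤ s) (x : K) : ‖(√s)⁻¹ • x‖ ^ 2 = ‖x‖ ^ 2 / s := by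
  rw [norm_smul, mul_pow, Real.norm_eq_abs, sq_abs, inv_pow, Real.sq_sqrt hs, inv_mul_eq_div]

lemma pairIntegral_zero (A m : ℝ) :
    pairIntegral A 0 0 m = (√(1 + A))⁻¹ * Real.exp (-(1 / 2) * (m ^ 2 / (1 + A))) := by
  rw [pairIntegral, add_zero, mul_one, mul_one, zero_pow two_ne_zero, sub_zero]

section TensorCovariance

variable {p : ℕ} {ι κ : Type*} [Fintype ι] [Fintype κ]

lemma inner_tensorDeriv_basis [DecidableEq κ] (b : OrthonormalBasis κ ℝ (EuclideanSpace ℝ ι))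
    (k₀ k l : κ) :
    ⟪tensorDeriv p (b k₀) (b k), tensorDeriv p (b k₀) (b l)⟫ =
      if k = l then (if k = k₀ then (p : ℝ) ^ 2 else p) else 0 := by
  have hb := orthonormal_iff_ite.mp b.orthonormal
  simp only [inner_tensorDeriv, hb, if_true, one_pow]
  split_ifs <;> simp_all [eq_comm]
  ring

lemma norm_tensorDeriv_basis_sq [DecidableEq κ] (b : OrthonormalBasis κ ℝ (EuclideanSpace ℝ ι))
    (k₀ k : κ) :
    ‖tensorDeriv p (b k₀) (b k)‖ ^ 2 = if k = k₀ then (p : ℝ) ^ 2 else p := by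
  rw [← real_inner_self_eq_norm_sq, inner_tensorDeriv_basis, if_pos rfl]

lemma integral_gradWeight {m : ℕ} {s : ℝ} (hs : 0 < s) (c : ℝ)
    {e : EuclideanSpace ℝ (Fin (m + 1))} (he : ‖e‖ = 1) :
    ∫ g, gradWeight p s c e g ∂(stdGaussian (EuclideanSpace ℝ (Fin p → Fin (m + 1)))) =
      onePoint p m s c := by
  classical
  obtain ⟨b, rfl⟩ := exists_orthonormalBasis_option he
  have horth : ∀ k l, k ≠ l → ⟪(√s)⁻¹ • tensorDeriv p (b none) (b k),
      (√s)⁻¹ • tensorDeriv p (b none) (b l)⟫ = 0 := fun k l hkl => by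
    rw [inner_smul_left, inner_smul_right, inner_tensorDeriv_basis, if_neg hkl, mul_zero, mul_zero]
  have hprod := integral_exp_neg_sum_sq_eq_prod _
    (fun _ => (0 : EuclideanSpace ℝ (Fin p → Fin (m + 1)))) (fun k => (√s)⁻¹ * c * ⟪b k, b none⟫)
    horth (fun _ _ _ => inner_zero_right _) fun _ _ _ => inner_zero_right _
  simp only [inner_zero_left, inner_zero_right, norm_zero, zero_pow two_ne_zero, add_zero,
    pairIntegral_zero, norm_inv_sqrt_smul_sq hs.le, norm_tensorDeriv_basis_sq] at hprod
  simp_rw [gradWeight_eq_exp_sum b hs.le]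
  rw [hprod, Fintype.prod_option]
  have hexp : ((√s)⁻¹ * c) ^ 2 / (1 + p ^ 2 / s) = c ^ 2 / (s + p ^ 2) := by
    rw [mul_pow, inv_pow, Real.sq_sqrt hs.le]
    field_simp
  simp [orthonormal_iff_ite.mp b.orthonormal, onePoint, hexp, -inner_self_eq_norm_sq_to_K]

end TensorCovariance

section ReflectedCovariance

variable {p n : ℕ} {q t : ℝ}
  {b b' : OrthonormalBasis (Bool ⊕ Fin n) ℝ (EuclideanSpace ℝ (Fin (n + 2)))}

lemma IsReflectedBasis.isExchangeable (h : IsReflectedBasis b b' q t) :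
    IsExchangeable (fun k => tensorDeriv p (b (Sum.inl false)) (b k))
      (fun k => tensorDeriv p (b' (Sum.inl false)) (b' k)) where
  inner_eq k l := by rw [inner_tensorDeriv_basis, inner_tensorDeriv_basis]
  orthogonal k l hkl := by rw [inner_tensorDeriv_basis, if_neg hkl]
  symm k l := by
    have hcomm : ∀ k l, ⟪b' k, b l⟫ = ⟪b k, b' l⟫ := fun k l => by
      rw [real_inner_comm, h.inner_comm]
    simp only [inner_tensorDeriv, hcomm]
  diagonal k i hki := by
    refine inner_tensorDeriv_eq_zero _ _ ?_ ?_ <;> rw [h.inner_eq] <;> simp [hki]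

lemma IsReflectedBasis.inner_tensorDeriv_inl (h : IsReflectedBasis b b' q t) (hp : 2 ≤ p)
    (i j : Bool) :
    ⟪tensorDeriv p (b (Sum.inl false)) (b (Sum.inl i)),
      tensorDeriv p (b' (Sum.inl false)) (b' (Sum.inl j))⟫ =
      if i then if j then p * (q ^ (p - 2) * ((p - 1) * t ^ 2 - q ^ 2))
          else p ^ 2 * (q ^ (p - 2) * q * t)
        else if j then p ^ 2 * (q ^ (p - 2) * q * t) else p ^ 2 * (q ^ (p - 2) * q ^ 2) := by
  have hpow : q ^ (p - 1) = q ^ (p - 2) * q := by rw [← pow_succ]; congr 1; omega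
  cases i <;> cases j <;> simp [inner_tensorDeriv, h.inner_eq, hpow] <;> ring

lemma IsReflectedBasis.inner_tensorDeriv_inr (h : IsReflectedBasis b b' q t) (hp : 2 ≤ p)
    (i : Fin n) :
    ⟪tensorDeriv p (b (Sum.inl false)) (b (Sum.inr i)),
      tensorDeriv p (b' (Sum.inl false)) (b' (Sum.inr i))⟫ = p * (q ^ (p - 2) * q) := by
  have hpow : q ^ (p - 1) = q ^ (p - 2) * q := by rw [← pow_succ]; congr 1; omega
  simp [inner_tensorDeriv, h.inner_eq, hpow]

end ReflectedCovariance

section TwoPoint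

variable {p n : ℕ} {s : ℝ}

lemma pairIntegral_plane (hs : 0 < s) (P a : ℝ) {q t : ℝ} (hqt : q ^ 2 + t ^ 2 = 1) (m : ℝ) :
    pairIntegral (P ^ 2 / s + P ^ 2 * (a * q ^ 2) / s) (P ^ 2 * (a * q * t) / s)
        (P / s + P * (a * ((P - 1) * t ^ 2 - q ^ 2)) / s) m =
      (√(planeDet P s a (q ^ 2) / s ^ 2))⁻¹ * Real.exp (-(1 / 2) *
        (m ^ 2 * s * (tangVar P a (q ^ 2) + s) / planeDet P s a (q ^ 2))) := by
  have ht : t ^ 2 = 1 - q ^ 2 := by linarith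
  have hvar : 1 + (P / s + P * (a * ((P - 1) * t ^ 2 - q ^ 2)) / s) =
      (tangVar P a (q ^ 2) + s) / s := by
    rw [tangVar, ht]
    field_simp
    ring
  have hdet : (1 + (P ^ 2 / s + P ^ 2 * (a * q ^ 2) / s)) *
      (1 + (P / s + P * (a * ((P - 1) * t ^ 2 - q ^ 2)) / s)) - (P ^ 2 * (a * q * t) / s) ^ 2 =
      planeDet P s a (q ^ 2) / s ^ 2 := by
    rw [hvar, div_pow, mul_pow, mul_pow, ht, planeDet]
    field_simp
    ring
  rw [pairIntegral, hdet, hvar]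
  congr 3
  field_simp

lemma IsReflectedBasis.integral_gradWeight_mul_gradWeight {q t : ℝ}
    {b b' : OrthonormalBasis (Bool ⊕ Fin n) ℝ (EuclideanSpace ℝ (Fin (n + 2)))}
    (h : IsReflectedBasis b b' q t) (hqt : q ^ 2 + t ^ 2 = 1) (hp : 2 ≤ p) (hs : 0 < s) (c : ℝ) :
    ∫ g, gradWeight p s c (b (Sum.inl false)) g * gradWeight p s c (b' (Sum.inl false)) g
        ∂(stdGaussian (EuclideanSpace ℝ (Fin p → Fin (n + 2)))) =
      twoPoint p n s c (q ^ (p - 2)) (q ^ 2) := by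
  have hmean : ∀ d : OrthonormalBasis (Bool ⊕ Fin n) ℝ (EuclideanSpace ℝ (Fin (n + 2))), ∀ k,
      (√s)⁻¹ * c * ⟪d k, d (Sum.inl false)⟫ =
        (Pi.single (Sum.inl false) ((√s)⁻¹ * c) : Bool ⊕ Fin n → ℝ) k := fun d k => by
    rw [orthonormal_iff_ite.mp d.orthonormal, mul_ite, mul_one, mul_zero, Pi.single_apply]
  have hscale : ∀ u w : EuclideanSpace ℝ (Fin p → Fin (n + 2)),
      ⟪(√s)⁻¹ • u, (√s)⁻¹ • w⟫ = ⟪u, w⟫ / s := fun u w => by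
    rw [inner_smul_left, inner_smul_right, conj_trivial, ← mul_assoc, ← mul_inv,
      Real.mul_self_sqrt hs.le, inv_mul_eq_div]
  simp_rw [gradWeight_eq_exp_sum b hs.le c (b _), gradWeight_eq_exp_sum b' hs.le c (b' _), hmean,
    ← Real.exp_add, ← mul_add]
  rw [((h.isExchangeable (p := p)).smul (√s)⁻¹).integral_exp]
  simp only [hscale, norm_inv_sqrt_smul_sq hs.le, norm_tensorDeriv_basis_sq,
    h.inner_tensorDeriv_inl hp, h.inner_tensorDeriv_inr hp, if_true, Bool.false_eq_true, if_false,
    Sum.inl.injEq, reduceCtorEq, Bool.true_eq_false]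
  have hplane := pairIntegral_plane hs p (q ^ (p - 2)) hqt (√2 * ((√s)⁻¹ * c))
  have hplane' := pairIntegral_plane hs p (-q ^ (p - 2)) hqt 0
  simp only [neg_mul, mul_neg, neg_div, ← sub_eq_add_neg] at hplane'
  have hexp : (√2 * ((√s)⁻¹ * c)) ^ 2 * s = 2 * c ^ 2 := by
    rw [mul_pow, mul_pow, inv_pow, Real.sq_sqrt zero_le_two, Real.sq_sqrt hs.le]
    field_simp
  have htransverse : pairIntegral (p / s) (p * (q ^ (p - 2) * q) / s) (p / s) 0 =
      (√((1 + p / s) ^ 2 - (p / s) ^ 2 * ((q ^ (p - 2)) ^ 2 * q ^ 2)))⁻¹ := by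
    simp only [pairIntegral, zero_pow two_ne_zero, zero_mul, zero_div, mul_zero, Real.exp_zero,
      mul_one]
    congr 2
    ring
  rw [hplane, hplane', hexp, htransverse, Finset.prod_const, Finset.card_univ, Fintype.card_fin,
    twoPoint]
  simp only [zero_pow two_ne_zero, zero_mul, zero_div, mul_zero, neg_zero, Real.exp_zero, mul_one]
  congr 4
  ring

lemma integral_gradWeight_mul_gradWeight (hp : 2 ≤ p) (hs : 0 < s) (c : ℝ)
    {e f : EuclideanSpace ℝ (Fin (n + 2))} (he : ‖e‖ = 1) (hf : ‖f‖ = 1) (hq : |⟪e, f⟫| < 1) :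
    ∫ g, gradWeight p s c e g * gradWeight p s c f g
        ∂(stdGaussian (EuclideanSpace ℝ (Fin p → Fin (n + 2)))) =
      twoPoint p n s c (⟪e, f⟫ ^ (p - 2)) (⟪e, f⟫ ^ 2) := by
  obtain ⟨b, b', h, hbe, hbf⟩ := exists_isReflectedBasis he hf hq
  have hq2 := (sq_lt_one_iff_abs_lt_one _).mpr hq
  rw [← h.integral_gradWeight_mul_gradWeight _ hp hs, hbe, hbf]
  rw [Real.sq_sqrt (by linarith)]
  ring

end TwoPoint

/-! ### Distribution of overlaps -/

section OverlapTail

lemma integral_exp_neg_sum_sq_basis {κ V : Type*} [Fintype κ] [NormedAddCommGroup V]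
    [InnerProductSpace ℝ V] [FiniteDimensional ℝ V] [MeasurableSpace V] [BorelSpace V]
    (b : OrthonormalBasis κ ℝ V) {D : κ → ℝ} (hD : ∀ k, -1 < D k) :
    ∫ x, Real.exp (-∑ k, D k / 2 * ⟪b k, x⟫ ^ 2) ∂(stdGaussian V) = ∏ k, (√(1 + D k))⁻¹ := by
  classical
  have hcoord : ∀ (x : κ → ℝ) k, ⟪b k, ∑ i, x i • b i⟫ = x k := fun x k => by
    simp [inner_sum, inner_smul_right, orthonormal_iff_ite.mp b.orthonormal]
  have hprod : ∀ x : κ → ℝ, Real.exp (-∑ k, D k / 2 * ⟪b k, ∑ i, x i • b i⟫ ^ 2) =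
      ∏ k, Real.exp (0 * x k - D k / 2 * x k ^ 2) := fun x => by
    simp only [hcoord, ← Real.exp_sum, ← Finset.sum_neg_distrib, zero_mul, zero_sub]
  rw [stdGaussian_eq_map_pi_orthonormalBasis b, integral_map (Measurable.aemeasurable (by fun_prop))
    (Continuous.aestronglyMeasurable (by fun_prop))]
  simp_rw [hprod]
  rw [integral_fintype_prod_eq_prod (fun k (y : ℝ) => Real.exp (0 * y - D k / 2 * y ^ 2))]
  refine Finset.prod_congr rfl fun k _ => ?_
  rw [integral_exp_gaussianReal 0 (hD k)]
  simp

lemma integrable_exp_neg_sum_sq_basis {κ V : Type*} [Fintype κ] [NormedAddCommGroup V]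
    [InnerProductSpace ℝ V] [FiniteDimensional ℝ V] [MeasurableSpace V] [BorelSpace V]
    (b : OrthonormalBasis κ ℝ V) {D : κ → ℝ} (hD : ∀ k, -1 < D k) :
    Integrable (fun x => Real.exp (-∑ k, D k / 2 * ⟪b k, x⟫ ^ 2)) (stdGaussian V) := by
  refine not_imp_comm.mp integral_undef ?_
  rw [integral_exp_neg_sum_sq_basis b hD]
  exact (Finset.prod_pos fun k _ =>
    inv_pos.mpr (Real.sqrt_pos.mpr (by linarith [hD k]))).ne'

/-- Chernoff bound with parameter `l`. -/
lemma measureReal_cone_le {m : ℕ} {e : EuclideanSpace ℝ (Fin (m + 1))} (he : ‖e‖ = 1) {l u : ℝ}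
    (hl : 0 ≤ l) (hu : u ≤ 1) (hlu : l * u < 1) :
    (stdGaussian (EuclideanSpace ℝ (Fin (m + 1)))).real {x | (1 - u) * ‖x‖ ^ 2 ≤ ⟪e, x⟫ ^ 2} ≤
      (√(1 - l * u))⁻¹ * (√(1 + l * (1 - u)))⁻¹ ^ m := by
  obtain ⟨b, hb⟩ := exists_orthonormalBasis_option he
  let D : Option (Fin m) → ℝ := fun k => k.elim (-(l * u)) fun _ => l * (1 - u)
  have hD : ∀ k, -1 < D k
    | none => by simpa [D] using hlu
    | some _ => neg_one_lt_zero.trans_le (mul_nonneg hl (sub_nonneg.mpr hu))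
  have hexp : ∀ x, -∑ k, D k / 2 * ⟪b k, x⟫ ^ 2 = l / 2 * (⟪e, x⟫ ^ 2 - (1 - u) * ‖x‖ ^ 2) := by
    intro x
    rw [← b.sum_sq_inner_right, Fintype.sum_option, Fintype.sum_option, hb]
    simp only [D, Option.elim_none, Option.elim_some, ← Finset.mul_sum]
    ring
  have hmarkov := mul_meas_ge_le_integral_of_nonneg
    (Eventually.of_forall fun x => (Real.exp_pos _).le) (integrable_exp_neg_sum_sq_basis b hD) 1
  rw [one_mul, integral_exp_neg_sum_sq_basis b hD, Fintype.prod_option] at hmarkov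
  refine (measureReal_mono fun x hx => ?_).trans (hmarkov.trans (by simp [D, sub_eq_add_neg]))
  rw [Set.mem_ofPred_eq] at hx ⊢
  rw [hexp, Real.one_le_exp_iff]
  exact mul_nonneg (by linarith) (sub_nonneg.mpr hx)

lemma sqrt_succ_div_pow_le_two {m : ℕ} (hm : 1 ≤ m) : √((m + 1 : ℝ) / m) ^ m ≤ 2 := by
  have hm0 : (0 : ℝ) < m := by exact_mod_cast hm
  have hbase : (m + 1 : ℝ) / m ≤ Real.exp (1 / m) := by
    rw [add_div, div_self hm0.ne', add_comm]
    exact Real.add_one_le_exp _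
  have hpow : ((m + 1 : ℝ) / m) ^ m ≤ 2 ^ 2 := calc
    ((m + 1 : ℝ) / m) ^ m ≤ Real.exp (1 / m) ^ m := by gcongr
    _ = Real.exp 1 := by rw [← Real.exp_nat_mul]; congr 1; field_simp
    _ ≤ 2 ^ 2 := by linarith [Real.exp_one_lt_d9]
  refine (sq_le_sq₀ (by positivity) zero_le_two).mp ?_
  rwa [← pow_mul, mul_comm, pow_mul, Real.sq_sqrt (by positivity)]

lemma stdGaussian_cone_le {m : ℕ} (hm : 1 ≤ m) {e : EuclideanSpace ℝ (Fin (m + 1))}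
    (he : ‖e‖ = 1) {u : ℝ} (hu0 : 0 < u) (hu1 : u ≤ 1) :
    stdGaussian (EuclideanSpace ℝ (Fin (m + 1))) {x | (1 - u) * ‖x‖ ^ 2 ≤ ⟪e, x⟫ ^ 2} ≤
      ENNReal.ofReal (2 * √(m + 1) * √u ^ m) := by
  have : (0 : ℝ) < m := by exact_mod_cast hm
  set l : ℝ := m / (m + 1) / u with hl
  have hlu : l * u = m / (m + 1) := by rw [hl]; field_simp
  have hlt : l * u < 1 := by rw [hlu, div_lt_one (by positivity)]; linarith
  have hfirst : (√(1 - l * u))⁻¹ = √(m + 1) := by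
    rw [hlu, ← Real.sqrt_inv]
    congr 1
    field_simp
    ring
  have hrest : (√(1 + l * (1 - u)))⁻¹ ≤ √((m + 1) / m) * √u := by
    rw [← Real.sqrt_inv, ← Real.sqrt_mul (by positivity)]
    refine Real.sqrt_le_sqrt ?_
    calc (1 + l * (1 - u))⁻¹ ≤ l⁻¹ := by gcongr; linarith
      _ = _ := by rw [hl]; field_simp
  rw [← ofReal_measureReal]
  refine ENNReal.ofReal_le_ofReal
    ((measureReal_cone_le he (by positivity : 0 ≤ l) hu1 hlt).trans ?_)
  rw [hfirst]
  calc √(m + 1) * (√(1 + l * (1 - u)))⁻¹ ^ m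
      ≤ √(m + 1) * (√((m + 1) / m) * √u) ^ m := by gcongr
    _ = √((m + 1) / m) ^ m * (√(m + 1) * √u ^ m) := by rw [mul_pow]; ring
    _ ≤ 2 * (√(m + 1) * √u ^ m) := by gcongr; exact sqrt_succ_div_pow_le_two hm
    _ = _ := by ring

/-- Overlap of `e` with the direction of `x`. -/
def overlap {V : Type*} [NormedAddCommGroup V] [InnerProductSpace ℝ V] (e x : V) : ℝ :=
  ⟪e, ‖x‖⁻¹ • x⟫

/-- Entropic cost `-log (1 - q ^ 2)` of the overlap `q` of `e` with the direction of `x`; junk when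
the two are collinear. -/
def overlapCost {V : Type*} [NormedAddCommGroup V] [InnerProductSpace ℝ V] (e x : V) : ℝ :=
  -Real.log (1 - overlap e x ^ 2)

lemma overlap_sq_mul_norm_sq {V : Type*} [NormedAddCommGroup V] [InnerProductSpace ℝ V] (e : V)
    {x : V} (hx : x ≠ 0) : overlap e x ^ 2 * ‖x‖ ^ 2 = ⟪e, x⟫ ^ 2 := by
  have : ‖x‖ ≠ 0 := norm_ne_zero_iff.mpr hx
  rw [overlap, inner_smul_right]
  field_simp

lemma measurable_overlapCost {N : ℕ} (e : EuclideanSpace ℝ (Fin N)) :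
    Measurable (overlapCost e) := by
  unfold overlapCost overlap
  fun_prop

variable {n : ℕ} {e : EuclideanSpace ℝ (Fin (n + 2))}

lemma ae_abs_overlap_lt_one (he : ‖e‖ = 1) :
    ∀ᵐ x ∂(stdGaussian (EuclideanSpace ℝ (Fin (n + 2)))), x ≠ 0 ∧ |overlap e x| < 1 := by
  have hlim : Tendsto (fun u : ℝ => ENNReal.ofReal (2 * √((n + 1 : ℕ) + 1) * √u ^ (n + 1)))
      (nhdsWithin 0 (Set.Ioi 0)) (nhds 0) := by
    have hcont : Continuous fun u : ℝ =>
        ENNReal.ofReal (2 * √((n + 1 : ℕ) + 1) * √u ^ (n + 1)) :=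
      ENNReal.continuous_ofReal.comp (by fun_prop)
    simpa using (hcont.tendsto 0).mono_left (nhdsWithin_le_nhds (s := Set.Ioi 0))
  have hnull : stdGaussian (EuclideanSpace ℝ (Fin (n + 2))) {x | ‖x‖ ^ 2 ≤ ⟪e, x⟫ ^ 2} = 0 := by
    refine le_antisymm (ge_of_tendsto hlim ?_) zero_le
    filter_upwards [Ioc_mem_nhdsGT (zero_lt_one' ℝ)] with u hu
    refine (measure_mono fun x hx => ?_).trans (stdGaussian_cone_le (by omega) he hu.1 hu.2)
    rw [Set.mem_ofPred_eq] at hx ⊢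
    exact (mul_le_of_le_one_left (sq_nonneg _) (by linarith [hu.1])).trans hx
  have hae : ∀ᵐ x ∂(stdGaussian (EuclideanSpace ℝ (Fin (n + 2)))), ¬ ‖x‖ ^ 2 ≤ ⟪e, x⟫ ^ 2 := by
    rw [ae_iff]; simpa using hnull
  filter_upwards [hae] with x hx
  have hx0 : x ≠ 0 := by rintro rfl; simp at hx
  have hpos : 0 < ‖x‖ ^ 2 := pow_pos (norm_pos_iff.mpr hx0) 2
  rw [← overlap_sq_mul_norm_sq e hx0, not_le] at hx
  exact ⟨hx0, (sq_lt_one_iff_abs_lt_one _).mp (lt_of_mul_lt_mul_right (by linarith) hpos.le)⟩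

lemma measure_le_overlapCost (he : ‖e‖ = 1) {t : ℝ} (ht : 0 ≤ t) :
    stdGaussian (EuclideanSpace ℝ (Fin (n + 2))) {x | t ≤ overlapCost e x} ≤
      ENNReal.ofReal (2 * √(n + 2) * Real.exp (-(t * (n + 1) / 2))) := by
  have hcone := stdGaussian_cone_le (m := n + 1) (by omega) he (Real.exp_pos (-t))
    (Real.exp_le_one_iff.mpr (by linarith))
  have hval : 2 * √((n + 1 : ℕ) + 1) * √(Real.exp (-t)) ^ (n + 1) =
      2 * √(n + 2) * Real.exp (-(t * (n + 1) / 2)) := by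
    rw [← Real.exp_half, ← Real.exp_nat_mul]
    push_cast
    ring_nf
  rw [hval] at hcone
  refine (measure_mono_ae ?_).trans hcone
  filter_upwards [ae_abs_overlap_lt_one he] with x ⟨hx0, hx1⟩ (hx : t ≤ overlapCost e x)
  change (1 - Real.exp (-t)) * ‖x‖ ^ 2 ≤ ⟪e, x⟫ ^ 2
  have hq : overlap e x ^ 2 < 1 := (sq_lt_one_iff_abs_lt_one _).mpr hx1
  have hexp : 1 - overlap e x ^ 2 ≤ Real.exp (-t) :=
    (Real.log_le_iff_le_exp (by linarith)).mp (le_neg.mp hx)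
  rw [← overlap_sq_mul_norm_sq e hx0]
  gcongr
  linarith

lemma measure_le_mul_overlapCost (he : ‖e‖ = 1) {c : ℝ} (hc : 1 ≤ c * (n + 2)) {t : ℝ}
    (ht : 0 ≤ t) :
    stdGaussian (EuclideanSpace ℝ (Fin (n + 2))) {x | t ≤ (n + 2) * overlapCost e x} ≤
      ENNReal.ofReal (2 * √(n + 2) * Real.exp (-((1 / 2 - c / 2) * t))) := by
  have hN : (0 : ℝ) < n + 2 := by positivity
  have hset : {x | t ≤ (n + 2) * overlapCost e x} = {x | t / (n + 2) ≤ overlapCost e x} := by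
    ext x
    simp only [Set.mem_ofPred_eq, div_le_iff₀' hN]
  have hdiv : t / (n + 2) ≤ c * t := by
    rw [div_le_iff₀ hN]
    nlinarith
  have hrate : t / (n + 2) * (n + 1) = t - t / (n + 2) := by field_simp; ring
  rw [hset]
  refine (measure_le_overlapCost he (div_nonneg ht hN.le)).trans ?_
  gcongr
  linarith

end OverlapTail

lemma setLIntegral_exp_le_of_tail {Ω : Type*} [MeasurableSpace Ω] {μ : Measure Ω} {Y : Ω → ℝ}
    (hY : Measurable Y) {A a b τ : ℝ} (hA : 0 ≤ A) (ha : 0 ≤ a) (hab : a < b) (hτ : 0 ≤ τ)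
    (htail : ∀ t, 0 ≤ t → μ {x | t ≤ Y x} ≤ ENNReal.ofReal (A * Real.exp (-(b * t)))) :
    ∫⁻ x in {x | τ ≤ Y x}, ENNReal.ofReal (Real.exp (a * Y x)) ∂μ ≤
      ENNReal.ofReal (A * Real.exp a * Real.exp (-((b - a) * τ)) /
        (1 - Real.exp (-(b - a)))) := by
  let S : ℕ → Set Ω := fun k => {x | τ + k ≤ Y x}
  let w : ℕ → ℝ≥0∞ := fun k => ENNReal.ofReal (Real.exp (a * (τ + k + 1)))
  have hS : ∀ k, MeasurableSet (S k) := fun k => measurableSet_le measurable_const hY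
  have hlayers : ∀ x, τ ≤ Y x →
      ENNReal.ofReal (Real.exp (a * Y x)) ≤ ∑' k, (S k).indicator (fun _ => w k) x := by
    intro x hx
    have hmem : x ∈ S ⌊Y x - τ⌋₊ := by
      have := Nat.floor_le (sub_nonneg.mpr hx)
      change τ + ⌊Y x - τ⌋₊ ≤ Y x
      linarith
    refine le_trans ?_ (ENNReal.le_tsum ⌊Y x - τ⌋₊)
    rw [Set.indicator_of_mem hmem]
    exact ENNReal.ofReal_le_ofReal (Real.exp_le_exp.mpr
      (mul_le_mul_of_nonneg_left (by linarith [Nat.lt_floor_add_one (Y x - τ)]) ha))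
  have hterm : ∀ k, ∫⁻ x, (S k).indicator (fun _ => w k) x ∂μ ≤ ENNReal.ofReal
      (A * Real.exp a * Real.exp (-((b - a) * τ)) * Real.exp (-(b - a)) ^ k) := by
    intro k
    rw [lintegral_indicator_const (hS k)]
    refine (mul_le_mul_right (htail (τ + k) (by positivity)) _).trans_eq ?_
    rw [← ENNReal.ofReal_mul (Real.exp_pos _).le, ← Real.exp_nat_mul, mul_left_comm,
      ← Real.exp_add, mul_assoc, mul_assoc, ← Real.exp_add, ← Real.exp_add]
    ring_nf
  have hr1 : Real.exp (-(b - a)) < 1 := Real.exp_lt_one_iff.mpr (by linarith)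
  calc ∫⁻ x in {x | τ ≤ Y x}, ENNReal.ofReal (Real.exp (a * Y x)) ∂μ
      ≤ ∫⁻ x in {x | τ ≤ Y x}, ∑' k, (S k).indicator (fun _ => w k) x ∂μ :=
        setLIntegral_mono' (measurableSet_le measurable_const hY) hlayers
    _ ≤ ∫⁻ x, ∑' k, (S k).indicator (fun _ => w k) x ∂μ := setLIntegral_le_lintegral _ _
    _ = ∑' k, ∫⁻ x, (S k).indicator (fun _ => w k) x ∂μ :=
        lintegral_tsum fun k => (measurable_const.indicator (hS k)).aemeasurable
    _ ≤ ∑' k, ENNReal.ofReal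
          (A * Real.exp a * Real.exp (-((b - a) * τ)) * Real.exp (-(b - a)) ^ k) :=
        ENNReal.tsum_le_tsum hterm
    _ = _ := by
        rw [← ENNReal.ofReal_tsum_of_nonneg (fun k => by positivity)
          ((summable_geometric_of_lt_one (Real.exp_pos _).le hr1).mul_left _), tsum_mul_left,
          tsum_geometric_of_lt_one (Real.exp_pos _).le hr1, ← div_eq_mul_inv]

section PairRatio

variable {p : ℕ} {s : ℝ}

/-- Two-point function at overlap `q` in dimension `N`, divided by the square of the one-point
function. -/
def pairRatio (p : ℕ) (s E N q : ℝ) : ℝ :=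
  overlapPref p s (q ^ (p - 2)) (q ^ 2) * Real.exp (N * pairRate p s E q)

lemma continuousAt_overlapPref_pow (hp : 2 ≤ p) (hs : 0 < s) :
    ContinuousAt (fun q : ℝ => overlapPref p s (q ^ (p - 2)) (q ^ 2)) 0 := by
  have hP : (1 : ℝ) ≤ p := by exact_mod_cast (by omega : 1 ≤ p)
  have hpair : IsOverlapPair p ((0 : ℝ) ^ (p - 2)) (0 ^ 2) := isOverlapPair_pow hp (by simp)
  unfold overlapPref
  refine ContinuousAt.div (by fun_prop) ?_ (Real.sqrt_pos.mpr
    (mul_pos (hpair.planeDet_pos hP hs) (hpair.neg.planeDet_pos hP hs))).ne'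
  unfold planeDet tangVar
  fun_prop

lemma eventually_pairRatio_le (hp : 3 ≤ p) (hs : 0 < s) (E : ℝ) {ε : ℝ} (hε : 0 < ε) :
    ∀ᶠ y : ℝ in atTop, ∀ q, q ^ 2 ≤ y / y ^ 5 → pairRatio p s E (y ^ 5) q ≤ 1 + ε := by
  obtain ⟨C, hC, hcubic⟩ := exists_pairRate_le_cubic hp E hs
  let G : ℝ × ℝ → ℝ := fun v => overlapPref p s (v.1 ^ (p - 2)) (v.1 ^ 2) * Real.exp (C * v.2)
  have hG0 : G (0, 0) = 1 := by
    simp [G, zero_pow (by omega : p - 2 ≠ 0), overlapPref_zero p.cast_nonneg hs]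
  have hG : ContinuousAt G (0, 0) := by
    refine ContinuousAt.mul ?_ (by fun_prop)
    exact (continuousAt_overlapPref_pow (by omega) hs).comp
      (x := ((0, 0) : ℝ × ℝ)) (f := Prod.fst) continuousAt_fst
  obtain ⟨δ, hδ, hball⟩ := Metric.eventually_nhds_iff.mp
    (hG.eventually_lt_const (u := 1 + ε) (by linarith))
  filter_upwards [eventually_ge_atTop 1,
    tendsto_inv_atTop_zero.eventually_lt_const hδ] with y hy1 hyδ q hq
  have hy0 : 0 < y := by linarith
  have hinv : y⁻¹ ≤ 1 := inv_le_one_of_one_le₀ hy1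
  have hq2 : |q| ≤ y⁻¹ ^ 2 := by
    refine abs_le_of_sq_le_sq (hq.trans_eq ?_) (by positivity)
    field_simp
  have hqy : |q| ≤ y⁻¹ := hq2.trans (pow_le_of_le_one (by positivity) hinv two_ne_zero)
  have hq1 : |q| ≤ 1 := hqy.trans hinv
  have hnear : G (q, y⁻¹) < 1 + ε := hball (by
    rw [Prod.dist_eq, max_lt_iff]
    simpa [abs_of_pos hy0] using ⟨hqy.trans_lt hyδ, hyδ⟩)
  refine le_trans ?_ hnear.le
  refine mul_le_mul_of_nonneg_left (Real.exp_le_exp.mpr ?_)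
    ((isOverlapPair_pow (by omega) hq1).overlapPref_nonneg p.cast_nonneg hs)
  calc y ^ 5 * pairRate p s E q ≤ y ^ 5 * (C * |q| ^ 3) := by gcongr; exact hcubic q hq1
    _ ≤ y ^ 5 * (C * (y⁻¹ ^ 2) ^ 3) := by gcongr
    _ = C * y⁻¹ := by field_simp

lemma setLIntegral_pairRatio_le {n : ℕ} {e : EuclideanSpace ℝ (Fin (n + 2))} (he : ‖e‖ = 1)
    (hp : 2 ≤ p) (hs : 0 < s) {E c τ : ℝ} (hc0 : 0 < c) (hc2 : c < 1 / 2)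
    (hn : 1 ≤ c * (n + 2)) (hτ : 0 ≤ τ)
    (hrate : ∀ q, |q| < 1 → pairRate p s E q ≤ (1 / 2 - c) * -Real.log (1 - q ^ 2)) :
    ∫⁻ x in {x | τ ≤ (n + 2) * overlapCost e x},
        ENNReal.ofReal (pairRatio p s E (n + 2) (overlap e x))
        ∂(stdGaussian (EuclideanSpace ℝ (Fin (n + 2)))) ≤
      ENNReal.ofReal ((p + s) * (p ^ 2 + s) / s ^ 2 * (2 * √(n + 2) * Real.exp (1 / 2 - c) *
        Real.exp (-(c / 2 * τ)) / (1 - Real.exp (-(c / 2))))) := by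
  have hP : (1 : ℝ) ≤ p := by exact_mod_cast (by omega : 1 ≤ p)
  have hK : 0 ≤ (p + s) * (p ^ 2 + s) / s ^ 2 := by positivity
  have hpt : ∀ᵐ x ∂(stdGaussian (EuclideanSpace ℝ (Fin (n + 2)))),
      ENNReal.ofReal (pairRatio p s E (n + 2) (overlap e x)) ≤
        ENNReal.ofReal ((p + s) * (p ^ 2 + s) / s ^ 2) *
          ENNReal.ofReal (Real.exp ((1 / 2 - c) * ((n + 2) * overlapCost e x))) := by
    filter_upwards [ae_abs_overlap_lt_one he] with x ⟨_, hx⟩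
    rw [← ENNReal.ofReal_mul hK]
    refine ENNReal.ofReal_le_ofReal (mul_le_mul
      ((isOverlapPair_pow hp hx.le).overlapPref_le hP hs) ?_ (Real.exp_pos _).le hK)
    rw [Real.exp_le_exp, mul_left_comm]
    exact mul_le_mul_of_nonneg_left (hrate _ hx) (by positivity)
  refine (lintegral_mono_ae (ae_restrict_of_ae hpt)).trans ?_
  rw [lintegral_const_mul' _ _ ENNReal.ofReal_ne_top, ENNReal.ofReal_mul hK]
  gcongr
  have htail := setLIntegral_exp_le_of_tail ((measurable_overlapCost e).const_mul ((n : ℝ) + 2))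
    (A := 2 * √(n + 2)) (by positivity) (by linarith : 0 ≤ 1 / 2 - c)
    (by linarith : 1 / 2 - c < 1 / 2 - c / 2) hτ fun t ht => measure_le_mul_overlapCost he hn ht
  rwa [show 1 / 2 - c / 2 - (1 / 2 - c) = c / 2 by ring] at htail

lemma setLIntegral_compl_pairRatio_le {n : ℕ} {e : EuclideanSpace ℝ (Fin (n + 2))}
    (he : ‖e‖ = 1) {E τ M : ℝ}
    (hM : ∀ q, q ^ 2 ≤ τ / (n + 2) → pairRatio p s E (n + 2) q ≤ M) :
    ∫⁻ x in {x | τ ≤ (n + 2) * overlapCost e x}ᶜ,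
        ENNReal.ofReal (pairRatio p s E (n + 2) (overlap e x))
        ∂(stdGaussian (EuclideanSpace ℝ (Fin (n + 2)))) ≤ ENNReal.ofReal M := by
  refine (setLIntegral_mono_ae' (g := fun _ => ENNReal.ofReal M) (measurableSet_le measurable_const
    ((measurable_overlapCost e).const_mul _)).compl ?_).trans ?_
  · filter_upwards [ae_abs_overlap_lt_one he] with x ⟨_, hx⟩ (hcost : ¬ τ ≤ _)
    rw [not_le, ← lt_div_iff₀' (by positivity)] at hcost
    exact ENNReal.ofReal_le_ofReal (hM _ ((sq_le_neg_log_one_sub_sq hx).trans hcost.le))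
  · rw [setLIntegral_const]
    exact mul_le_of_le_one_right' prob_le_one

lemma tendsto_pow_mul_exp_neg_mul_atTop_nhds_zero (k : ℕ) {b : ℝ} (hb : 0 < b) :
    Tendsto (fun y : ℝ => y ^ k * Real.exp (-(b * y))) atTop (nhds 0) := by
  simpa using tendsto_rpow_mul_exp_neg_mul_atTop_nhds_zero (k : ℝ) b hb

lemma sqrt_pow_five_le {y : ℝ} (hy : 1 ≤ y) : √(y ^ 5) ≤ y ^ 3 := by
  refine Real.sqrt_le_iff.mpr ⟨by positivity, ?_⟩
  rw [← pow_mul]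
  exact pow_le_pow_right₀ hy (by norm_num)

/- The overlap is split at cost `y / N` with `y = N ^ (1 / 5)`: below it `N q ^ 3 ≤ y⁻¹` is
negligible, above it the tail is exponentially small in `y`. -/
lemma eventually_lintegral_pairRatio_le (hp : 3 ≤ p) {E E₀ z θ : ℝ}
    (hrsb : IsOneRSB p E₀ z θ) (hs : 0 < s) (hsp : 3 * s < p)
    (hE : E ^ 2 < (1 - 3 * (s / p)) * E₀ ^ 2) {η : ℝ} (hη : 0 < η) :
    ∀ᶠ n : ℕ in atTop, ∀ e : EuclideanSpace ℝ (Fin (n + 2)), ‖e‖ = 1 →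
      ∫⁻ x, ENNReal.ofReal (pairRatio p s E (n + 2) (overlap e x))
        ∂(stdGaussian (EuclideanSpace ℝ (Fin (n + 2)))) ≤ ENNReal.ofReal (1 + η) := by
  obtain ⟨c, hc, hc2, hrate⟩ := exists_pairRate_le_log hp hrsb hs hsp hE
  let y : ℕ → ℝ := fun n => ((n : ℝ) + 2) ^ (1 / 5 : ℝ)
  have hy5 : ∀ n, y n ^ 5 = n + 2 := fun n => by
    rw [← Real.rpow_natCast, ← Real.rpow_mul (by positivity)]; norm_num
  have hylim : Tendsto y atTop atTop :=
    (tendsto_rpow_atTop (by norm_num)).comp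
      (tendsto_atTop_add_const_right _ _ tendsto_natCast_atTop_atTop)
  have hr : 0 < 1 - Real.exp (-(c / 2)) := sub_pos.mpr (Real.exp_lt_one_iff.mpr (by linarith))
  let K : ℝ := (p + s) * (p ^ 2 + s) / s ^ 2
  let R : ℝ := K * (2 * Real.exp (1 / 2 - c) / (1 - Real.exp (-(c / 2))))
  have hdecay : Tendsto (fun v : ℝ => R * (v ^ 3 * Real.exp (-(c / 2 * v)))) atTop (nhds 0) := by
    simpa using (tendsto_pow_mul_exp_neg_mul_atTop_nhds_zero 3 (half_pos hc)).const_mul R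
  filter_upwards [hylim.eventually_ge_atTop 1,
    hylim.eventually (eventually_pairRatio_le hp hs E (half_pos hη)),
    hylim.eventually (hdecay.eventually_lt_const (half_pos hη)),
    (tendsto_natCast_atTop_atTop (R := ℝ)).eventually_ge_atTop (1 / c)] with n hy1 hnear hsmall hnc
    e he
  rw [div_le_iff₀' hc] at hnc
  let F : Set (EuclideanSpace ℝ (Fin (n + 2))) := {x | y n ≤ (n + 2) * overlapCost e x}
  have hF : MeasurableSet F :=
    measurableSet_le measurable_const ((measurable_overlapCost e).const_mul _)
  have hfar : ∫⁻ x in F, ENNReal.ofReal (pairRatio p s E (n + 2) (overlap e x))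
      ∂(stdGaussian _) ≤ ENNReal.ofReal (η / 2) := by
    refine (setLIntegral_pairRatio_le he (by omega) hs hc hc2 (by linarith) (by linarith)
      hrate).trans (ENNReal.ofReal_le_ofReal (le_trans ?_ hsmall.le))
    rw [← hy5]
    calc _ ≤ K * (2 * y n ^ 3 * Real.exp (1 / 2 - c) * Real.exp (-(c / 2 * y n)) /
          (1 - Real.exp (-(c / 2)))) := by gcongr; exact sqrt_pow_five_le hy1
      _ = _ := by simp only [R]; ring
  have hclose : ∫⁻ x in Fᶜ, ENNReal.ofReal (pairRatio p s E (n + 2) (overlap e x))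
      ∂(stdGaussian _) ≤ ENNReal.ofReal (1 + η / 2) :=
    setLIntegral_compl_pairRatio_le he (by rwa [hy5] at hnear)
  rw [← lintegral_add_compl _ hF]
  refine (add_le_add hfar hclose).trans_eq ?_
  rw [← ENNReal.ofReal_add (by positivity) (by positivity)]
  ring_nf

end PairRatio

/-! ### Concentration of the averaged weight -/

section SecondMoment

lemma lintegral_sq_lintegral {X K : Type*} [MeasurableSpace X] [MeasurableSpace K]
    (γ : Measure X) (μ : Measure K) [SFinite γ] [SFinite μ] {W : X × K → ℝ≥0∞}
    (hW : Measurable W) :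
    ∫⁻ g, (∫⁻ x, W (x, g) ∂γ) ^ 2 ∂μ = ∫⁻ x, ∫⁻ y, ∫⁻ g, W (x, g) * W (y, g) ∂μ ∂γ ∂γ := by
  have hsq : ∀ g, (∫⁻ x, W (x, g) ∂γ) ^ 2 = ∫⁻ x, ∫⁻ y, W (x, g) * W (y, g) ∂γ ∂γ := by
    intro g
    have hg : Measurable fun x => W (x, g) := hW.comp (measurable_prodMk_right (y := g))
    simp_rw [lintegral_const_mul _ hg]
    rw [lintegral_mul_const _ hg, pow_two]
  have hmeas : Measurable fun v : K × X × X => W (v.2.1, v.1) * W (v.2.2, v.1) := by fun_prop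
  simp_rw [hsq]
  rw [lintegral_lintegral_swap]
  · refine lintegral_congr fun x => lintegral_lintegral_swap ?_
    exact (hmeas.comp (measurable_fst.prodMk
      (measurable_const.prodMk measurable_snd))).aemeasurable
  · exact (Measurable.lintegral_prod_right' (hmeas.comp
      (measurable_fst.fst.prodMk (measurable_fst.snd.prodMk measurable_snd)))).aemeasurable

lemma measureReal_lt_half_le_of_second_moment {Ω : Type*} [MeasurableSpace Ω] {μ : Measure Ω}
    [IsProbabilityMeasure μ] {X : Ω → ℝ} (hX : MemLp X 2 μ) {m η : ℝ} (hm : 0 < m)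
    (hmean : ∫ ω, X ω ∂μ = m) (hsq : ∫ ω, X ω ^ 2 ∂μ ≤ m ^ 2 * (1 + η)) :
    μ.real {ω | X ω < m / 2} ≤ 4 * η := by
  have hvar : Var[X; μ] ≤ m ^ 2 * η := by
    rw [variance_eq_sub hX, hmean]
    simp only [Pi.pow_apply]
    linarith
  have hη : 0 ≤ η := nonneg_of_mul_nonneg_right ((variance_nonneg X μ).trans hvar) (by positivity)
  have hcheb := meas_ge_le_variance_div_sq hX (half_pos hm)
  refine ENNReal.toReal_le_of_le_ofReal (by positivity)
    ((measure_mono fun ω (hω : X ω < m / 2) => ?_).trans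
      (hcheb.trans (ENNReal.ofReal_le_ofReal ?_)))
  · change m / 2 ≤ |X ω - μ[X]|
    rw [hmean, abs_sub_comm]
    exact (by linarith : m / 2 ≤ m - X ω).trans (le_abs_self _)
  · rw [div_le_iff₀ (by positivity)]
    linarith

end SecondMoment

section AvgWeight

attribute [local irreducible] gradWeight

variable {p : ℕ} {s : ℝ}

/-- Average of `gradWeight` over a uniformly distributed direction, realised as the direction of a
standard Gaussian vector. -/
def avgWeight (p : ℕ) {N : ℕ} (s c : ℝ) (g : EuclideanSpace ℝ (Fin p → Fin N)) : ℝ :=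
  ∫ x, gradWeight p s c (‖x‖⁻¹ • x) g ∂(stdGaussian (EuclideanSpace ℝ (Fin N)))

variable {N : ℕ}

lemma measurable_gradWeight_direction (hs : 0 ≤ s) (c : ℝ) :
    Measurable fun v : EuclideanSpace ℝ (Fin N) × EuclideanSpace ℝ (Fin p → Fin N) =>
      gradWeight p s c (‖v.1‖⁻¹ • v.1) v.2 :=
  (continuous_gradWeight hs c).measurable.comp (by fun_prop :
    Measurable fun v : EuclideanSpace ℝ (Fin N) × EuclideanSpace ℝ (Fin p → Fin N) =>
      (‖v.1‖⁻¹ • v.1, v.2))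

lemma norm_gradWeight_le_one (hs : 0 ≤ s) (c : ℝ) (e : EuclideanSpace ℝ (Fin N))
    (g : EuclideanSpace ℝ (Fin p → Fin N)) : ‖gradWeight p s c e g‖ ≤ 1 := by
  rw [Real.norm_of_nonneg (gradWeight_pos _ _ _ _).le]
  exact gradWeight_le_one hs c e g

lemma integrable_gradWeight_direction (hs : 0 ≤ s) (c : ℝ)
    (g : EuclideanSpace ℝ (Fin p → Fin N)) :
    Integrable (fun x => gradWeight p s c (‖x‖⁻¹ • x) g)
      (stdGaussian (EuclideanSpace ℝ (Fin N))) :=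
  .of_bound ((measurable_gradWeight_direction hs c).comp
    (measurable_prodMk_right (y := g))).aestronglyMeasurable 1
    (Eventually.of_forall fun _ => norm_gradWeight_le_one hs c _ _)

lemma avgWeight_nonneg (s c : ℝ) (g : EuclideanSpace ℝ (Fin p → Fin N)) :
    0 ≤ avgWeight p s c g :=
  integral_nonneg fun _ => (gradWeight_pos _ _ _ _).le

lemma avgWeight_le_one (hs : 0 ≤ s) (c : ℝ) (g : EuclideanSpace ℝ (Fin p → Fin N)) :
    avgWeight p s c g ≤ 1 := by
  have := integral_mono (integrable_gradWeight_direction hs c g) (integrable_const 1)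
    fun x => gradWeight_le_one hs c (‖x‖⁻¹ • x) g
  simpa [avgWeight] using this

lemma stronglyMeasurable_avgWeight (hs : 0 ≤ s) (c : ℝ) :
    StronglyMeasurable
      (avgWeight p s c : EuclideanSpace ℝ (Fin p → Fin N) → ℝ) :=
  (measurable_gradWeight_direction hs c).stronglyMeasurable.integral_prod_left
    (μ := stdGaussian (EuclideanSpace ℝ (Fin N)))

lemma memLp_avgWeight (hs : 0 ≤ s) (c : ℝ) (q : ℝ≥0∞) :
    MemLp (avgWeight p s c) q (stdGaussian (EuclideanSpace ℝ (Fin p → Fin N))) :=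
  .of_bound (stronglyMeasurable_avgWeight hs c).aestronglyMeasurable 1
    (Eventually.of_forall fun g => by
      rw [Real.norm_of_nonneg (avgWeight_nonneg s c g)]
      exact avgWeight_le_one hs c g)

variable {n : ℕ}

lemma ae_norm_direction_eq_one :
    ∀ᵐ x ∂(stdGaussian (EuclideanSpace ℝ (Fin (n + 2)))), ‖‖x‖⁻¹ • x‖ = 1 := by
  filter_upwards [ae_abs_overlap_lt_one (e := EuclideanSpace.single 0 1) (by simp)] with x hx
  rw [norm_smul, norm_inv, norm_norm, inv_mul_cancel₀ (norm_ne_zero_iff.mpr hx.1)]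

lemma integral_avgWeight (hs : 0 < s) (c : ℝ) :
    ∫ g, avgWeight p s c g ∂(stdGaussian (EuclideanSpace ℝ (Fin p → Fin (n + 2)))) =
      onePoint p (n + 1) s c := by
  unfold avgWeight
  rw [integral_integral_swap, integral_congr_ae (g := fun _ => onePoint p (n + 1) s c)]
  · simp
  · filter_upwards [ae_norm_direction_eq_one] with x hx using integral_gradWeight hs c hx
  · exact .of_bound ((measurable_gradWeight_direction hs.le c).comp
      measurable_swap).aestronglyMeasurable 1
      (Eventually.of_forall fun _ => norm_gradWeight_le_one hs.le c _ _)

lemma lintegral_gradWeight_mul_gradWeight (hp : 2 ≤ p) (hs : 0 < s) (E : ℝ)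
    {e f : EuclideanSpace ℝ (Fin (n + 2))} (he : ‖e‖ = 1) (hf : ‖f‖ = 1) (hq : |⟪e, f⟫| < 1) :
    ∫⁻ g, ENNReal.ofReal (gradWeight p s (p * E * √(n + 2)) e g) *
        ENNReal.ofReal (gradWeight p s (p * E * √(n + 2)) f g)
        ∂(stdGaussian (EuclideanSpace ℝ (Fin p → Fin (n + 2)))) =
      ENNReal.ofReal (onePoint p (n + 1) s (p * E * √(n + 2)) ^ 2) *
        ENNReal.ofReal (pairRatio p s E (n + 2) ⟪e, f⟫) := by
  have hP : (1 : ℝ) ≤ p := by exact_mod_cast (by omega : 1 ≤ p)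
  have hmeas : ∀ e, Measurable fun g : EuclideanSpace ℝ (Fin p → Fin (n + 2)) =>
      gradWeight p s (p * E * √(n + 2)) e g := fun e =>
    (continuous_gradWeight hs.le _).measurable.comp measurable_prodMk_left
  have htwo : onePoint p (n + 1) s (p * E * √(n + 2)) ^ 2 * pairRatio p s E (n + 2) ⟪e, f⟫ =
      twoPoint p n s (p * E * √(n + 2)) (⟪e, f⟫ ^ (p - 2)) (⟪e, f⟫ ^ 2) :=
    ((isOverlapPair_pow hp hq.le).twoPoint_eq hP hs E n).symm
  rw [← ENNReal.ofReal_mul (sq_nonneg _), htwo,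
    ← integral_gradWeight_mul_gradWeight hp hs _ he hf hq, ofReal_integral_eq_lintegral_ofReal]
  · simp only [ENNReal.ofReal_mul (gradWeight_pos _ _ _ _).le]
  · refine .of_bound ((hmeas e).mul (hmeas f)).aestronglyMeasurable 1
      (Eventually.of_forall fun g => ?_)
    rw [norm_mul]
    exact mul_le_one₀ (norm_gradWeight_le_one hs.le _ _ _) (norm_nonneg _)
      (norm_gradWeight_le_one hs.le _ _ _)
  · exact Eventually.of_forall fun g =>
      (mul_pos (gradWeight_pos _ _ _ _) (gradWeight_pos _ _ _ _)).le

variable {E B : ℝ}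

lemma lintegral_avgWeight_sq_le (hp : 2 ≤ p) (hs : 0 < s)
    (hB : ∀ e : EuclideanSpace ℝ (Fin (n + 2)), ‖e‖ = 1 →
      ∫⁻ x, ENNReal.ofReal (pairRatio p s E (n + 2) (overlap e x))
        ∂(stdGaussian (EuclideanSpace ℝ (Fin (n + 2)))) ≤ ENNReal.ofReal B) :
    ∫⁻ g, ENNReal.ofReal (avgWeight p s (p * E * √(n + 2)) g ^ 2)
      ∂(stdGaussian (EuclideanSpace ℝ (Fin p → Fin (n + 2)))) ≤
      ENNReal.ofReal (onePoint p (n + 1) s (p * E * √(n + 2)) ^ 2) * ENNReal.ofReal B := by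
  set c := p * E * √(n + 2)
  have hsq : ∀ g : EuclideanSpace ℝ (Fin p → Fin (n + 2)),
      ENNReal.ofReal (avgWeight p s c g ^ 2) =
      (∫⁻ x, ENNReal.ofReal (gradWeight p s c (‖x‖⁻¹ • x) g)
        ∂(stdGaussian (EuclideanSpace ℝ (Fin (n + 2))))) ^ 2 := fun g => by
    rw [ENNReal.ofReal_pow (avgWeight_nonneg s _ g), avgWeight,
      ofReal_integral_eq_lintegral_ofReal (integrable_gradWeight_direction hs.le _ g)
        (Eventually.of_forall fun _ => (gradWeight_pos _ _ _ _).le)]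
  have hpt : ∀ᵐ x ∂(stdGaussian (EuclideanSpace ℝ (Fin (n + 2)))),
      ∫⁻ y, ∫⁻ g, ENNReal.ofReal (gradWeight p s c (‖x‖⁻¹ • x) g) *
          ENNReal.ofReal (gradWeight p s c (‖y‖⁻¹ • y) g)
          ∂(stdGaussian (EuclideanSpace ℝ (Fin p → Fin (n + 2))))
          ∂(stdGaussian (EuclideanSpace ℝ (Fin (n + 2)))) ≤
        ENNReal.ofReal (onePoint p (n + 1) s c ^ 2) * ENNReal.ofReal B := by
    filter_upwards [ae_norm_direction_eq_one] with x hx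
    refine le_trans ?_ (mul_le_mul_right (hB _ hx) _)
    rw [← lintegral_const_mul' _ _ ENNReal.ofReal_ne_top]
    refine lintegral_mono_ae ?_
    filter_upwards [ae_norm_direction_eq_one, ae_abs_overlap_lt_one hx] with y hy hq
    exact (lintegral_gradWeight_mul_gradWeight hp hs E hx hy hq.2).le
  simp_rw [hsq]
  rw [lintegral_sq_lintegral _ _ (measurable_gradWeight_direction (p := p) (N := n + 2) hs.le
    c).ennreal_ofReal]
  refine (lintegral_mono_ae hpt).trans ?_
  rw [lintegral_const, measure_univ, mul_one]

lemma onePoint_pos (hs : 0 < s) (m : ℕ) (c : ℝ) : 0 < onePoint p m s c := by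
  unfold onePoint
  positivity

lemma measureReal_avgWeight_lt_half_le (hp : 2 ≤ p) (hs : 0 < s) {η : ℝ} (hη : -1 ≤ η)
    (hB : ∀ e : EuclideanSpace ℝ (Fin (n + 2)), ‖e‖ = 1 →
      ∫⁻ x, ENNReal.ofReal (pairRatio p s E (n + 2) (overlap e x))
        ∂(stdGaussian (EuclideanSpace ℝ (Fin (n + 2)))) ≤ ENNReal.ofReal (1 + η)) :
    (stdGaussian (EuclideanSpace ℝ (Fin p → Fin (n + 2)))).real
      {g | avgWeight p s (p * E * √(n + 2)) g < onePoint p (n + 1) s (p * E * √(n + 2)) / 2} ≤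
      4 * η := by
  refine measureReal_lt_half_le_of_second_moment (memLp_avgWeight hs.le _ 2) (onePoint_pos hs _ _)
    (integral_avgWeight hs _) ?_
  rw [← ENNReal.ofReal_le_ofReal_iff (mul_nonneg (sq_nonneg _) (by linarith)),
    ENNReal.ofReal_mul (sq_nonneg _), ofReal_integral_eq_lintegral_ofReal
      (memLp_avgWeight hs.le _ 2).integrable_sq (Eventually.of_forall fun _ => sq_nonneg _)]
  exact lintegral_avgWeight_sq_le hp hs hB

end AvgWeight

/-! ### Lower bound -/

section SupTensor

variable {ι : Type*} [Fintype ι] {p : ℕ}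

lemma norm_tensorPow {e : EuclideanSpace ℝ ι} (he : ‖e‖ = 1) : ‖tensorPow p e‖ = 1 := by
  rw [norm_eq_sqrt_real_inner, inner_tensorPow, real_inner_self_eq_norm_sq, he]
  simp

lemma abs_inner_tensorPow_le {e : EuclideanSpace ℝ ι} (he : ‖e‖ = 1)
    (g : EuclideanSpace ℝ (Fin p → ι)) : |⟪tensorPow p e, g⟫| ≤ ‖g‖ := by
  simpa [norm_tensorPow he] using abs_real_inner_le_norm (tensorPow p e) g

/-- The maximum of the form `⟪e ⊗ ⋯ ⊗ e, g⟫` over the unit sphere. -/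
def supTensor (p : ℕ) (g : EuclideanSpace ℝ (Fin p → ι)) : ℝ :=
  ⨆ e : Metric.sphere (0 : EuclideanSpace ℝ ι) 1, ⟪tensorPow p e.1, g⟫

lemma bddAbove_inner_tensorPow (g : EuclideanSpace ℝ (Fin p → ι)) :
    BddAbove (Set.range fun e : Metric.sphere (0 : EuclideanSpace ℝ ι) 1 =>
      ⟪tensorPow p e.1, g⟫) :=
  ⟨‖g‖, by rintro _ ⟨e, rfl⟩; exact (le_abs_self _).trans (abs_inner_tensorPow_le (by simp) g)⟩

lemma inner_tensorPow_le_supTensor {e : EuclideanSpace ℝ ι} (he : ‖e‖ = 1)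
    (g : EuclideanSpace ℝ (Fin p → ι)) : ⟪tensorPow p e, g⟫ ≤ supTensor p g :=
  le_ciSup (bddAbove_inner_tensorPow g) (⟨e, by simpa using he⟩ : Metric.sphere _ _)

variable [Nonempty ι]

lemma exists_norm_eq_one (ι : Type*) [Fintype ι] [Nonempty ι] :
    ∃ e : EuclideanSpace ℝ ι, ‖e‖ = 1 :=
  exists_norm_eq _ zero_le_one

lemma supTensor_le {g : EuclideanSpace ℝ (Fin p → ι)} {a : ℝ}
    (h : ∀ e : EuclideanSpace ℝ ι, ‖e‖ = 1 → ⟪tensorPow p e, g⟫ ≤ a) :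
    supTensor p g ≤ a := by
  have : Nonempty (Metric.sphere (0 : EuclideanSpace ℝ ι) 1) :=
    (NormedSpace.sphere_nonempty.mpr zero_le_one).to_subtype
  exact ciSup_le fun e => h e.1 (by simp)

lemma abs_supTensor_le (g : EuclideanSpace ℝ (Fin p → ι)) : |supTensor p g| ≤ ‖g‖ := by
  obtain ⟨e, he⟩ := exists_norm_eq_one ι
  exact abs_le.mpr ⟨(neg_le_of_abs_le (abs_inner_tensorPow_le he g)).trans
    (inner_tensorPow_le_supTensor he g),
    supTensor_le fun f hf => (le_abs_self _).trans (abs_inner_tensorPow_le hf g)⟩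

lemma continuous_supTensor :
    Continuous (supTensor p : EuclideanSpace ℝ (Fin p → ι) → ℝ) := by
  refine (LipschitzWith.of_le_add fun g g' => supTensor_le fun e he => ?_).continuous
  rw [dist_eq_norm, ← sub_add_cancel g g', inner_add_right, add_comm, add_sub_cancel_right]
  exact add_le_add (inner_tensorPow_le_supTensor he g')
    ((le_abs_self _).trans (abs_inner_tensorPow_le he _))

lemma integrable_supTensor :
    Integrable (supTensor p) (stdGaussian (EuclideanSpace ℝ (Fin p → ι))) :=
  IsGaussian.integrable_id.mono continuous_supTensor.aestronglyMeasurable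
    (Eventually.of_forall abs_supTensor_le)

end SupTensor

section AbsoluteMoments

variable {V : Type*} [NormedAddCommGroup V] [InnerProductSpace ℝ V] [FiniteDimensional ℝ V]
  [MeasurableSpace V] [BorelSpace V]

lemma integral_inner_sq_stdGaussian (u : V) : ∫ x, ⟪u, x⟫ ^ 2 ∂(stdGaussian V) = ‖u‖ ^ 2 := by
  have h := variance_dual_stdGaussian (innerSL ℝ u)
  rw [variance_of_integral_eq_zero (by fun_prop) (integral_strongDual_stdGaussian _)] at h
  simpa using h

lemma memLp_inner_stdGaussian (u : V) {q : ℝ≥0∞} (hq : q ≠ ⊤) :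
    MemLp (fun x => ⟪u, x⟫) q (stdGaussian V) :=
  IsGaussian.memLp_dual (stdGaussian V) (innerSL ℝ u) q hq

lemma integrable_abs_inner_stdGaussian (u : V) :
    Integrable (fun x => |⟪u, x⟫|) (stdGaussian V) :=
  ((memLp_inner_stdGaussian u ENNReal.one_ne_top).integrable le_rfl).abs

lemma integral_abs_inner_stdGaussian_le {u : V} (hu : ‖u‖ = 1) :
    ∫ x, |⟪u, x⟫| ∂(stdGaussian V) ≤ 1 := by
  have hsq := (memLp_inner_stdGaussian u ENNReal.ofNat_ne_top).integrable_sq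
  calc ∫ x, |⟪u, x⟫| ∂(stdGaussian V)
      ≤ ∫ x, (1 / 2 + 1 / 2 * ⟪u, x⟫ ^ 2) ∂(stdGaussian V) := by
        refine integral_mono (integrable_abs_inner_stdGaussian u)
          ((integrable_const _).add (hsq.const_mul _)) fun x => ?_
        nlinarith [sq_nonneg (|⟪u, x⟫| - 1), sq_abs ⟪u, x⟫]
    _ = 1 := by
        rw [integral_add (integrable_const _) (hsq.const_mul _), integral_const_mul,
          integral_inner_sq_stdGaussian, hu]
        norm_num

end AbsoluteMoments

section LowerBound

variable {p n : ℕ} {s E : ℝ}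

lemma exists_avgWeight_le_gradWeight (hs : 0 ≤ s) (c : ℝ)
    (g : EuclideanSpace ℝ (Fin p → Fin (n + 2))) :
    ∃ e : EuclideanSpace ℝ (Fin (n + 2)), ‖e‖ = 1 ∧ avgWeight p s c g ≤ gradWeight p s c e g := by
  obtain ⟨x, hx, h⟩ := exists_notMem_null_integral_le (integrable_gradWeight_direction hs c g)
    (ae_iff.mp (ae_norm_direction_eq_one (n := n)))
  exact ⟨‖x‖⁻¹ • x, by simpa using hx, h⟩

lemma sq_le_of_le_gradWeight {ι : Type*} [Fintype ι] {a : ℝ} (hs : 0 < s) (c : ℝ) (ha : 0 < a)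
    {e : EuclideanSpace ℝ ι} (he : ‖e‖ = 1) {g : EuclideanSpace ℝ (Fin p → ι)}
    (h : a ≤ gradWeight p s c e g) :
    (p * ⟪tensorPow p e, g⟫ - c) ^ 2 ≤ 2 * s * -Real.log a := by
  have hlog := Real.log_le_log ha h
  rw [gradWeight, Real.log_exp] at hlog
  have hradial := abs_real_inner_le_norm e ((tensorDeriv p e).adjoint g - c • e)
  rw [inner_adjoint_sub, tensorDeriv_self, real_inner_self_eq_norm_sq, he, inner_smul_left,
    conj_trivial, one_pow, mul_one, one_mul] at hradial
  have hnorm : ‖(tensorDeriv p e).adjoint g - c • e‖ ^ 2 ≤ 2 * -Real.log a * s := by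
    rw [← div_le_iff₀ hs]
    linarith
  calc (p * ⟪tensorPow p e, g⟫ - c) ^ 2 = |p * ⟪tensorPow p e, g⟫ - c| ^ 2 := (sq_abs _).symm
    _ ≤ ‖(tensorDeriv p e).adjoint g - c • e‖ ^ 2 := by gcongr
    _ ≤ 2 * s * -Real.log a := by linarith

/-- Upper bound for the exponential rate at which the expected weight decays. -/
def decayRate (p : ℕ) (s E : ℝ) : ℝ :=
  1 + Real.log (1 + p / s) / 2 + Real.log (1 + p ^ 2 / s) / 2 + E ^ 2 / 2

lemma neg_log_half_onePoint_le (hs : 0 < s) (E : ℝ) :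
    -Real.log (onePoint p (n + 1) s (p * E * √(n + 2)) / 2) ≤ (n + 2) * decayRate p s E := by
  have hlog₁ : 0 ≤ Real.log (1 + p / s) :=
    Real.log_nonneg (le_add_of_nonneg_right (by positivity))
  have hlog₂ : 0 ≤ Real.log (1 + (p : ℝ) ^ 2 / s) :=
    Real.log_nonneg (le_add_of_nonneg_right (by positivity))
  have henergy : (p * E * √(n + 2)) ^ 2 / (s + p ^ 2) ≤ (n + 2) * E ^ 2 := by
    rw [mul_pow, Real.sq_sqrt (by positivity), div_le_iff₀ (by positivity)]
    have : 0 ≤ (n + 2) * E ^ 2 * s := by positivity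
    linarith
  have hlog2 : Real.log 2 ≤ 1 := by linarith [Real.log_two_lt_d9]
  rw [onePoint, Real.log_div (by positivity) two_ne_zero,
    Real.log_mul (by positivity) (by positivity), Real.log_mul (by positivity) (by positivity),
    Real.log_exp, Real.log_pow, Real.log_inv, Real.log_inv, Real.log_sqrt (by positivity),
    Real.log_sqrt (by positivity), decayRate]
  push_cast
  have hn : (0 : ℝ) ≤ n := by positivity
  nlinarith [mul_nonneg hn hlog₁, mul_nonneg hn hlog₂]

lemma le_supTensor_of_le_avgWeight (hp : 0 < p) (hs : 0 < s)
    {g : EuclideanSpace ℝ (Fin p → Fin (n + 2))}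
    (h : onePoint p (n + 1) s (p * E * √(n + 2)) / 2 ≤ avgWeight p s (p * E * √(n + 2)) g) :
    √(n + 2) * (E - √(2 * s * decayRate p s E) / p) ≤ supTensor p g := by
  have hp0 : (0 : ℝ) < p := by exact_mod_cast hp
  obtain ⟨e, he, hle⟩ := exists_avgWeight_le_gradWeight hs.le (p * E * √(n + 2)) g
  have hsq : (p * ⟪tensorPow p e, g⟫ - p * E * √(n + 2)) ^ 2 ≤
      (n + 2) * (2 * s * decayRate p s E) := by
    refine (sq_le_of_le_gradWeight hs _ (half_pos (onePoint_pos hs _ _)) he (h.trans hle)).trans ?_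
    have := mul_le_mul_of_nonneg_left (neg_log_half_onePoint_le (p := p) (n := n) hs E)
      (by positivity : 0 ≤ 2 * s)
    linarith
  have habs := Real.abs_le_sqrt hsq
  rw [Real.sqrt_mul (by positivity)] at habs
  refine le_trans ?_ (inner_tensorPow_le_supTensor he g)
  refine le_of_mul_le_mul_left ?_ hp0
  calc p * (√(n + 2) * (E - √(2 * s * decayRate p s E) / p))
      = p * E * √(n + 2) - √(n + 2) * √(2 * s * decayRate p s E) := by field_simp
    _ ≤ p * ⟪tensorPow p e, g⟫ := by linarith [(abs_le.mp habs).1]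

lemma le_integral_supTensor (hp : 2 ≤ p) {η : ℝ} (hs : 0 < s) (hη : -1 ≤ η)
    (hE : 0 ≤ E - √(2 * s * decayRate p s E) / p)
    (hB : ∀ e : EuclideanSpace ℝ (Fin (n + 2)), ‖e‖ = 1 →
      ∫⁻ x, ENNReal.ofReal (pairRatio p s E (n + 2) (overlap e x))
        ∂(stdGaussian (EuclideanSpace ℝ (Fin (n + 2)))) ≤ ENNReal.ofReal (1 + η)) :
    √(n + 2) * (E - √(2 * s * decayRate p s E) / p) * (1 - 4 * η) - 1 ≤
      ∫ g, supTensor p g ∂(stdGaussian (EuclideanSpace ℝ (Fin p → Fin (n + 2)))) := by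
  have hprob := measureReal_avgWeight_lt_half_le hp hs hη hB
  set a := √(n + 2) * (E - √(2 * s * decayRate p s E) / p)
  have ha0 : 0 ≤ a := by positivity
  set A : Set (EuclideanSpace ℝ (Fin p → Fin (n + 2))) := {g | avgWeight p s (p * E * √(n + 2)) g <
    onePoint p (n + 1) s (p * E * √(n + 2)) / 2}
  have hAm : MeasurableSet A :=
    measurableSet_lt (stronglyMeasurable_avgWeight hs.le _).measurable measurable_const
  obtain ⟨e, he⟩ := exists_norm_eq_one (Fin (n + 2))
  have hi : Integrable (Aᶜ.indicator fun _ => a) (stdGaussian _) :=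
    (integrable_const a).indicator hAm.compl
  have hle : ∀ g, Aᶜ.indicator (fun _ => a) g - |⟪tensorPow p e, g⟫| ≤ supTensor p g := by
    intro g
    by_cases hg : g ∈ A
    · rw [Set.indicator_of_notMem (Set.notMem_compl_iff.mpr hg), zero_sub]
      exact (neg_abs_le _).trans (inner_tensorPow_le_supTensor he g)
    · rw [Set.indicator_of_mem (Set.mem_compl hg)]
      exact (sub_le_self _ (abs_nonneg _)).trans
        (le_supTensor_of_le_avgWeight (by omega) hs (not_lt.mp hg))
  calc a * (1 - 4 * η) - 1
      ≤ (1 - (stdGaussian _).real A) * a - ∫ g, |⟪tensorPow p e, g⟫| ∂(stdGaussian _) := by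
        have := mul_le_mul_of_nonneg_left hprob ha0
        linarith [integral_abs_inner_stdGaussian_le (norm_tensorPow (p := p) he)]
    _ = ∫ g, (Aᶜ.indicator (fun _ => a) g - |⟪tensorPow p e, g⟫|) ∂(stdGaussian _) := by
        rw [integral_sub hi (integrable_abs_inner_stdGaussian _),
          integral_indicator_const _ hAm.compl, probReal_compl_eq_one_sub hAm, smul_eq_mul]
    _ ≤ _ := integral_mono (hi.sub (integrable_abs_inner_stdGaussian _)) integrable_supTensor hle

lemma tendsto_sqrt_decayRate (hp : 0 < p) (E : ℝ) :
    Tendsto (fun s => √(2 * s * decayRate p s E) / p) (nhdsWithin 0 (Set.Ioi 0)) (nhds 0) := by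
  have hcont : ContinuousAt (fun s : ℝ => √(2 * s + (s * Real.log (s + p) - s * Real.log s) +
      (s * Real.log (s + p ^ 2) - s * Real.log s) + s * E ^ 2) / p) 0 := by
    have hlog := Real.continuous_mul_log.continuousAt (x := 0)
    have hlog₁ : ContinuousAt (fun s : ℝ => Real.log (s + p)) 0 :=
      ContinuousAt.log (by fun_prop) (by simp; omega)
    have hlog₂ : ContinuousAt (fun s : ℝ => Real.log (s + p ^ 2)) 0 :=
      ContinuousAt.log (by fun_prop) (by simp; omega)
    fun_prop
  have hlim := hcont.tendsto.mono_left (nhdsWithin_le_nhds (s := Set.Ioi 0))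
  simp only [zero_mul, mul_zero, sub_zero, add_zero, Real.sqrt_zero, zero_div] at hlim
  refine hlim.congr' ?_
  filter_upwards [self_mem_nhdsWithin] with s (hs : 0 < s)
  have hadd : ∀ x : ℝ, 1 + x / s = (s + x) / s := fun x => by field_simp
  rw [decayRate, hadd, hadd, Real.log_div (by positivity) hs.ne',
    Real.log_div (by positivity) hs.ne']
  congr 2
  ring

variable {E₀ z θ : ℝ}

lemma exists_lowerBound_params (hp : 0 < p) (hE₀ : 0 < E₀) {δ : ℝ} (hδ : 0 < δ)
    (hδE : δ ≤ E₀) :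
    ∃ s : ℝ, 0 < s ∧ 3 * s < p ∧ (E₀ - δ) ^ 2 < (1 - 3 * (s / p)) * E₀ ^ 2 ∧
      √(2 * s * decayRate p s (E₀ - δ)) / p < δ := by
  have hp0 : (0 : ℝ) < p := by exact_mod_cast hp
  have hsq : (E₀ - δ) ^ 2 < E₀ ^ 2 := by nlinarith
  have hsmall : ∀ᶠ s : ℝ in nhdsWithin 0 (Set.Ioi 0), 3 * s < p := by
    have : ContinuousAt (fun s : ℝ => 3 * s) 0 := by fun_prop
    exact (this.eventually_lt_const (by simpa using hp0)).filter_mono nhdsWithin_le_nhds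
  have henergy : ∀ᶠ s : ℝ in nhdsWithin 0 (Set.Ioi 0),
      (E₀ - δ) ^ 2 < (1 - 3 * (s / p)) * E₀ ^ 2 := by
    have : ContinuousAt (fun s : ℝ => (1 - 3 * (s / p)) * E₀ ^ 2) 0 := by fun_prop
    exact (this.eventually_const_lt (by simpa using hsq)).filter_mono nhdsWithin_le_nhds
  exact (eventually_mem_nhdsWithin.and (hsmall.and (henergy.and
    ((tendsto_sqrt_decayRate hp _).eventually_lt_const hδ)))).exists

lemma IsOneRSB.energy_pos (h : IsOneRSB p E₀ z θ) : 0 < E₀ := by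
  have := h.z_pos
  have := h.theta_pos
  rw [h.energy_eq]
  positivity

lemma eventually_le_integral_supTensor (hp : 3 ≤ p) (hrsb : IsOneRSB p E₀ z θ) {ε : ℝ}
    (hε : 0 < ε) :
    ∀ᶠ n : ℕ in atTop, E₀ - ε ≤
      (∫ g, supTensor p g ∂(stdGaussian (EuclideanSpace ℝ (Fin p → Fin (n + 2))))) /
        √(n + 2) := by
  have hE₀ := hrsb.energy_pos
  obtain ⟨δ, hδ0, hδε, hδE⟩ : ∃ δ, 0 < δ ∧ 4 * δ ≤ ε ∧ 4 * δ ≤ E₀ :=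
    ⟨min ε E₀ / 4, by positivity, by linarith [min_le_left ε E₀], by linarith [min_le_right ε E₀]⟩
  obtain ⟨s, hs, hsp, henergy, herror⟩ :=
    exists_lowerBound_params (p := p) (by omega) hE₀ hδ0 (by linarith)
  set t := √(2 * s * decayRate p s (E₀ - δ)) / p
  have : 0 ≤ t := by positivity
  set η := δ / (4 * E₀) with hη
  have hη0 : 0 < η := by positivity
  have hηE : 4 * (η * E₀) = δ := by rw [hη]; field_simp
  have hmean : E₀ - 3 * δ ≤ (E₀ - δ - t) * (1 - 4 * η) := by
    have : 0 ≤ η * (δ + t) := by positivity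
    linarith
  have hroot : Tendsto (fun n : ℕ => √((n : ℝ) + 2)) atTop atTop :=
    Real.tendsto_sqrt_atTop.comp (tendsto_atTop_add_const_right _ _ tendsto_natCast_atTop_atTop)
  filter_upwards [eventually_lintegral_pairRatio_le hp hrsb hs hsp henergy hη0,
    hroot.eventually_ge_atTop (1 / δ)] with n hpair hn
  have hr0 : 0 < √((n : ℝ) + 2) := Real.sqrt_pos.mpr (by positivity)
  rw [div_le_iff₀ hδ0] at hn
  rw [le_div_iff₀ hr0]
  refine le_trans ?_
    (le_integral_supTensor (by omega) hs (by linarith) (by change 0 ≤ _ - t; linarith) hpair)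
  have := mul_le_mul_of_nonneg_left hmean hr0.le
  nlinarith

end LowerBound

/-! ### Gaussian integration by parts -/

lemma integrable_gaussianReal_iff {μ : ℝ} {v : ℝ≥0} (hv : v ≠ 0) {f : ℝ → ℝ} :
    Integrable f (gaussianReal μ v) ↔ Integrable fun x => f x * gaussianPDFReal μ v x := by
  rw [gaussianReal_of_var_ne_zero μ hv, integrable_withDensity_iff_integrable_smul'
    (measurable_gaussianPDF μ v) (Eventually.of_forall fun _ => ENNReal.ofReal_lt_top)]
  simp only [toReal_gaussianPDF, smul_eq_mul, mul_comm]

lemma hasDerivAt_gaussianPDFReal (μ : ℝ) (v : ℝ≥0) (x : ℝ) :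
    HasDerivAt (gaussianPDFReal μ v) (-((x - μ) / v) * gaussianPDFReal μ v x) x := by
  rw [gaussianPDFReal_def]
  have hexponent : HasDerivAt (fun x : ℝ => -(x - μ) ^ 2 / (2 * v)) (-((x - μ) / v)) x := by
    refine (((hasDerivAt_id' x).sub_const μ).fun_pow 2).fun_neg.div_const _ |>.congr_deriv ?_
    rw [← neg_div, Nat.add_one_sub_one, pow_one, mul_one, Nat.cast_ofNat, ← mul_neg,
      mul_div_mul_left _ _ two_ne_zero]
  exact (hexponent.exp.const_mul _).congr_deriv (by ring)

lemma integral_sub_mul_gaussianReal {μ : ℝ} {v : ℝ≥0} (hv : v ≠ 0) {h h' : ℝ → ℝ}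
    (hd : ∀ t, HasDerivAt h (h' t) t) (hi : Integrable h (gaussianReal μ v))
    (hi' : Integrable h' (gaussianReal μ v))
    (hit : Integrable (fun t => (t - μ) * h t) (gaussianReal μ v)) :
    ∫ t, (t - μ) * h t ∂(gaussianReal μ v) = v * ∫ t, h' t ∂(gaussianReal μ v) := by
  have hv₀ : (v : ℝ) ≠ 0 := by exact_mod_cast hv
  rw [integrable_gaussianReal_iff hv] at hi hi' hit
  have hcomm : ∀ t, h t * (-((t - μ) / v) * gaussianPDFReal μ v t) =
      -(v : ℝ)⁻¹ * ((t - μ) * h t * gaussianPDFReal μ v t) := fun t => by ring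
  have hparts := integral_mul_deriv_eq_deriv_mul_of_integrable
    (fun t _ => hd t) (fun t _ => hasDerivAt_gaussianPDFReal μ v t)
    ((hit.const_mul _).congr (Eventually.of_forall fun t => (hcomm t).symm)) hi' hi
  simp_rw [hcomm, integral_const_mul, neg_mul, neg_inj] at hparts
  simp_rw [integral_gaussianReal_eq_integral_smul hv, smul_eq_mul, mul_comm (gaussianPDFReal μ v _)]
  rw [← hparts, mul_inv_cancel_left₀ hv₀]

section IntegrationByParts
variable {V : Type*} [NormedAddCommGroup V] [InnerProductSpace ℝ V] {u : V}

/-- Replacement of the component of a vector `x` in the unit direction `u` by `t`, as a function of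
the pair `(t, x)`. -/
def resample (u : V) (v : ℝ × V) : V := v.2 - ⟪u, v.2⟫ • u + v.1 • u

lemma continuous_resample (u : V) : Continuous (resample u) := by
  unfold resample
  fun_prop

lemma resample_add_smul (u x : V) (t a : ℝ) :
    resample u (t, x) + a • u = resample u (t + a, x) := by
  unfold resample
  module

lemma inner_resample (hu : ‖u‖ = 1) (t : ℝ) (x : V) : ⟪u, resample u (t, x)⟫ = t := by
  simp only [resample, inner_add_right, inner_sub_right, inner_smul_right,
    real_inner_self_eq_norm_sq, hu]
  ring

lemma norm_sub_inner_smul_sq (hu : ‖u‖ = 1) (w : V) :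
    ‖w - ⟪u, w⟫ • u‖ ^ 2 = ‖w‖ ^ 2 - ⟪u, w⟫ ^ 2 := by
  rw [norm_sub_sq_real, norm_smul, hu, inner_smul_right, real_inner_comm u w,
    Real.norm_eq_abs, mul_one, sq_abs]
  ring

variable [FiniteDimensional ℝ V] [MeasurableSpace V] [BorelSpace V]

lemma measurePreserving_resample (hu : ‖u‖ = 1) :
    MeasurePreserving (resample u) ((gaussianReal 0 1).prod (stdGaussian V)) (stdGaussian V) := by
  have hm := (continuous_resample u).measurable
  refine ⟨hm, ?_⟩
  have := Measure.isProbabilityMeasure_map (μ := (gaussianReal 0 1).prod (stdGaussian V))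
    hm.aemeasurable
  refine Measure.ext_of_charFun (funext fun w => ?_)
  have hsplit : ∀ v : ℝ × V, Complex.exp (⟪resample u v, w⟫ * Complex.I) =
      Complex.exp (⟪u, w⟫ * v.1 * Complex.I) *
        Complex.exp (⟪v.2, w - ⟪u, w⟫ • u⟫ * Complex.I) := by
    intro v
    rw [← Complex.exp_add, resample, inner_add_left, inner_sub_left, real_inner_smul_left,
      real_inner_smul_left, inner_sub_right, inner_smul_right, real_inner_comm v.2 u]
    push_cast
    ring_nf
  calc charFun (((gaussianReal 0 1).prod (stdGaussian V)).map (resample u)) w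
      = charFun (gaussianReal 0 1) ⟪u, w⟫ * charFun (stdGaussian V) (w - ⟪u, w⟫ • u) := by
        rw [charFun_apply, integral_map hm.aemeasurable
          (Measurable.aestronglyMeasurable (by fun_prop)), charFun_apply_real, charFun_apply,
          ← integral_prod_mul]
        exact integral_congr_ae (Eventually.of_forall hsplit)
    _ = charFun (stdGaussian V) w := by
        rw [charFun_gaussianReal, charFun_stdGaussian, charFun_stdGaussian, ← Complex.exp_add,
          ← Complex.ofReal_pow ‖w - _‖, norm_sub_inner_smul_sq hu]
        push_cast
        ring_nf

lemma integral_eq_integral_resample (hu : ‖u‖ = 1) {f : V → ℝ}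
    (hf : Integrable f (stdGaussian V)) :
    ∫ x, f x ∂(stdGaussian V) =
      ∫ x, ∫ t, f (resample u (t, x)) ∂(gaussianReal 0 1) ∂(stdGaussian V) := by
  have hmp := measurePreserving_resample hu
  calc ∫ x, f x ∂(stdGaussian V)
      = ∫ v, f (resample u v) ∂((gaussianReal 0 1).prod (stdGaussian V)) := by
        rw [← integral_map hmp.aemeasurable (hmp.map_eq.symm ▸ hf.aestronglyMeasurable),
          hmp.map_eq]
    _ = _ := integral_prod_symm _ (hmp.integrable_comp_of_integrable hf)

lemma integral_inner_mul_stdGaussian_of_norm_eq_one (hu : ‖u‖ = 1) {Φ Φ' : V → ℝ}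
    (hd : ∀ x, HasLineDerivAt ℝ Φ (Φ' x) x u) (hi : Integrable Φ (stdGaussian V))
    (hi' : Integrable Φ' (stdGaussian V))
    (hit : Integrable (fun x => ⟪u, x⟫ * Φ x) (stdGaussian V)) :
    ∫ x, ⟪u, x⟫ * Φ x ∂(stdGaussian V) = ∫ x, Φ' x ∂(stdGaussian V) := by
  rw [integral_eq_integral_resample hu hit, integral_eq_integral_resample hu hi']
  have hmp := measurePreserving_resample hu
  refine integral_congr_ae ?_
  filter_upwards [(hmp.integrable_comp_of_integrable hi).prod_left_ae,
    (hmp.integrable_comp_of_integrable hi').prod_left_ae,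
    (hmp.integrable_comp_of_integrable hit).prod_left_ae] with x hx hx' hxt
  simp only [Function.comp_apply, inner_resample hu] at hx hx' hxt ⊢
  have hderiv : ∀ t, HasDerivAt (fun a => Φ (resample u (a, x))) (Φ' (resample u (t, x))) t := by
    intro t
    have h := hd (resample u (t, x))
    simp only [HasLineDerivAt, resample_add_smul] at h
    rw [← sub_self t] at h
    simpa only [add_sub_cancel] using h.comp_sub_const t t
  simpa using integral_sub_mul_gaussianReal one_ne_zero hderiv hx hx' (by simpa using hxt)

lemma integral_inner_mul_stdGaussian {w : V} {Φ Φ' : V → ℝ}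
    (hd : ∀ x, HasLineDerivAt ℝ Φ (Φ' x) x w) (hi : Integrable Φ (stdGaussian V))
    (hi' : Integrable Φ' (stdGaussian V))
    (hit : Integrable (fun x => ⟪w, x⟫ * Φ x) (stdGaussian V)) :
    ∫ x, ⟪w, x⟫ * Φ x ∂(stdGaussian V) = ∫ x, Φ' x ∂(stdGaussian V) := by
  rcases eq_or_ne w 0 with rfl | hw
  · have hzero : ∀ x, Φ' x = 0 := fun x => (hd x).unique (hasLineDerivAt_zero ..)
    simp only [inner_zero_left, zero_mul, hzero]
  have hw₀ : ‖w‖ ≠ 0 := norm_ne_zero_iff.mpr hw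
  have hinner : ∀ x, ⟪‖w‖⁻¹ • w, x⟫ * Φ x = ‖w‖⁻¹ * (⟪w, x⟫ * Φ x) := fun x => by
    rw [real_inner_smul_left, mul_assoc]
  have hunit := integral_inner_mul_stdGaussian_of_norm_eq_one (norm_smul_inv_norm (𝕜 := ℝ) hw)
    (fun x => (hd x).smul ‖w‖⁻¹) hi (hi'.const_mul _)
    ((hit.const_mul ‖w‖⁻¹).congr (Eventually.of_forall fun x => (hinner x).symm))
  simp only [smul_eq_mul, RCLike.ofReal_real_eq_id, id_eq] at hunit
  simp_rw [hinner, integral_const_mul] at hunit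
  exact mul_left_cancel₀ (inv_ne_zero hw₀) hunit

end IntegrationByParts

/-! ### Smooth maxima -/

section SmoothMaximum
variable {κ : Type*} [Fintype κ] {k a : ℝ}

/-- The partition function of the energies `y` at inverse temperature `k`. -/
def softSum (k : ℝ) (y : κ → ℝ) : ℝ := ∑ t, Real.exp (k * y t)

/-- Smooth approximation of `exp (max y)` from above, which becomes exact as `k → ∞`. -/
def softExp (k : ℝ) (y : κ → ℝ) : ℝ := softSum k y ^ k⁻¹

/-- The Gibbs weights of the energies `y` at inverse temperature `k`. -/
def softWeight (k : ℝ) (y : κ → ℝ) (t : κ) : ℝ := Real.exp (k * y t) / softSum k y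

/-- The partial derivatives of `softExp`. -/
def softGrad (k : ℝ) (y : κ → ℝ) (t : κ) : ℝ := softExp k y * softWeight k y t

/-- The derivative of `softGrad k · t` in the direction `d`. -/
def softHess (k : ℝ) (y : κ → ℝ) (t : κ) (d : κ → ℝ) : ℝ :=
  softGrad k y t * (k * d t + (1 - k) * ∑ s, d s * softWeight k y s)

lemma continuous_softSum (k : ℝ) : Continuous (softSum k : (κ → ℝ) → ℝ) := by
  unfold softSum
  fun_prop

lemma exp_le_softExp (hk : 0 < k) (y : κ → ℝ) (t : κ) : Real.exp (y t) ≤ softExp k y := by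
  have hle : Real.exp (k * y t) ≤ softSum k y :=
    Finset.single_le_sum (f := fun s => Real.exp (k * y s)) (fun s _ => (Real.exp_pos _).le)
      (Finset.mem_univ t)
  have := Real.rpow_le_rpow (Real.exp_pos _).le hle (inv_nonneg.mpr hk.le)
  rwa [← Real.exp_mul, mul_right_comm, mul_inv_cancel₀ hk.ne', one_mul] at this

variable {y : ℝ → κ → ℝ} {d : κ → ℝ}

lemma hasDerivAt_softSum (hy : ∀ t, HasDerivAt (fun b => y b t) (d t) a) :
    HasDerivAt (fun b => softSum k (y b)) (∑ t, Real.exp (k * y a t) * (k * d t)) a :=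
  HasDerivAt.fun_sum fun t _ => ((hy t).const_mul k).exp

variable [Nonempty κ]

lemma softSum_pos (k : ℝ) (y : κ → ℝ) : 0 < softSum k y :=
  Finset.sum_pos (fun _ _ => Real.exp_pos _) Finset.univ_nonempty

lemma softExp_pos (k : ℝ) (y : κ → ℝ) : 0 < softExp k y :=
  Real.rpow_pos_of_pos (softSum_pos k y) _

lemma softWeight_nonneg (k : ℝ) (y : κ → ℝ) (t : κ) : 0 ≤ softWeight k y t :=
  div_nonneg (Real.exp_pos _).le (softSum_pos k y).le

lemma sum_softWeight (k : ℝ) (y : κ → ℝ) : ∑ t, softWeight k y t = 1 := by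
  simp only [softWeight]
  rw [← Finset.sum_div]
  exact div_self (softSum_pos k y).ne'

lemma softWeight_le_one (k : ℝ) (y : κ → ℝ) (t : κ) : softWeight k y t ≤ 1 := by
  rw [← sum_softWeight k y]
  exact Finset.single_le_sum (fun s _ => softWeight_nonneg k y s) (Finset.mem_univ t)

lemma softGrad_nonneg (k : ℝ) (y : κ → ℝ) (t : κ) : 0 ≤ softGrad k y t :=
  mul_nonneg (softExp_pos k y).le (softWeight_nonneg k y t)

lemma softGrad_le (k : ℝ) (y : κ → ℝ) (t : κ) : softGrad k y t ≤ softExp k y :=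
  mul_le_of_le_one_right (softExp_pos k y).le (softWeight_le_one k y t)

lemma sum_softGrad (k : ℝ) (y : κ → ℝ) : ∑ t, softGrad k y t = softExp k y := by
  simp only [softGrad, ← Finset.mul_sum, sum_softWeight, mul_one]

lemma abs_sum_mul_softWeight_le (k : ℝ) (y d : κ → ℝ) :
    |∑ s, d s * softWeight k y s| ≤ ∑ s, |d s| := by
  refine (Finset.abs_sum_le_sum_abs _ _).trans (Finset.sum_le_sum fun s _ => ?_)
  rw [abs_mul, abs_of_nonneg (softWeight_nonneg _ _ _)]
  exact mul_le_of_le_one_right (abs_nonneg _) (softWeight_le_one _ _ _)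

lemma softExp_le (hk : 0 < k) {M : ℝ} {y : κ → ℝ} (hM : ∀ t, y t ≤ M) :
    softExp k y ≤ (Fintype.card κ : ℝ) ^ k⁻¹ * Real.exp M := by
  have hle : softSum k y ≤ Fintype.card κ * Real.exp (k * M) := by
    rw [softSum, ← nsmul_eq_mul]
    exact Finset.sum_le_card_nsmul _ _ _ fun t _ =>
      Real.exp_le_exp.mpr (mul_le_mul_of_nonneg_left (hM t) hk.le)
  have := Real.rpow_le_rpow (softSum_pos k y).le hle (inv_nonneg.mpr hk.le)
  rwa [Real.mul_rpow (Nat.cast_nonneg _) (Real.exp_pos _).le, ← Real.exp_mul, mul_right_comm,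
    mul_inv_cancel₀ hk.ne', one_mul] at this

lemma continuous_softExp (k : ℝ) : Continuous (softExp k : (κ → ℝ) → ℝ) :=
  (continuous_softSum k).rpow_const fun y => Or.inl (softSum_pos k y).ne'

lemma continuous_softWeight (k : ℝ) (t : κ) : Continuous fun y : κ → ℝ => softWeight k y t :=
  Continuous.div (by fun_prop) (continuous_softSum k) fun y => (softSum_pos k y).ne'

lemma continuous_softGrad (k : ℝ) (t : κ) : Continuous fun y : κ → ℝ => softGrad k y t :=
  (continuous_softExp k).mul (continuous_softWeight k t)

lemma hasDerivAt_softExp (hk : k ≠ 0) (hy : ∀ t, HasDerivAt (fun b => y b t) (d t) a) :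
    HasDerivAt (fun b => softExp k (y b)) (∑ t, d t * softGrad k (y a) t) a := by
  have hS := softSum_pos k (y a)
  refine ((hasDerivAt_softSum hy).rpow_const (Or.inl hS.ne')).congr_deriv ?_
  simp only [softGrad, softWeight, softExp, Real.rpow_sub_one hS.ne', Finset.sum_mul]
  refine Finset.sum_congr rfl fun t _ => ?_
  field_simp

lemma hasDerivAt_softWeight (t : κ) (hy : ∀ t, HasDerivAt (fun b => y b t) (d t) a) :
    HasDerivAt (fun b => softWeight k (y b) t)
      (k * softWeight k (y a) t * (d t - ∑ s, d s * softWeight k (y a) s)) a := by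
  have hS := softSum_pos k (y a)
  refine (((hy t).const_mul k).exp.fun_div (hasDerivAt_softSum hy) hS.ne').congr_deriv ?_
  have hsum : ∑ s, Real.exp (k * y a s) * (k * d s) =
      k * softSum k (y a) * ∑ s, d s * softWeight k (y a) s := by
    simp only [softWeight, Finset.mul_sum]
    exact Finset.sum_congr rfl fun s _ => by field_simp
  rw [hsum, softWeight]
  field_simp

lemma hasDerivAt_softGrad (hk : k ≠ 0) (t : κ) (hy : ∀ t, HasDerivAt (fun b => y b t) (d t) a) :
    HasDerivAt (fun b => softGrad k (y b) t) (softHess k (y a) t d) a := by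
  refine ((hasDerivAt_softExp hk hy).mul (hasDerivAt_softWeight t hy)).congr_deriv ?_
  have hsum : ∑ s, d s * softGrad k (y a) s =
      softExp k (y a) * ∑ s, d s * softWeight k (y a) s := by
    simp only [softGrad, Finset.mul_sum]
    exact Finset.sum_congr rfl fun s _ => by ring
  rw [hsum, softHess, softGrad]
  ring

lemma mul_softGrad_le_softHess (hk : 1 ≤ k) (y : κ → ℝ) {d : κ → ℝ} {t : κ}
    (hle : ∀ s, d s ≤ d t) : d t * softGrad k y t ≤ softHess k y t d := by
  have hmean : ∑ s, d s * softWeight k y s ≤ d t := by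
    calc ∑ s, d s * softWeight k y s
        ≤ ∑ s, d t * softWeight k y s := Finset.sum_le_sum fun s _ =>
          mul_le_mul_of_nonneg_right (hle s) (softWeight_nonneg k y s)
      _ = d t := by rw [← Finset.mul_sum, sum_softWeight, mul_one]
  rw [softHess, mul_comm (d t)]
  refine mul_le_mul_of_nonneg_left ?_ (softGrad_nonneg k y t)
  nlinarith [mul_le_mul_of_nonneg_left hmean (sub_nonneg.mpr hk)]

lemma abs_softHess_le (k : ℝ) (y : κ → ℝ) (t : κ) (d : κ → ℝ) :
    |softHess k y t d| ≤ (|k * d t| + |1 - k| * ∑ s, |d s|) * softExp k y := by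
  rw [softHess, abs_mul, abs_of_nonneg (softGrad_nonneg k y t), mul_comm]
  refine mul_le_mul ((abs_add_le _ _).trans ?_) (softGrad_le k y t) (softGrad_nonneg k y t)
    (by positivity)
  rw [abs_mul (1 - k)]
  exact add_le_add_right (mul_le_mul_of_nonneg_left (abs_sum_mul_softWeight_le k y d)
    (abs_nonneg _)) _

lemma continuous_softHess (k : ℝ) (t : κ) (d : κ → ℝ) :
    Continuous fun y : κ → ℝ => softHess k y t d := by
  have hgrad := continuous_softGrad (κ := κ) k
  have hweight := continuous_softWeight (κ := κ) k
  unfold softHess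
  fun_prop

end SmoothMaximum

/-! ### Gaussian comparison -/

lemma mul_le_sq_div_add_mul_sq {l : ℝ} (hl : 0 < l) (a r : ℝ) :
    a * r ≤ a ^ 2 / (4 * l) + l * r ^ 2 := by
  have hsq : 0 ≤ (a - 2 * l * r) ^ 2 / (4 * l) := by positivity
  have hexpand : (a - 2 * l * r) ^ 2 / (4 * l) = a ^ 2 / (4 * l) + l * r ^ 2 - a * r := by
    field_simp
    ring
  linarith

section Comparison
variable {V : Type*} [NormedAddCommGroup V] [InnerProductSpace ℝ V]

section RotatePoint
variable {κ : Type*}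

/-- The rotation of the points `a t` towards the points `b t` by the angle `φ`. -/
def rotatePoint (a b : κ → V) (φ : ℝ) (t : κ) : V := Real.cos φ • a t + Real.sin φ • b t

lemma hasDerivAt_inner_rotatePoint (a b : κ → V) (φ : ℝ) (t : κ) (x : V) :
    HasDerivAt (fun φ => ⟪rotatePoint a b φ t, x⟫)
      ⟪rotatePoint a b (φ + Real.pi / 2) t, x⟫ φ := by
  simp only [rotatePoint, inner_add_left, real_inner_smul_left, Real.cos_add_pi_div_two,
    Real.sin_add_pi_div_two]
  exact ((Real.hasDerivAt_cos φ).mul_const _).add ((Real.hasDerivAt_sin φ).mul_const _)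

lemma norm_rotatePoint_le (a b : κ → V) (φ : ℝ) (t : κ) :
    ‖rotatePoint a b φ t‖ ≤ ‖a t‖ + ‖b t‖ := by
  refine (norm_add_le _ _).trans (add_le_add ?_ ?_) <;>
    rw [norm_smul, Real.norm_eq_abs]
  exacts [mul_le_of_le_one_left (norm_nonneg _) (Real.abs_cos_le_one φ),
    mul_le_of_le_one_left (norm_nonneg _) (Real.abs_sin_le_one φ)]

lemma inner_rotatePoint_add_pi_div_two {a b : κ → V} (horth : ∀ s t, ⟪a s, b t⟫ = 0) (φ : ℝ)
    (s t : κ) :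
    ⟪rotatePoint a b φ s, rotatePoint a b (φ + Real.pi / 2) t⟫ =
      Real.cos φ * Real.sin φ * (⟪b s, b t⟫ - ⟪a s, a t⟫) := by
  simp only [rotatePoint, Real.cos_add_pi_div_two, Real.sin_add_pi_div_two, inner_add_left,
    inner_add_right, real_inner_smul_left, inner_smul_right, horth, real_inner_comm (a t) (b s)]
  ring

end RotatePoint

variable {κ : Type*} [Fintype κ] [Nonempty κ] {k M : ℝ} {v : κ → V}

lemma softExp_inner_le (hk : 0 < k) (hM : ∀ t, ‖v t‖ ≤ M) (x : V) :
    softExp k (fun t => ⟪v t, x⟫) ≤ (Fintype.card κ : ℝ) ^ k⁻¹ * Real.exp (M * ‖x‖) :=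
  softExp_le hk fun t => (real_inner_le_norm _ _).trans
    (mul_le_mul_of_nonneg_right (hM t) (norm_nonneg x))

lemma abs_inner_mul_softGrad_le (hk : 0 < k) (hM : ∀ t, ‖v t‖ ≤ M) (t : κ) {w : V}
    (hw : ‖w‖ ≤ M) (x : V) :
    |⟪w, x⟫ * softGrad k (fun s => ⟪v s, x⟫) t| ≤
      (Fintype.card κ : ℝ) ^ k⁻¹ * Real.exp (2 * M * ‖x‖) := by
  have hinner : |⟪w, x⟫| ≤ Real.exp (M * ‖x‖) :=
    calc |⟪w, x⟫| ≤ M * ‖x‖ :=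
          (abs_real_inner_le_norm w x).trans (mul_le_mul_of_nonneg_right hw (norm_nonneg x))
      _ ≤ Real.exp (M * ‖x‖) := by linarith [Real.add_one_le_exp (M * ‖x‖)]
  calc |⟪w, x⟫ * softGrad k (fun s => ⟪v s, x⟫) t|
      = |⟪w, x⟫| * softGrad k (fun s => ⟪v s, x⟫) t := by
        rw [abs_mul, abs_of_nonneg (softGrad_nonneg _ _ _)]
    _ ≤ Real.exp (M * ‖x‖) * ((Fintype.card κ : ℝ) ^ k⁻¹ * Real.exp (M * ‖x‖)) :=
        mul_le_mul hinner ((softGrad_le _ _ _).trans (softExp_inner_le hk hM x))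
          (softGrad_nonneg _ _ _) (Real.exp_pos _).le
    _ = (Fintype.card κ : ℝ) ^ k⁻¹ * Real.exp (2 * M * ‖x‖) := by
        rw [mul_left_comm, ← Real.exp_add, ← two_mul, mul_assoc]

variable [FiniteDimensional ℝ V] [MeasurableSpace V] [BorelSpace V]

lemma integrable_exp_mul_norm (c : ℝ) :
    Integrable (fun x => Real.exp (c * ‖x‖)) (stdGaussian V) := by
  obtain ⟨C, hC, hint⟩ := IsGaussian.exists_integrable_exp_sq (stdGaussian V)
  refine (hint.const_mul (Real.exp (c ^ 2 / (4 * C)))).mono' (by fun_prop)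
    (Eventually.of_forall fun x => ?_)
  rw [Real.norm_of_nonneg (Real.exp_pos _).le, ← Real.exp_add, Real.exp_le_exp]
  exact mul_le_sq_div_add_mul_sq hC c ‖x‖

lemma integrable_softExp_inner (hk : 0 < k) (v : κ → V) :
    Integrable (fun x => softExp k fun t => ⟪v t, x⟫) (stdGaussian V) := by
  obtain ⟨M, hM⟩ := Finite.exists_le fun t => ‖v t‖
  have hcont := (continuous_softExp (κ := κ) k).comp' (f := fun x t => ⟪v t, x⟫) (by fun_prop)
  exact ((integrable_exp_mul_norm M).const_mul _).mono' hcont.aestronglyMeasurable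
    (Eventually.of_forall fun x =>
      (Real.norm_of_nonneg (softExp_pos _ _).le).trans_le (softExp_inner_le hk hM x))

lemma integrable_softGrad_inner (hk : 0 < k) (v : κ → V) (t : κ) :
    Integrable (fun x => softGrad k (fun s => ⟪v s, x⟫) t) (stdGaussian V) := by
  have hcont := (continuous_softGrad k t).comp' (f := fun x s => ⟪v s, x⟫) (by fun_prop)
  refine (integrable_softExp_inner hk v).mono' hcont.aestronglyMeasurable
    (Eventually.of_forall fun x => ?_)
  rw [Real.norm_of_nonneg (softGrad_nonneg _ _ _)]
  exact softGrad_le _ _ _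

lemma integrable_softHess_inner (hk : 0 < k) (v : κ → V) (t : κ) (d : κ → ℝ) :
    Integrable (fun x => softHess k (fun s => ⟪v s, x⟫) t d) (stdGaussian V) := by
  have hcont := (continuous_softHess k t d).comp' (f := fun x s => ⟪v s, x⟫) (by fun_prop)
  exact ((integrable_softExp_inner hk v).const_mul _).mono' hcont.aestronglyMeasurable
    (Eventually.of_forall fun x => abs_softHess_le _ _ _ _)

lemma integrable_inner_mul_softGrad (hk : 0 < k) (v : κ → V) (t : κ) (w : V) :
    Integrable (fun x => ⟪w, x⟫ * softGrad k (fun s => ⟪v s, x⟫) t) (stdGaussian V) := by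
  obtain ⟨M, hM⟩ := Finite.exists_le fun t => ‖v t‖
  have hcont := (continuous_softGrad k t).comp' (f := fun x s => ⟪v s, x⟫) (by fun_prop)
  exact ((integrable_exp_mul_norm (2 * max M ‖w‖)).const_mul _).mono'
    (Continuous.aestronglyMeasurable (by fun_prop)) (Eventually.of_forall fun x =>
      abs_inner_mul_softGrad_le hk (fun s => (hM s).trans (le_max_left _ _)) t
        (le_max_right _ _) x)

lemma integral_inner_mul_softGrad (hk : 0 < k) (v : κ → V) (t : κ) (w : V) :
    ∫ x, ⟪w, x⟫ * softGrad k (fun s => ⟪v s, x⟫) t ∂(stdGaussian V) =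
      ∫ x, softHess k (fun s => ⟪v s, x⟫) t (fun s => ⟪v s, w⟫) ∂(stdGaussian V) := by
  refine integral_inner_mul_stdGaussian (fun x => ?_) (integrable_softGrad_inner hk v t)
    (integrable_softHess_inner hk v t _) (integrable_inner_mul_softGrad hk v t w)
  have hline : ∀ s, HasDerivAt (fun a : ℝ => ⟪v s, x + a • w⟫) ⟪v s, w⟫ 0 := fun s => by
    simpa [inner_add_right, inner_smul_right] using
      ((hasDerivAt_id' (0 : ℝ)).mul_const ⟪v s, w⟫).const_add ⟪v s, x⟫
  simpa [HasLineDerivAt] using hasDerivAt_softGrad hk.ne' t hline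

lemma mul_integral_softExp_le (hk : 1 ≤ k) {v w : κ → V} {τ : ℝ}
    (hle : ∀ s t, ⟪v s, w t⟫ ≤ τ) (heq : ∀ t, ⟪v t, w t⟫ = τ) :
    τ * ∫ x, softExp k (fun s => ⟪v s, x⟫) ∂(stdGaussian V) ≤
      ∫ x, ∑ t, ⟪w t, x⟫ * softGrad k (fun s => ⟪v s, x⟫) t ∂(stdGaussian V) := by
  have hk₀ : 0 < k := one_pos.trans_le hk
  have hterm : ∀ t, τ * ∫ x, softGrad k (fun s => ⟪v s, x⟫) t ∂(stdGaussian V) ≤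
      ∫ x, ⟪w t, x⟫ * softGrad k (fun s => ⟪v s, x⟫) t ∂(stdGaussian V) := fun t => by
    rw [integral_inner_mul_softGrad hk₀, ← integral_const_mul, ← heq t]
    exact integral_mono ((integrable_softGrad_inner hk₀ v t).const_mul _)
      (integrable_softHess_inner hk₀ v t _) fun x =>
        mul_softGrad_le_softHess hk _ fun s => (hle s t).trans_eq (heq t).symm
  simp_rw [← sum_softGrad k (fun s => ⟪v s, _⟫)]
  rw [integral_finsetSum _ fun t _ => integrable_softGrad_inner hk₀ v t,
    integral_finsetSum _ fun t _ => integrable_inner_mul_softGrad hk₀ v t (w t), Finset.mul_sum]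
  exact Finset.sum_le_sum fun t _ => hterm t

lemma hasDerivAt_integral_softExp_rotatePoint (hk : 0 < k) (a b : κ → V) (φ : ℝ) :
    HasDerivAt (fun φ => ∫ x, softExp k (fun s => ⟪rotatePoint a b φ s, x⟫) ∂(stdGaussian V))
      (∫ x, ∑ t, ⟪rotatePoint a b (φ + Real.pi / 2) t, x⟫ *
        softGrad k (fun s => ⟪rotatePoint a b φ s, x⟫) t ∂(stdGaussian V)) φ := by
  obtain ⟨M, hM⟩ := Finite.exists_le fun t => ‖a t‖ + ‖b t‖
  have hbound : ∀ φ t, ‖rotatePoint a b φ t‖ ≤ M := fun φ t =>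
    (norm_rotatePoint_le a b φ t).trans (hM t)
  refine (hasDerivAt_integral_of_dominated_loc_of_deriv_le univ_mem
    (Eventually.of_forall fun φ => (integrable_softExp_inner hk _).aestronglyMeasurable)
    (integrable_softExp_inner hk _)
    (integrable_finsetSum _ fun t _ => integrable_inner_mul_softGrad hk _ t _).aestronglyMeasurable
    (Eventually.of_forall fun x φ _ => ?_)
    (((integrable_exp_mul_norm (2 * M)).const_mul ((Fintype.card κ : ℝ) ^ k⁻¹)).const_mul
      (Fintype.card κ : ℝ))
    (Eventually.of_forall fun x φ _ =>
      hasDerivAt_softExp hk.ne' fun t => hasDerivAt_inner_rotatePoint a b φ t x)).2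
  rw [← nsmul_eq_mul]
  exact (norm_sum_le _ _).trans (Finset.sum_le_card_nsmul _ _ _ fun t _ =>
    abs_inner_mul_softGrad_le hk (hbound φ) t (hbound _ t) x)

lemma exp_mul_integral_softExp_le_of_orthogonal (hk : 1 ≤ k) {a b : κ → V} {δ : ℝ}
    (horth : ∀ s t, ⟪a s, b t⟫ = 0) (hle : ∀ s t, ⟪b s, b t⟫ - ⟪a s, a t⟫ ≤ δ)
    (heq : ∀ t, ⟪b t, b t⟫ - ⟪a t, a t⟫ = δ) :
    Real.exp (δ / 2) * ∫ x, softExp k (fun t => ⟪a t, x⟫) ∂(stdGaussian V) ≤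
      ∫ x, softExp k (fun t => ⟪b t, x⟫) ∂(stdGaussian V) := by
  set f : ℝ → ℝ := fun φ => ∫ x, softExp k (fun t => ⟪rotatePoint a b φ t, x⟫) ∂(stdGaussian V)
  have hf := hasDerivAt_integral_softExp_rotatePoint (one_pos.trans_le hk) a b
  have hweight : ∀ φ, HasDerivAt (fun φ => Real.exp (δ / 2 * Real.cos φ ^ 2))
      (Real.exp (δ / 2 * Real.cos φ ^ 2) * -(Real.cos φ * Real.sin φ * δ)) φ := fun φ => by
    refine (((Real.hasDerivAt_cos φ).fun_pow 2).const_mul (δ / 2)).exp.congr_deriv ?_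
    ring
  have hmono : MonotoneOn (fun φ => Real.exp (δ / 2 * Real.cos φ ^ 2) * f φ)
      (Set.Icc 0 (Real.pi / 2)) := by
    have hderiv := fun φ => (hweight φ).fun_mul (hf φ)
    refine monotoneOn_of_hasDerivWithinAt_nonneg (convex_Icc _ _)
      (fun φ _ => (hderiv φ).continuousAt.continuousWithinAt)
      (fun φ _ => (hderiv φ).hasDerivWithinAt) fun φ hφ => ?_
    rw [interior_Icc] at hφ
    have hcos := (Real.cos_pos_of_mem_Ioo ⟨by linarith [hφ.1, Real.pi_pos], hφ.2⟩).le
    have hsin := (Real.sin_pos_of_pos_of_lt_pi hφ.1 (by linarith [hφ.2, Real.pi_pos])).le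
    have hstein := mul_integral_softExp_le hk (v := rotatePoint a b φ)
      (w := rotatePoint a b (φ + Real.pi / 2)) (τ := Real.cos φ * Real.sin φ * δ)
      (fun s t => by
        rw [inner_rotatePoint_add_pi_div_two horth]
        exact mul_le_mul_of_nonneg_left (hle s t) (mul_nonneg hcos hsin))
      (fun t => by rw [inner_rotatePoint_add_pi_div_two horth, heq])
    rw [mul_assoc, ← mul_add]
    exact mul_nonneg (Real.exp_pos _).le (by linarith)
  have h := hmono (Set.left_mem_Icc.mpr (by positivity)) (Set.right_mem_Icc.mpr (by positivity))
    (by positivity)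
  simpa [f, rotatePoint] using h

end Comparison

section TwoSpaceComparison
variable {V W : Type*} [NormedAddCommGroup V] [InnerProductSpace ℝ V]
  [NormedAddCommGroup W] [InnerProductSpace ℝ W]

variable (V W) in
/-- The inclusion of the first factor of an orthogonal direct sum. -/
def inlIsometry : V →ₗᵢ[ℝ] WithLp 2 (V × W) :=
  ((WithLp.linearEquiv 2 ℝ (V × W)).symm.toLinearMap ∘ₗ LinearMap.inl ℝ V W).isometryOfInner
    fun x y => by simp [WithLp.prod_inner_apply]

variable (V W) in
/-- The inclusion of the second factor of an orthogonal direct sum. -/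
def inrIsometry : W →ₗᵢ[ℝ] WithLp 2 (V × W) :=
  ((WithLp.linearEquiv 2 ℝ (V × W)).symm.toLinearMap ∘ₗ LinearMap.inr ℝ V W).isometryOfInner
    fun x y => by simp [WithLp.prod_inner_apply]

lemma inner_inlIsometry_inrIsometry (v : V) (w : W) :
    ⟪inlIsometry V W v, inrIsometry V W w⟫ = 0 := by
  simp [inlIsometry, inrIsometry, WithLp.prod_inner_apply]

variable [FiniteDimensional ℝ V] [MeasurableSpace V] [BorelSpace V]
  [FiniteDimensional ℝ W] [MeasurableSpace W] [BorelSpace W]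

lemma map_adjoint_stdGaussian (U : V →ₗᵢ[ℝ] W) :
    (stdGaussian W).map U.toContinuousLinearMap.adjoint = stdGaussian V := by
  refine Measure.ext_of_charFun (funext fun v => ?_)
  rw [charFun_apply, integral_map (by fun_prop) (Measurable.aestronglyMeasurable (by fun_prop))]
  simp_rw [ContinuousLinearMap.adjoint_inner_left]
  rw [← charFun_apply, charFun_stdGaussian, charFun_stdGaussian]
  simp

lemma integral_inner_isometry (U : V →ₗᵢ[ℝ] W) {κ : Type*} (v : κ → V) {F : (κ → ℝ) → ℝ}
    (hF : Measurable F) :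
    ∫ y, F (fun t => ⟪U (v t), y⟫) ∂(stdGaussian W) =
      ∫ x, F (fun t => ⟪v t, x⟫) ∂(stdGaussian V) := by
  have hmeas : Measurable fun x => F fun t => ⟪v t, x⟫ :=
    hF.comp (measurable_pi_lambda _ fun t => by fun_prop)
  rw [← map_adjoint_stdGaussian U, integral_map (by fun_prop) hmeas.aestronglyMeasurable]
  simp_rw [ContinuousLinearMap.adjoint_inner_right]
  rfl

lemma exp_mul_integral_softExp_le {κ : Type*} [Fintype κ] [Nonempty κ] {k : ℝ} (hk : 1 ≤ k)
    {a : κ → V} {b : κ → W} {δ : ℝ} (hle : ∀ s t, ⟪b s, b t⟫ - ⟪a s, a t⟫ ≤ δ)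
    (heq : ∀ t, ⟪b t, b t⟫ - ⟪a t, a t⟫ = δ) :
    Real.exp (δ / 2) * ∫ x, softExp k (fun t => ⟪a t, x⟫) ∂(stdGaussian V) ≤
      ∫ y, softExp k (fun t => ⟪b t, y⟫) ∂(stdGaussian W) := by
  have hmeas := (continuous_softExp (κ := κ) k).measurable
  rw [← integral_inner_isometry (inlIsometry V W) a hmeas,
    ← integral_inner_isometry (inrIsometry V W) b hmeas]
  exact exp_mul_integral_softExp_le_of_orthogonal hk
    (fun s t => inner_inlIsometry_inrIsometry (a s) (b t))
    (by simpa only [LinearIsometry.inner_map_map] using hle)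
    (by simpa only [LinearIsometry.inner_map_map] using heq)

end TwoSpaceComparison

/-! ### Upper bound -/

lemma mul_inner_le_inner_pow {V : Type*} [NormedAddCommGroup V] [InnerProductSpace ℝ V] (p : ℕ)
    {e f : V} (he : ‖e‖ = 1) (hf : ‖f‖ = 1) : p * ⟪e, f⟫ ≤ ⟪e, f⟫ ^ p + (p - 1) := by
  have hinner : -1 ≤ ⟪e, f⟫ := neg_one_le_real_inner_of_norm_eq_one he hf
  have hbernoulli := one_add_mul_le_pow (a := ⟪e, f⟫ - 1) (by linarith) p
  rw [add_sub_cancel] at hbernoulli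
  linarith

lemma exp_integral_le_integral {Ω : Type*} [MeasurableSpace Ω] {μ : Measure Ω}
    [IsProbabilityMeasure μ] {φ F : Ω → ℝ} (hφ : Integrable φ μ) (hF : Integrable F μ)
    (h : ∀ x, Real.exp (φ x) ≤ F x) : Real.exp (∫ x, φ x ∂μ) ≤ ∫ x, F x ∂μ := by
  have hexp : Integrable (fun x => Real.exp (φ x)) μ :=
    hF.mono' (Real.continuous_exp.comp_aestronglyMeasurable hφ.aestronglyMeasurable)
      (Eventually.of_forall fun x => (Real.norm_of_nonneg (Real.exp_pos _).le).trans_le (h x))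
  exact (convexOn_exp.map_integral_le Real.continuous_exp.continuousOn isClosed_univ
    (Eventually.of_forall fun x => Set.mem_univ _) hφ hexp).trans (integral_mono hexp hF h)

lemma integral_exp_mul_norm_le {V : Type*} [NormedAddCommGroup V] [InnerProductSpace ℝ V]
    [FiniteDimensional ℝ V] [MeasurableSpace V] [BorelSpace V] {l : ℝ} (hl : 0 < l)
    (hl' : 2 * l < 1) (a : ℝ) :
    ∫ x, Real.exp (a * ‖x‖) ∂(stdGaussian V) ≤
      Real.exp (a ^ 2 / (4 * l)) * (√(1 - 2 * l))⁻¹ ^ Module.finrank ℝ V := by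
  have hsum : ∀ x : V, Real.exp (l * ‖x‖ ^ 2) =
      Real.exp (-∑ k, -(2 * l) / 2 * ⟪stdOrthonormalBasis ℝ V k, x⟫ ^ 2) := fun x => by
    rw [← Finset.mul_sum, OrthonormalBasis.sum_sq_inner_right]
    ring_nf
  have hD : ∀ _ : Fin (Module.finrank ℝ V), -1 < -(2 * l) := fun _ => by linarith
  have hint : Integrable (fun x => Real.exp (l * ‖x‖ ^ 2)) (stdGaussian V) := by
    simp_rw [hsum]
    exact integrable_exp_neg_sum_sq_basis _ hD
  calc ∫ x, Real.exp (a * ‖x‖) ∂(stdGaussian V)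
      ≤ ∫ x, Real.exp (a ^ 2 / (4 * l)) * Real.exp (l * ‖x‖ ^ 2) ∂(stdGaussian V) :=
        integral_mono (integrable_exp_mul_norm a) (hint.const_mul _) fun x => by
          rw [← Real.exp_add, Real.exp_le_exp]
          exact mul_le_sq_div_add_mul_sq hl a ‖x‖
    _ = Real.exp (a ^ 2 / (4 * l)) * (√(1 - 2 * l))⁻¹ ^ Module.finrank ℝ V := by
        simp_rw [integral_const_mul, hsum]
        rw [integral_exp_neg_sum_sq_basis _ hD, Finset.prod_const, Finset.card_univ,
          Fintype.card_fin, ← sub_eq_add_neg]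

section UpperBound

variable {ι : Type*} [Fintype ι] {p : ℕ}

lemma exp_mul_integral_softExp_tensorPow_le {κ : Type*} [Fintype κ] [Nonempty κ] {k : ℝ}
    (hk : 1 ≤ k) (c : ℝ) {e : κ → EuclideanSpace ℝ ι} (he : ∀ t, ‖e t‖ = 1) :
    Real.exp (c ^ 2 * (p - 1) / 2) * ∫ g, softExp k (fun t => ⟪c • tensorPow p (e t), g⟫)
        ∂(stdGaussian (EuclideanSpace ℝ (Fin p → ι))) ≤
      ∫ y, softExp k (fun t => ⟪(c * √p) • e t, y⟫) ∂(stdGaussian (EuclideanSpace ℝ ι)) := by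
  have hcov : ∀ s t, ⟪(c * √p) • e s, (c * √p) • e t⟫ -
      ⟪c • tensorPow p (e s), c • tensorPow p (e t)⟫ =
        c ^ 2 * (p * ⟪e s, e t⟫ - ⟪e s, e t⟫ ^ p) := fun s t => by
    simp only [real_inner_smul_left, inner_smul_right, inner_tensorPow]
    linear_combination c ^ 2 * ⟪e s, e t⟫ * Real.mul_self_sqrt p.cast_nonneg
  refine exp_mul_integral_softExp_le hk (fun s t => ?_) fun t => ?_
  · rw [hcov]
    exact mul_le_mul_of_nonneg_left
      (sub_le_iff_le_add'.mpr (mul_inner_le_inner_pow p (he s) (he t))) (sq_nonneg c)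
  · rw [hcov, real_inner_self_eq_norm_sq, he]
    simp

lemma exists_finset_norm_tensorPow_sub_le (ι : Type*) [Fintype ι] (p : ℕ) {ε : ℝ} (hε : 0 < ε) :
    ∃ T : Finset (EuclideanSpace ℝ ι), (∀ e ∈ T, ‖e‖ = 1) ∧
      ∀ f : EuclideanSpace ℝ ι, ‖f‖ = 1 → ∃ e ∈ T, ‖tensorPow p f - tensorPow p e‖ ≤ ε := by
  obtain ⟨T, hT, hcover⟩ :=
    (isCompact_sphere (0 : EuclideanSpace ℝ ι) 1).elim_nhds_subcover
      (fun e => {f | ‖tensorPow p f - tensorPow p e‖ < ε}) fun e _ =>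
        (isOpen_lt ((continuous_tensorPow.sub continuous_const).norm)
          continuous_const).mem_nhds (by simpa using hε)
  refine ⟨T, fun e he => by simpa using hT e he, fun f hf => ?_⟩
  obtain ⟨e, he, hfe⟩ := Set.mem_iUnion₂.mp (hcover (mem_sphere_zero_iff_norm.mpr hf))
  exact ⟨e, he, hfe.le⟩

variable [Nonempty ι]

lemma exp_mul_supTensor_sub_le_softExp {c ε k : ℝ} (hc : 0 < c) (hk : 0 < k)
    {T : Finset (EuclideanSpace ℝ ι)}
    (hT : ∀ f : EuclideanSpace ℝ ι, ‖f‖ = 1 → ∃ e ∈ T, ‖tensorPow p f - tensorPow p e‖ ≤ ε)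
    (g : EuclideanSpace ℝ (Fin p → ι)) :
    Real.exp (c * (supTensor p g - ε * ‖g‖)) ≤
      softExp k (fun e : T => ⟪c • tensorPow p e.1, g⟫) := by
  obtain ⟨e₀, he₀, -⟩ := hT _ (exists_norm_eq_one ι).choose_spec
  have : Nonempty T := ⟨⟨e₀, he₀⟩⟩
  set S := softExp k (fun e : T => ⟪c • tensorPow p e.1, g⟫)
  have hS : 0 < S := softExp_pos _ _
  have hsup : supTensor p g ≤ Real.log S / c + ε * ‖g‖ := supTensor_le fun f hf => by
    obtain ⟨e, he, hfe⟩ := hT f hf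
    have hexp : Real.exp ⟪c • tensorPow p e, g⟫ ≤ S :=
      exp_le_softExp hk (fun e : T => ⟪c • tensorPow p e.1, g⟫) ⟨e, he⟩
    rw [real_inner_smul_left, ← Real.le_log_iff_exp_le hS] at hexp
    calc ⟪tensorPow p f, g⟫ = ⟪tensorPow p e, g⟫ + ⟪tensorPow p f - tensorPow p e, g⟫ := by
          rw [inner_sub_left, add_sub_cancel]
      _ ≤ Real.log S / c + ε * ‖g‖ := add_le_add ((le_div_iff₀' hc).mpr hexp)
          ((real_inner_le_norm _ _).trans (mul_le_mul_of_nonneg_right hfe (norm_nonneg g)))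
  rw [← Real.le_log_iff_exp_le hS, ← le_div_iff₀' hc]
  linarith

lemma exp_mul_integral_supTensor_sub_le {c ε k : ℝ} (hc : 0 < c) (hk : 1 ≤ k)
    {T : Finset (EuclideanSpace ℝ ι)} (hT1 : ∀ e ∈ T, ‖e‖ = 1)
    (hT : ∀ f : EuclideanSpace ℝ ι, ‖f‖ = 1 → ∃ e ∈ T, ‖tensorPow p f - tensorPow p e‖ ≤ ε) :
    Real.exp (c ^ 2 * (p - 1) / 2) * Real.exp (c * ((∫ g, supTensor p g
        ∂(stdGaussian (EuclideanSpace ℝ (Fin p → ι)))) -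
          ε * ∫ g, ‖g‖ ∂(stdGaussian (EuclideanSpace ℝ (Fin p → ι))))) ≤
      (T.card : ℝ) ^ k⁻¹ *
        ∫ y, Real.exp (c * √p * ‖y‖) ∂(stdGaussian (EuclideanSpace ℝ ι)) := by
  have hk0 : 0 < k := zero_lt_one.trans_le hk
  obtain ⟨e₀, he₀, -⟩ := hT _ (exists_norm_eq_one ι).choose_spec
  have : Nonempty T := ⟨⟨e₀, he₀⟩⟩
  have hnorm : Integrable (fun g => ε * ‖g‖)
      (stdGaussian (EuclideanSpace ℝ (Fin p → ι))) :=
    IsGaussian.integrable_id.norm.const_mul ε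
  have hjensen := exp_integral_le_integral ((integrable_supTensor.sub hnorm).const_mul c)
    (integrable_softExp_inner hk0 fun e : T => c • tensorPow p e.1)
    (exp_mul_supTensor_sub_le_softExp hc hk0 hT)
  simp only [Pi.sub_apply] at hjensen
  rw [integral_const_mul, integral_sub integrable_supTensor hnorm, integral_const_mul] at hjensen
  have hbound : ∀ y : EuclideanSpace ℝ ι, softExp k (fun e : T => ⟪(c * √p) • e.1, y⟫) ≤
      (T.card : ℝ) ^ k⁻¹ * Real.exp (c * √p * ‖y‖) := fun y => by
    have hM : ∀ e : T, ‖(c * √p) • e.1‖ ≤ c * √p := fun e => by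
      rw [norm_smul, hT1 e.1 e.2, mul_one, Real.norm_of_nonneg (by positivity)]
    simpa only [Fintype.card_coe] using softExp_inner_le hk0 hM y
  calc _ ≤ _ := mul_le_mul_of_nonneg_left hjensen (Real.exp_pos _).le
    _ ≤ _ := exp_mul_integral_softExp_tensorPow_le hk c fun e : T => hT1 e.1 e.2
    _ ≤ ∫ y, (T.card : ℝ) ^ k⁻¹ * Real.exp (c * √p * ‖y‖)
          ∂(stdGaussian (EuclideanSpace ℝ ι)) :=
        integral_mono (integrable_softExp_inner hk0 _)
          ((integrable_exp_mul_norm _).const_mul _) hbound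
    _ = _ := integral_const_mul _ _

lemma exp_mul_integral_supTensor_le {c : ℝ} (hc : 0 < c) :
    Real.exp (c ^ 2 * (p - 1) / 2 +
        c * ∫ g, supTensor p g ∂(stdGaussian (EuclideanSpace ℝ (Fin p → ι)))) ≤
      ∫ y, Real.exp (c * √p * ‖y‖) ∂(stdGaussian (EuclideanSpace ℝ ι)) := by
  set m := ∫ g, supTensor p g ∂(stdGaussian (EuclideanSpace ℝ (Fin p → ι)))
  set B := ∫ g, ‖g‖ ∂(stdGaussian (EuclideanSpace ℝ (Fin p → ι)))
  set I := ∫ y, Real.exp (c * √p * ‖y‖) ∂(stdGaussian (EuclideanSpace ℝ ι))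
  have hnet : ∀ ε : ℝ, 0 < ε →
      Real.exp (c ^ 2 * (p - 1) / 2) * Real.exp (c * (m - ε * B)) ≤ I := fun ε hε => by
    obtain ⟨T, hT1, hT⟩ := exists_finset_norm_tensorPow_sub_le ι p hε
    obtain ⟨e₀, he₀, -⟩ := hT _ (exists_norm_eq_one ι).choose_spec
    have hcard : (T.card : ℝ) ≠ 0 := Nat.cast_ne_zero.mpr (Finset.card_ne_zero_of_mem he₀)
    have hlim : Tendsto (fun k : ℝ => (T.card : ℝ) ^ k⁻¹ * I) atTop (nhds I) := by
      simpa using ((Real.continuousAt_const_rpow hcard).tendsto.comp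
        tendsto_inv_atTop_zero).mul_const I
    exact ge_of_tendsto hlim ((eventually_ge_atTop 1).mono fun k hk =>
      exp_mul_integral_supTensor_sub_le hc hk hT1 hT)
  have hlim : Tendsto (fun ε : ℝ => Real.exp (c ^ 2 * (p - 1) / 2) * Real.exp (c * (m - ε * B)))
      (nhdsWithin 0 (Set.Ioi 0))
      (nhds (Real.exp (c ^ 2 * (p - 1) / 2) * Real.exp (c * (m - 0 * B)))) :=
    (Continuous.tendsto (by fun_prop) 0).mono_left nhdsWithin_le_nhds
  rw [zero_mul, sub_zero, ← Real.exp_add] at hlim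
  exact le_of_tendsto hlim (eventually_nhdsWithin_of_forall hnet)

lemma IsOneRSB.pos {P E z θ : ℝ} (h : IsOneRSB P E z θ) : 0 < P := by
  have hz := h.z_pos
  have hθ := h.theta_pos
  have hmul : 0 < P * (z * (z + θ)) := by linarith [h.mul_add_eq_one]
  exact pos_of_mul_pos_left hmul (by positivity)

lemma IsOneRSB.inv_sqrt_eq_exp {P E z θ : ℝ} (h : IsOneRSB P E z θ) :
    (√(P * z ^ 2))⁻¹ = Real.exp (θ * E / 2) := by
  have hz := h.z_pos
  have hP := h.pos
  rw [← h.log_eq, one_div, Real.log_inv, Real.exp_half, Real.exp_neg,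
    Real.exp_log (by positivity), Real.sqrt_inv]

/-- The exponential moment bound is used at `c = θ √N`, and `l` is chosen so that
`1 - 2 l = p z ^ 2`: these are the critical points of the resulting bound. -/
lemma integral_supTensor_le {E₀ z θ : ℝ} (hrsb : IsOneRSB p E₀ z θ) :
    ∫ g, supTensor p g ∂(stdGaussian (EuclideanSpace ℝ (Fin p → ι))) ≤
      E₀ * √(Fintype.card ι) := by
  have hz := hrsb.z_pos
  have hθ := hrsb.theta_pos
  have hp := hrsb.pos
  set m := ∫ g, supTensor p g ∂(stdGaussian (EuclideanSpace ℝ (Fin p → ι)))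
  set N : ℝ := (Fintype.card ι : ℝ)
  have hN : 0 < N := Nat.cast_pos.mpr Fintype.card_pos
  set c := θ * √N
  have hc : 0 < c := by positivity
  set l := θ / (2 * (z + θ)) with hl_def
  have hl : 1 - 2 * l = p * z ^ 2 := by
    rw [hl_def]
    field_simp
    linear_combination -z * hrsb.mul_add_eq_one
  have hl' : 2 * l < 1 := by linarith [mul_pos hp (pow_pos hz 2)]
  have hgauss := integral_exp_mul_norm_le (V := EuclideanSpace ℝ ι) (by positivity) hl' (c * √p)
  rw [hl, hrsb.inv_sqrt_eq_exp, finrank_euclideanSpace, ← Real.exp_nat_mul, ← Real.exp_add]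
    at hgauss
  have hexponent := Real.exp_le_exp.mp ((exp_mul_integral_supTensor_le hc).trans hgauss)
  have hc_sq : c ^ 2 = θ ^ 2 * N := by rw [mul_pow, Real.sq_sqrt hN.le]
  have hquad : (c * √p) ^ 2 / (4 * l) = θ * N * p * (z + θ) / 2 := by
    rw [mul_pow, hc_sq, Real.sq_sqrt hp.le, hl_def]
    field_simp
    ring
  refine le_of_mul_le_mul_left ?_ hc
  calc c * m ≤ N * (θ * E₀) := by
        rw [hquad, hc_sq] at hexponent
        linear_combination hexponent - θ * N / 2 * hrsb.energy_eq
    _ = c * (E₀ * √N) := by linear_combination -(θ * E₀) * Real.mul_self_sqrt hN.le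

end UpperBound

/-! ### The spherical Hamiltonian -/

lemma map_pi_comp_of_injective {ι κ α : Type*} [Fintype ι] [Fintype κ] [MeasurableSpace α]
    (μ : Measure α) [IsProbabilityMeasure μ] {f : κ → ι} (hf : f.Injective) :
    (Measure.pi fun _ : ι => μ).map (fun x j => x (f j)) = Measure.pi fun _ : κ => μ := by
  have hindep : iIndepFun (fun (i : ι) (x : ι → α) => x i) (Measure.pi fun _ => μ) :=
    iIndepFun_pi (X := fun _ => id) fun _ => aemeasurable_id
  rw [(iIndepFun_iff_map_fun_eq_pi_map
    fun j => (measurable_pi_apply (f j)).aemeasurable).mp (hindep.precomp hf)]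
  simp_rw [(measurePreserving_eval (fun _ : ι => μ) _).map_eq]

section Hamiltonian

variable {p N : ℕ}

/-- The position, among all the couplings, of the entry `j` of the tensor of top degree. -/
def topIndex (hp : 2 ≤ p) (j : Fin p → Fin N) : GIdx N p :=
  ⟨⟨p, Finset.mem_Icc.mpr ⟨hp, le_rfl⟩⟩, j⟩

lemma topIndex_injective (hp : 2 ≤ p) : (topIndex (N := N) hp).Injective :=
  fun _ _ h => eq_of_heq (Sigma.mk.inj h).2

lemma StdGaussianCouplings.map_top_eq_stdGaussian {Ω : Type*} [MeasureSpace Ω] (hp : 2 ≤ p)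
    {G : Ω → (k : ℕ) → (Fin k → Fin N) → ℝ} (hG : StdGaussianCouplings N p G) :
    Measure.map (fun ω => WithLp.toLp 2 (G ω p)) ℙ =
      stdGaussian (EuclideanSpace ℝ (Fin p → Fin N)) := by
  have hflat : AEMeasurable (fun ω => flatten N p (G ω)) (ℙ : Measure Ω) :=
    AEMeasurable.of_map_ne_zero (by rw [hG]; exact IsProbabilityMeasure.ne_zero _)
  have hrestrict : Measurable fun (x : GIdx N p → ℝ) j => x (topIndex hp j) := by fun_prop
  rw [← map_pi_eq_stdGaussian, ← map_pi_comp_of_injective _ (topIndex_injective hp), ← hG,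
    AEMeasurable.map_map_of_aemeasurable hrestrict.aemeasurable hflat,
    AEMeasurable.map_map_of_aemeasurable (WithLp.measurable_toLp 2 _).aemeasurable
      (hrestrict.comp_aemeasurable hflat)]
  rfl

lemma StdGaussianCouplings.integral_comp_top {Ω : Type*} [MeasureSpace Ω] (hp : 2 ≤ p)
    {G : Ω → (k : ℕ) → (Fin k → Fin N) → ℝ} (hG : StdGaussianCouplings N p G)
    {φ : EuclideanSpace ℝ (Fin p → Fin N) → ℝ} (hφ : Continuous φ) :
    ∫ ω, φ (WithLp.toLp 2 (G ω p)) ∂ℙ = ∫ g, φ g ∂(stdGaussian _) := by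
  have hmap := hG.map_top_eq_stdGaussian hp
  have hmeas : AEMeasurable (fun ω => WithLp.toLp 2 (G ω p)) (ℙ : Measure Ω) :=
    AEMeasurable.of_map_ne_zero (by rw [hmap]; exact IsProbabilityMeasure.ne_zero _)
  rw [← hmap, integral_map hmeas hφ.aestronglyMeasurable]

lemma hamiltonian_pureC (hp : 2 ≤ p) (g : (k : ℕ) → (Fin k → Fin N) → ℝ) (σ : Fin N → ℝ) :
    hamiltonian N p (pureC p) g σ =
      (N : ℝ) ^ (-(((p : ℝ) - 1) / 2)) * ∑ j : Fin p → Fin N, g p j * ∏ i, σ (j i) := by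
  simp only [hamiltonian, pureC, ite_mul, one_mul, zero_mul]
  rw [Finset.sum_ite_eq' _ p, if_pos (Finset.mem_Icc.mpr ⟨hp, le_rfl⟩)]

variable [NeZero N]

lemma hamiltonian_sqrt_smul (hp : 2 ≤ p) (g : (k : ℕ) → (Fin k → Fin N) → ℝ)
    (e : EuclideanSpace ℝ (Fin N)) :
    hamiltonian N p (pureC p) g (√N • e.ofLp) =
      √N * ⟪tensorPow p e, WithLp.toLp 2 (g p)⟫ := by
  have hN : (0 : ℝ) < N := Nat.cast_pos.mpr (NeZero.pos N)
  have hscale : (N : ℝ) ^ (-(((p : ℝ) - 1) / 2)) * √N ^ p = √N := by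
    rw [Real.sqrt_eq_rpow, ← Real.rpow_mul_natCast hN.le, ← Real.rpow_add hN]
    ring_nf
  have hsum : ∑ j : Fin p → Fin N, g p j * ∏ i, (√N • e.ofLp) (j i) =
      √N ^ p * ⟪tensorPow p e, WithLp.toLp 2 (g p)⟫ := by
    simp only [PiLp.inner_apply, tensorPow, elemTensor_apply, RCLike.inner_apply, conj_trivial,
      Pi.smul_apply, smul_eq_mul, Finset.prod_mul_distrib, Finset.prod_const, Finset.card_univ,
      Fintype.card_fin, Finset.mul_sum]
    exact Finset.sum_congr rfl fun j _ => by ring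
  rw [hamiltonian_pureC hp, hsum, ← mul_assoc, hscale]

lemma mem_sphereSet_iff_norm_eq_one (e : EuclideanSpace ℝ (Fin N)) :
    √N • e.ofLp ∈ sphereSet N ↔ ‖e‖ = 1 := by
  have hN : (N : ℝ) ≠ 0 := NeZero.ne _
  rw [sphereSet, Set.mem_ofPred_eq, ← pow_eq_one_iff_of_nonneg (norm_nonneg e) two_ne_zero,
    EuclideanSpace.real_norm_sq_eq]
  simp only [Pi.smul_apply, smul_eq_mul, mul_pow, Real.sq_sqrt N.cast_nonneg]
  rw [← Finset.mul_sum, mul_eq_left₀ hN]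

lemma exists_sqrt_smul_eq (σ : sphereSet N) :
    ∃ e : EuclideanSpace ℝ (Fin N), ‖e‖ = 1 ∧ √N • e.ofLp = σ := by
  have hN : √(N : ℝ) ≠ 0 := (Real.sqrt_pos.mpr (Nat.cast_pos.mpr (NeZero.pos N))).ne'
  have hσ : √(N : ℝ) • (WithLp.toLp 2 ((√(N : ℝ))⁻¹ • σ.1) : EuclideanSpace ℝ _).ofLp = σ.1 :=
    smul_inv_smul₀ hN σ.1
  exact ⟨_, (mem_sphereSet_iff_norm_eq_one _).mp (by rw [hσ]; exact σ.2), hσ⟩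

lemma maxH_eq_sqrt_mul_supTensor (hp : 2 ≤ p) (g : (k : ℕ) → (Fin k → Fin N) → ℝ) :
    maxH N p (pureC p) g = √N * supTensor p (WithLp.toLp 2 (g p)) := by
  have hN : 0 < √(N : ℝ) := Real.sqrt_pos.mpr (Nat.cast_pos.mpr (NeZero.pos N))
  have hle : ∀ σ : sphereSet N, hamiltonian N p (pureC p) g σ ≤
      √N * supTensor p (WithLp.toLp 2 (g p)) := fun σ => by
    obtain ⟨e, he, heσ⟩ := exists_sqrt_smul_eq σ
    rw [← heσ, hamiltonian_sqrt_smul hp]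
    exact mul_le_mul_of_nonneg_left (inner_tensorPow_le_supTensor he _) hN.le
  have hge : ∀ e : EuclideanSpace ℝ (Fin N), ‖e‖ = 1 →
      √N * ⟪tensorPow p e, WithLp.toLp 2 (g p)⟫ ≤ maxH N p (pureC p) g := fun e he => by
    rw [← hamiltonian_sqrt_smul hp]
    exact le_ciSup (f := fun σ : sphereSet N => hamiltonian N p (pureC p) g σ)
      ⟨_, Set.forall_mem_range.mpr hle⟩ ⟨_, (mem_sphereSet_iff_norm_eq_one e).mpr he⟩
  have : Nonempty (sphereSet N) :=
    let ⟨e, he⟩ := exists_norm_eq_one (Fin N)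
    ⟨⟨_, (mem_sphereSet_iff_norm_eq_one e).mpr he⟩⟩
  refine le_antisymm (ciSup_le hle) ?_
  rw [← le_div_iff₀' hN]
  exact supTensor_le fun e he => (le_div_iff₀' hN).mpr (hge e he)

lemma StdGaussianCouplings.integral_maxH_div {Ω : Type*} [MeasureSpace Ω] (hp : 2 ≤ p)
    {G : Ω → (k : ℕ) → (Fin k → Fin N) → ℝ} (hG : StdGaussianCouplings N p G) :
    (∫ ω, maxH N p (pureC p) (G ω) ∂ℙ) / N =
      (∫ g, supTensor p g ∂(stdGaussian (EuclideanSpace ℝ (Fin p → Fin N)))) / √N := by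
  simp_rw [maxH_eq_sqrt_mul_supTensor hp]
  rw [integral_const_mul, hG.integral_comp_top hp continuous_supTensor, mul_div_right_comm,
    Real.sqrt_div_self', one_div_mul_eq_div]

end Hamiltonian

/-- the ground-state energy of the pure p-spin spherical model equals `E₀`,
the zero of the annealed complexity. -/
theorem statement_7 {Ω : Type*} [MeasureSpace Ω] [IsProbabilityMeasure (ℙ : Measure Ω)]
    (p : ℕ) (hp : 3 ≤ p)
    (G : (N : ℕ) → Ω → (k : ℕ) → (Fin k → Fin N) → ℝ)
    (hG : ∀ N, 1 ≤ N → StdGaussianCouplings N p (G N))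
    (E0 : ℝ) (hE0thr : THRp p < E0) (hE0zero : SigmaPure p E0 = 0) :
    Tendsto (fun N : ℕ => (∫ ω, maxH N p (pureC p) (G N ω) ∂ℙ) / N) atTop (nhds E0) := by
  have hp2 : 2 ≤ p := by omega
  obtain ⟨z, θ, hrsb⟩ := exists_isOneRSB hp2 hE0thr hE0zero
  rw [← tendsto_add_atTop_iff_nat 2]
  simp_rw [fun n : ℕ => (hG (n + 2) (by omega)).integral_maxH_div hp2]
  refine tendsto_order.mpr ⟨fun a ha => ?_, fun a ha => Eventually.of_forall fun n => ?_⟩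
  · filter_upwards [eventually_le_integral_supTensor hp hrsb (ε := (E0 - a) / 2)
      (by linarith)] with n hn
    push_cast
    linarith
  · refine lt_of_le_of_lt ((div_le_iff₀ (by positivity)).mpr ?_) ha
    simpa using integral_supTensor_le (ι := Fin (n + 2)) hrsb
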